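/- Let 0 < θ < θ' ≤ π/2 be fixed angles. Then M(n,θ) ≤ (1+o(1))·e^{−1}·M_Lev(n−1,θ')/μ_n(θ,θ') as n → ∞; equivalently, limsup_{n→∞} M(n,θ)·μ_n(θ,θ')/M_Lev(n−1,θ') ≤ 1/e. -/

import Mathlib

open MeasureTheory Filter Real
open scoped RealInnerProductSpace

noncomputable section

/-- Generalized binomial coefficient `C(a, k)` for real `a`. -/
def genBinom (a : ℝ) (k : ℕ) : ℝ := (∏ i ∈ Finset.range k, (a - i)) / (Nat.factorial k : ℝ)

/-- The Jacobi polynomial `p_d^{α,β}`, via the standard explicit formula; it is the degree-`d`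
polynomial orthogonal to lower degrees for the weight `(1-t)^α (1+t)^β` on `[-1,1]`,
normalized by `p_d^{α,β}(1) = Γ(d+α+1)/(Γ(α+1)Γ(d+1))`. -/
def jacobiP (α β : ℝ) (d : ℕ) (x : ℝ) : ℝ :=
  ∑ s ∈ Finset.range (d + 1),
    genBinom ((d : ℝ) + α) (d - s) * genBinom ((d : ℝ) + β) s *
      ((x - 1) / 2) ^ s * ((x + 1) / 2) ^ (d - s)

/-- The largest root `t_{1,d}^{α,β}` of the Jacobi polynomial `p_d^{α,β}`. -/
def maxRoot (α β : ℝ) (d : ℕ) : ℝ := sSup {x : ℝ | jacobiP α β d x = 0}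

/-- The degree `d = d(n, θ')` determined by `t_{1,d-1}^{α+1,α+1} < cos θ' ≤ t_{1,d}^{α+1,α+1}`,
where `α = (n-3)/2`. -/
def levD (n : ℕ) (θ' : ℝ) : ℕ :=
  sInf {d : ℕ | 1 ≤ d ∧
    Real.cos θ' ≤ maxRoot (((n : ℝ) - 3) / 2 + 1) (((n : ℝ) - 3) / 2 + 1) d}

/-- Levenshtein's bound `M_Lev(n, θ')` on the size of `θ'`-spherical codes in `S^{n-1}`. -/
def MLev (n : ℕ) (θ' : ℝ) : ℝ :=
  if maxRoot (((n : ℝ) - 3) / 2 + 1) (((n : ℝ) - 3) / 2) (levD n θ') < Real.cos θ' then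
    2 * (Nat.choose (levD n θ' + n - 1) (n - 1) : ℝ)
  else
    (Nat.choose (levD n θ' + n - 1) (n - 1) : ℝ) + (Nat.choose (levD n θ' + n - 2) (n - 1) : ℝ)

/-- The maximal size `M(n, θ)` of a `θ`-spherical code in `S^{n-1}`. -/
def Mcode (n : ℕ) (θ : ℝ) : ℕ :=
  sSup {N : ℕ | ∃ A : Finset (EuclideanSpace ℝ (Fin n)), A.card = N ∧
    (∀ x ∈ A, ‖x‖ = 1) ∧ ∀ x ∈ A, ∀ y ∈ A, x ≠ y → ⟪x, y⟫ ≤ Real.cos θ}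

/-- The mass `μ_n(θ, θ')` of the spherical cap of radius `sin(θ/2)/sin(θ'/2)` in `S^{n-1}`. -/
def capMass (n : ℕ) (θ θ' : ℝ) : ℝ :=
  (∫ t in Real.sqrt ((Real.cos θ - Real.cos θ') / (1 - Real.cos θ'))..1,
      (1 - t ^ 2) ^ (((n : ℝ) - 3) / 2)) /
    (∫ t in (-1 : ℝ)..1, (1 - t ^ 2) ^ (((n : ℝ) - 3) / 2))

/-!
Fix a unit vector `z`. The points of a `θ`-spherical code in `S^{n-1}` whose height over the
hyperplane `zᗮ` is about `r = √((cos θ - cos θ') / (1 - cos θ'))` project, after normalization, to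
nearly a `θ'`-spherical code in `S^{n-2}`. Levenshtein's polynomial yields a linear programming
inequality for the projections, weighted by any function of the heights, and averaging over `z`
bounds the size of the code. The indicator of the cap of heights at least `r` as weight gives the
classical factor `1` in place of `1 / e`.

The gain comes from also admitting heights slightly below `r`. Then some inner products of
projections exceed `cos θ'`, where the polynomial may be positive. But by a Sturm comparison for
the Jacobi equation its product with the density of the projections is almost linear on the scale
`1 / n` around its sign change, the largest root of a Jacobi polynomial, so that only a first moment
of the weight decides whether the average is nonpositive. In the coordinate
`τ = A + n r (u - r) / (1 - r²)` for the height `u`, the heights are asymptotically distributed as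
`exp (A - τ) dτ`. The weight `τ` on `[0, ∞)` satisfies the moment condition for `A < 2`, and its
second moment divided by the square of its mass is `2 exp (-A)`. This gives the factor `2 / e²`,
which is smaller than `1 / e`.
-/

namespace SphericalCode

section ThreeTermRecurrence
open Polynomial

lemma exists_last_zero {f : ℝ → ℝ} (hf : Continuous f) {a b : ℝ} (hab : a ≤ b) (ha : f a < 0)
    (hb : ∀ x, b ≤ x → 0 < f x) :
    ∃ s, a < s ∧ s < b ∧ f s = 0 ∧ ∀ x, s < x → 0 < f x := by
  have hcompact : IsCompact (Set.Icc a b ∩ {x | f x ≤ 0}) :=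
    isCompact_Icc.inter_right (isClosed_le hf continuous_const)
  obtain ⟨s, ⟨⟨has, hsb⟩, hs⟩, hmax⟩ := hcompact.exists_isGreatest ⟨a, ⟨le_rfl, hab⟩, ha.le⟩
  have hs0 : f s = 0 := by
    obtain ⟨y, ⟨hsy, hyb⟩, hy⟩ :=
      intermediate_value_Icc hsb hf.continuousOn ⟨hs, (hb b le_rfl).le⟩
    rwa [le_antisymm hsy (hmax ⟨⟨has.trans hsy, hyb⟩, hy.le⟩)]
  refine ⟨s, has.lt_of_ne ?_, hsb.lt_of_ne ?_, hs0, fun x hx => ?_⟩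
  · rintro rfl; exact ha.ne hs0
  · rintro rfl; exact (hb s le_rfl).ne' hs0
  · by_contra! hneg
    rcases le_total x b with hxb | hbx
    · exact hx.not_ge (hmax ⟨⟨has.trans hx.le, hxb⟩, hneg⟩)
    · exact hneg.not_gt (hb x hbx)

/-- The largest real root of a polynomial; it has the junk value `0` if there is no real root. -/
def largestRoot (p : ℝ[X]) : ℝ := sSup {x | p.eval x = 0}

lemma largestRoot_eq {p : ℝ[X]} {s : ℝ} (hs : p.eval s = 0) (hpos : ∀ x, s < x → 0 < p.eval x) :
    largestRoot p = s :=
  IsGreatest.csSup_eq ⟨hs, fun _ hx => not_lt.1 fun h => (hpos _ h).ne' hx⟩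

/-- A sequence of polynomials that satisfies a three-term recurrence with positive outer
coefficients and is positive on `[1, ∞)`, as is the case for orthogonal polynomials with positive
leading coefficients whose orthogonality measure lives on `(-∞, 1)`. -/
structure ThreeTerm (p : ℕ → ℝ[X]) where
  /-- The coefficient of `p (i + 1)` in `X * p i`. -/
  up : ℕ → ℝ
  /-- The coefficient of `p i` in `X * p i`. -/
  mid : ℕ → ℝ
  /-- The coefficient of `p i` in `X * p (i + 1)`. -/
  down : ℕ → ℝ
  up_pos : ∀ i, 0 < up i
  down_pos : ∀ i, 0 < down i
  zero : p 0 = 1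
  X_mul_zero : X * p 0 = C (up 0) * p 1 + C (mid 0) * p 0
  X_mul_succ : ∀ i,
    X * p (i + 1) = C (up (i + 1)) * p (i + 2) + C (mid (i + 1)) * p (i + 1) + C (down i) * p i
  eval_pos : ∀ i x, 1 ≤ x → 0 < (p i).eval x

namespace ThreeTerm
variable {p : ℕ → ℝ[X]}

/-- The reciprocals of the squared norms of the `p i`, up to a common factor. -/
def weight (T : ThreeTerm p) : ℕ → ℝ
  | 0 => 1
  | (i + 1) => weight T i * T.up i / T.down i

lemma eval_one_eq (T : ThreeTerm p) (x : ℝ) : (p 1).eval x = (x - T.mid 0) / T.up 0 := by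
  have h := congrArg (eval x) T.X_mul_zero
  simp only [T.zero, eval_mul, eval_add, eval_X, eval_C, eval_one] at h
  rw [eq_div_iff (T.up_pos 0).ne']
  linarith

/-- The roots of consecutive members interlace: at the last zero of `p (d + 1)` the recurrence
makes `p (d + 2)` negative. -/
lemma exists_last_root (T : ThreeTerm p) (d : ℕ) :
    ∃ s < 1, (p (d + 1)).eval s = 0 ∧ (∀ x, s < x → 0 < (p (d + 1)).eval x) ∧
      ∀ j ≤ d, ∀ x, s ≤ x → 0 < (p j).eval x := by
  induction d with
  | zero =>
    have hpos (x : ℝ) (hx : T.mid 0 < x) : 0 < (p 1).eval x := by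
      rw [T.eval_one_eq]; exact div_pos (sub_pos.2 hx) (T.up_pos 0)
    refine ⟨T.mid 0, ?_, by simp [T.eval_one_eq], hpos, ?_⟩
    · have h := T.eval_pos 1 1 le_rfl
      rw [T.eval_one_eq, div_pos_iff_of_pos_right (T.up_pos 0)] at h
      exact sub_pos.1 h
    · rintro j hj x -
      simp [Nat.le_zero.1 hj, T.zero]
  | succ d ih =>
    obtain ⟨t, ht1, ht0, htpos, hlow⟩ := ih
    have hneg : (p (d + 2)).eval t < 0 := by
      have h := congrArg (eval t) (T.X_mul_succ d)
      simp only [eval_mul, eval_add, eval_X, eval_C, ht0, mul_zero, add_zero] at h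
      have hdown := mul_pos (T.down_pos d) (hlow d le_rfl t le_rfl)
      exact neg_of_mul_neg_right (by linarith) (T.up_pos (d + 1)).le
    obtain ⟨s, hts, hs1, hs0, hspos⟩ :=
      exists_last_zero (p (d + 2)).continuous ht1.le hneg (T.eval_pos _)
    refine ⟨s, hs1, hs0, hspos, fun j hj x hx => ?_⟩
    rcases Nat.le_succ_iff.1 hj with hjd | rfl
    · exact hlow j hjd x (hts.le.trans hx)
    · exact htpos x (hts.trans_le hx)

lemma largestRoot_spec (T : ThreeTerm p) {d : ℕ} (hd : 1 ≤ d) :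
    largestRoot (p d) < 1 ∧ (p d).eval (largestRoot (p d)) = 0 ∧
      (∀ x, largestRoot (p d) < x → 0 < (p d).eval x) ∧
      ∀ j < d, 0 < (p j).eval (largestRoot (p d)) := by
  obtain ⟨d, rfl⟩ := Nat.exists_eq_add_of_le' hd
  obtain ⟨s, hs1, hs0, hspos, hlow⟩ := T.exists_last_root d
  rw [largestRoot_eq hs0 hspos]
  exact ⟨hs1, hs0, hspos, fun j hj => hlow j (Nat.lt_succ_iff.1 hj) s le_rfl⟩

lemma largestRoot_lt_one (T : ThreeTerm p) {d : ℕ} (hd : 1 ≤ d) : largestRoot (p d) < 1 :=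
  (T.largestRoot_spec hd).1

lemma eval_largestRoot (T : ThreeTerm p) {d : ℕ} (hd : 1 ≤ d) :
    (p d).eval (largestRoot (p d)) = 0 :=
  (T.largestRoot_spec hd).2.1

lemma eval_pos_of_largestRoot_lt (T : ThreeTerm p) {d : ℕ} (hd : 1 ≤ d) {x : ℝ}
    (hx : largestRoot (p d) < x) : 0 < (p d).eval x :=
  (T.largestRoot_spec hd).2.2.1 x hx

lemma weight_pos (T : ThreeTerm p) (i : ℕ) : 0 < T.weight i := by
  induction i with
  | zero => exact one_pos
  | succ i ih => exact div_pos (mul_pos ih (T.up_pos i)) (T.down_pos i)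

theorem christoffel_darboux (T : ThreeTerm p) (s : ℝ) (d : ℕ) :
    (X - C s) * ∑ i ∈ Finset.range (d + 1), C (T.weight i * (p i).eval s) * p i =
      C (T.weight d * T.up d) *
        (C ((p d).eval s) * p (d + 1) - C ((p (d + 1)).eval s) * p d) := by
  induction d with
  | zero =>
    have h := T.X_mul_zero
    have h' := congrArg (fun q => C (eval s q)) h
    simp only [T.zero, mul_one, eval_X, eval_add, eval_mul, eval_C, C_add, C_mul] at h h'
    simp only [weight, T.zero, zero_add, Finset.range_one, Finset.sum_singleton, one_mul, mul_one,
      eval_one, C_1]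
    linear_combination h - h'
  | succ d ih =>
    rw [Finset.sum_range_succ, mul_add, ih]
    have h := T.X_mul_succ d
    have h' := congrArg (fun q => C (eval s q)) h
    have hweight : T.weight (d + 1) * T.down d = T.weight d * T.up d :=
      div_mul_cancel₀ _ (T.down_pos d).ne'
    rw [← hweight]
    simp only [eval_mul, eval_add, eval_X, eval_C, C_mul, C_add] at h' ⊢
    linear_combination C (T.weight (d + 1)) * C ((p (d + 1)).eval s) * h -
      C (T.weight (d + 1)) * p (d + 1) * h'

/-- The quotient of `p d` by `X - s`, with `s` the largest root, is a positive combination of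
lower members: it is the Christoffel–Darboux kernel at `s`. -/
lemma exists_pos_combination (T : ThreeTerm p) {d : ℕ} (hd : 1 ≤ d) :
    ∃ (w : ℕ → ℝ) (c : ℝ), (∀ i < d, 0 < w i) ∧ 0 < c ∧
      (X - C (largestRoot (p d))) * ∑ i ∈ Finset.range d, C (w i) * p i = C c * p d := by
  obtain ⟨-, hroot, -, hlow⟩ := T.largestRoot_spec hd
  obtain ⟨e, rfl⟩ := Nat.exists_eq_add_of_le' hd
  set s := largestRoot (p (e + 1))
  refine ⟨fun i => T.weight i * (p i).eval s, T.weight e * T.up e * (p e).eval s,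
    fun i hi => mul_pos (T.weight_pos i) (hlow i hi),
    mul_pos (mul_pos (T.weight_pos e) (T.up_pos e)) (hlow e e.lt_succ_self), ?_⟩
  rw [T.christoffel_darboux s e, hroot]
  simp only [C_mul, C_0]
  ring

end ThreeTerm
end ThreeTermRecurrence

section Gegenbauer
open Polynomial

/-- The Gegenbauer polynomial `C_k^{(μ)}`, a positive multiple of `p_k^{α+1,α+1}` for
`μ = α + 3/2`. -/
def gegenbauer (μ : ℝ) : ℕ → ℝ[X]
  | 0 => 1
  | 1 => C (2 * μ) * X
  | (k + 2) => C (1 / ((k : ℝ) + 2)) *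
      (C (2 * ((k : ℝ) + 1 + μ)) * X * gegenbauer μ (k + 1) -
        C ((k : ℝ) + 2 * μ) * gegenbauer μ k)

/-- The sum `C_k^{(μ)} + C_{k-1}^{(μ)}`, a positive multiple of `p_k^{α+1,α}` for
`μ = α + 3/2`. -/
def gegenbauerPair (μ : ℝ) : ℕ → ℝ[X]
  | 0 => 1
  | (k + 1) => gegenbauer μ (k + 1) + gegenbauer μ k

/-- The difference `C_k^{(μ)} - C_{k-2}^{(μ)}`, a positive multiple of `C_k^{(μ-1)}`. For
`μ = m/2` it is the reproducing kernel of the spherical harmonics of degree `k` on the unit sphere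
of `ℝ^m`, as a function of the inner product. -/
def zonal (μ : ℝ) : ℕ → ℝ[X]
  | 0 => 1
  | 1 => gegenbauer μ 1
  | (k + 2) => gegenbauer μ (k + 2) - gegenbauer μ k

lemma C_mul_left_cancel {c : ℝ} (hc : c ≠ 0) {p q : ℝ[X]} (h : C c * p = C c * q) : p = q :=
  mul_left_cancel₀ (C_ne_zero.mpr hc) h

section
variable (μ : ℝ)

lemma gegenbauer_recurrence (k : ℕ) :
    C ((k : ℝ) + 2) * gegenbauer μ (k + 2) =
      C (2 * ((k : ℝ) + 1 + μ)) * X * gegenbauer μ (k + 1) -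
        C ((k : ℝ) + 2 * μ) * gegenbauer μ k := by
  rw [gegenbauer, ← mul_assoc, ← C_mul, mul_one_div_cancel (by positivity), C_1, one_mul]

lemma derivative_gegenbauer_succ_and (k : ℕ) :
    derivative (gegenbauer μ (k + 1)) =
        X * derivative (gegenbauer μ k) + C ((k : ℝ) + 2 * μ) * gegenbauer μ k ∧
      X * derivative (gegenbauer μ (k + 1)) - derivative (gegenbauer μ k) =
        C ((k : ℝ) + 1) * gegenbauer μ (k + 1) := by
  induction k with
  | zero =>
    simp only [gegenbauer, derivative_C_mul, derivative_X, derivative_one]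
    constructor <;> simp [mul_comm]
  | succ k ih =>
    obtain ⟨ih₁, ih₂⟩ := ih
    have hk : (k : ℝ) + 2 ≠ 0 := by positivity
    have hrec := gegenbauer_recurrence μ k
    have hderiv := congrArg derivative hrec
    simp only [derivative_mul, derivative_sub, derivative_C, derivative_X, zero_mul, zero_add,
      mul_one] at hderiv
    push_cast
    simp only [C_add, C_mul, C_1, C_ofNat] at *
    have hfirst : derivative (gegenbauer μ (k + 2)) = X * derivative (gegenbauer μ (k + 1)) +
        (C (k : ℝ) + 1 + 2 * C μ) * gegenbauer μ (k + 1) := by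
      apply C_mul_left_cancel hk
      simp only [C_add, C_ofNat]
      linear_combination hderiv + (C (k : ℝ) + 2 * C μ) * ih₂
    refine ⟨hfirst, C_mul_left_cancel hk ?_⟩
    rw [hfirst]
    simp only [C_add, C_ofNat]
    linear_combination (C (k : ℝ) + 2) * (X * ih₂ - ih₁) - (C (k : ℝ) + 2) * hrec

lemma derivative_gegenbauer_succ (k : ℕ) :
    derivative (gegenbauer μ (k + 1)) =
      X * derivative (gegenbauer μ k) + C ((k : ℝ) + 2 * μ) * gegenbauer μ k :=
  (derivative_gegenbauer_succ_and μ k).1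

lemma X_mul_derivative_gegenbauer_succ (k : ℕ) :
    X * derivative (gegenbauer μ (k + 1)) - derivative (gegenbauer μ k) =
      C ((k : ℝ) + 1) * gegenbauer μ (k + 1) :=
  (derivative_gegenbauer_succ_and μ k).2

lemma derivative_zonal_add_two (k : ℕ) :
    derivative (zonal μ (k + 2)) = C (2 * ((k : ℝ) + 1 + μ)) * gegenbauer μ (k + 1) := by
  have h₁ := derivative_gegenbauer_succ μ (k + 1)
  have h₂ := X_mul_derivative_gegenbauer_succ μ k
  rw [zonal, derivative_sub]
  push_cast at h₁
  simp only [C_add, C_mul, C_1, C_ofNat] at *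
  linear_combination h₁ + h₂

theorem gegenbauer_ode (k : ℕ) :
    (1 - X ^ 2) * derivative (derivative (gegenbauer μ k))
      - C (2 * μ + 1) * X * derivative (gegenbauer μ k)
      + C ((k : ℝ) * (k + 2 * μ)) * gegenbauer μ k = 0 := by
  cases k with
  | zero => simp [gegenbauer]
  | succ k =>
    have h := X_mul_derivative_gegenbauer_succ μ k
    have d₁ := congrArg derivative (derivative_gegenbauer_succ μ k)
    have d₂ := congrArg derivative h
    simp only [derivative_mul, derivative_sub, derivative_add, derivative_C, derivative_X,
      zero_mul, zero_add, one_mul] at d₁ d₂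
    push_cast
    simp only [C_add, C_mul, C_1, C_ofNat] at *
    linear_combination d₁ - X * d₂ - (C (k : ℝ) + 2 * C μ + 1) * h

theorem gegenbauerPair_ode (k : ℕ) :
    (1 - X ^ 2) * derivative (derivative (gegenbauerPair μ k))
      - (1 + C (2 * μ) * X) * derivative (gegenbauerPair μ k)
      + C ((k : ℝ) * (k + 2 * μ - 1)) * gegenbauerPair μ k = 0 := by
  cases k with
  | zero => simp [gegenbauerPair]
  | succ k =>
    have h₀ := gegenbauer_ode μ k
    have h₁ := gegenbauer_ode μ (k + 1)
    have h₂ := derivative_gegenbauer_succ μ k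
    have h₃ := X_mul_derivative_gegenbauer_succ μ k
    simp only [gegenbauerPair, derivative_add]
    push_cast at *
    simp only [C_add, C_mul, C_1, C_ofNat, C_sub] at *
    linear_combination h₀ + h₁ + h₃ - h₂

theorem zonal_ode (k : ℕ) :
    (1 - X ^ 2) * derivative (derivative (zonal μ k)) - C (2 * μ - 1) * X * derivative (zonal μ k)
      + C ((k : ℝ) * (k + 2 * μ - 2)) * zonal μ k = 0 := by
  rcases k with _ | _ | k
  · simp [zonal]
  · simp [zonal, gegenbauer, C_ofNat]; ring
  · have h₁ := derivative_gegenbauer_succ μ k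
    have h₂ := X_mul_derivative_gegenbauer_succ μ k
    have hrec := gegenbauer_recurrence μ k
    rw [derivative_zonal_add_two]
    simp only [derivative_mul, derivative_C, zero_mul, zero_add, zonal]
    push_cast at *
    simp only [C_add, C_mul, C_1, C_ofNat, C_sub] at *
    linear_combination
      2 * (C (k : ℝ) + 1 + C μ) * (h₁ - X * h₂) + (C (k : ℝ) + 2 * C μ) * hrec

lemma gegenbauerPair_eq_sum_zonal (d : ℕ) :
    gegenbauerPair μ d = ∑ k ∈ Finset.range (d + 1), zonal μ k := by
  induction d with
  | zero => simp [gegenbauerPair, zonal]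
  | succ d ih =>
    rw [Finset.sum_range_succ, ← ih]
    cases d <;> simp only [gegenbauerPair, zonal, gegenbauer] <;> ring

lemma eval_one_gegenbauer_succ (k : ℕ) :
    ((k : ℝ) + 1) * (gegenbauer μ (k + 1)).eval 1 = (k + 2 * μ) * (gegenbauer μ k).eval 1 := by
  induction k with
  | zero => simp [gegenbauer]
  | succ k ih =>
    have hrec := congrArg (eval 1) (gegenbauer_recurrence μ k)
    simp only [eval_mul, eval_sub, eval_C, eval_X, mul_one] at hrec
    push_cast
    linear_combination hrec + ih

end

lemma eval_gegenbauer_pos_and {μ x : ℝ} (hμ : 0 < μ) (hx : 1 ≤ x) (k : ℕ) :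
    0 < (gegenbauer μ k).eval x ∧
      (k + 2 * μ) * (gegenbauer μ k).eval x ≤ ((k : ℝ) + 1) * (gegenbauer μ (k + 1)).eval x := by
  induction k with
  | zero => simp [gegenbauer]; nlinarith
  | succ k ih =>
    obtain ⟨hpos, hle⟩ := ih
    have hrec := congrArg (eval x) (gegenbauer_recurrence μ k)
    simp only [eval_mul, eval_sub, eval_C, eval_X] at hrec
    have hpos' : 0 < (gegenbauer μ (k + 1)).eval x :=
      pos_of_mul_pos_right (lt_of_lt_of_le (by positivity) hle) (by positivity)
    have hmul : 2 * ((k : ℝ) + 1 + μ) * 1 * (gegenbauer μ (k + 1)).eval x ≤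
        2 * ((k : ℝ) + 1 + μ) * x * (gegenbauer μ (k + 1)).eval x := by gcongr
    refine ⟨hpos', ?_⟩
    push_cast
    linarith

lemma eval_gegenbauer_pos {μ x : ℝ} (hμ : 0 < μ) (hx : 1 ≤ x) (k : ℕ) :
    0 < (gegenbauer μ k).eval x :=
  (eval_gegenbauer_pos_and hμ hx k).1

lemma eval_one_gegenbauer_half (m k : ℕ) :
    (gegenbauer (((m + 1 : ℕ) : ℝ) / 2) k).eval 1 = ((k + m).choose m : ℝ) := by
  induction k with
  | zero => simp [gegenbauer]
  | succ k ih =>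
    have hsucc := eval_one_gegenbauer_succ (((m + 1 : ℕ) : ℝ) / 2) k
    have hchoose : ((k + m).choose m : ℝ) * (k + m + 1) =
        ((k + m + 1).choose m : ℝ) * (k + 1) := by
      have h := Nat.choose_mul_succ_eq (k + m) m
      rw [show k + m + 1 - m = k + 1 by omega] at h
      exact_mod_cast h
    rw [ih] at hsucc
    rw [show k + 1 + m = k + m + 1 by omega]
    apply mul_left_cancel₀ (show (k : ℝ) + 1 ≠ 0 by positivity)
    rw [hsucc]
    push_cast
    linear_combination hchoose

end Gegenbauer

section Adjacent
open Polynomial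

/-- The coefficient of `C_{i+1}^{(μ)}` in the expansion of `t C_i^{(μ)}(t)`. -/
def recurrenceCoeff (μ : ℝ) (i : ℕ) : ℝ := ((i : ℝ) + 1) / (2 * (i + μ))

section
variable {μ : ℝ}

lemma recurrenceCoeff_pos (hμ : 0 < μ) (i : ℕ) : 0 < recurrenceCoeff μ i := by
  unfold recurrenceCoeff; positivity

lemma recurrenceCoeff_lt_one (hμ : 1 / 2 < μ) (i : ℕ) : recurrenceCoeff μ i < 1 := by
  rw [recurrenceCoeff, div_lt_one (by linarith [i.cast_nonneg (α := ℝ)])]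
  linarith [i.cast_nonneg (α := ℝ)]

lemma X_eq_recurrenceCoeff_mul (hμ : μ ≠ 0) :
    (X : ℝ[X]) = C (recurrenceCoeff μ 0) * gegenbauer μ 1 := by
  rw [gegenbauer, ← mul_assoc, ← C_mul,
    show recurrenceCoeff μ 0 * (2 * μ) = 1 by simp [recurrenceCoeff]; field_simp, C_1, one_mul]

lemma X_mul_gegenbauer_succ (hμ : 0 < μ) (i : ℕ) :
    X * gegenbauer μ (i + 1) = C (recurrenceCoeff μ (i + 1)) * gegenbauer μ (i + 2) +
      (1 - C (recurrenceCoeff μ (i + 1))) * gegenbauer μ i := by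
  have hne : 2 * ((i : ℝ) + 1 + μ) ≠ 0 := by positivity
  have hcoeff : C (2 * ((i : ℝ) + 1 + μ)) * C (recurrenceCoeff μ (i + 1)) = C ((i : ℝ) + 2) := by
    rw [← C_mul, recurrenceCoeff]
    push_cast
    rw [mul_div_cancel₀ _ hne, add_assoc, one_add_one_eq_two]
  have hrec := gegenbauer_recurrence μ i
  apply C_mul_left_cancel hne
  simp only [C_add, C_mul, C_ofNat, C_1] at *
  linear_combination -hrec + (gegenbauer μ i - gegenbauer μ (i + 2)) * hcoeff

lemma one_add_X_mul_gegenbauer (hμ : 0 < μ) (d : ℕ) :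
    (1 + X) * gegenbauer μ d =
      gegenbauerPair μ d + C (recurrenceCoeff μ d) * zonal μ (d + 1) := by
  rcases d with _ | d
  · simp only [gegenbauerPair, zonal, ← X_eq_recurrenceCoeff_mul hμ.ne']
    simp [gegenbauer]
  · simp only [gegenbauerPair, zonal]
    linear_combination X_mul_gegenbauer_succ hμ d

/-- The recurrence of the Gegenbauer polynomials. -/
def gegenbauerThreeTerm (hμ : 1 / 2 < μ) : ThreeTerm (gegenbauer μ) where
  up := recurrenceCoeff μ
  mid _ := 0
  down i := 1 - recurrenceCoeff μ (i + 1)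
  up_pos := recurrenceCoeff_pos (by linarith)
  down_pos i := sub_pos.2 (recurrenceCoeff_lt_one hμ _)
  zero := by rw [gegenbauer]
  X_mul_zero := by rw [← X_eq_recurrenceCoeff_mul (by linarith)]; simp [gegenbauer]
  X_mul_succ i := by
    rw [X_mul_gegenbauer_succ (by linarith), C_0, C_sub, C_1]; ring
  eval_pos i _ hx := eval_gegenbauer_pos (by linarith) hx i

/-- The recurrence of the pair sums, obtained by adding two consecutive recurrences of
`gegenbauer`. -/
def gegenbauerPairThreeTerm (hμ : 1 / 2 < μ) : ThreeTerm (gegenbauerPair μ) where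
  up := recurrenceCoeff μ
  mid
    | 0 => -recurrenceCoeff μ 0
    | (i + 1) => recurrenceCoeff μ i - recurrenceCoeff μ (i + 1)
  down i := 1 - recurrenceCoeff μ i
  up_pos := recurrenceCoeff_pos (by linarith)
  down_pos i := sub_pos.2 (recurrenceCoeff_lt_one hμ _)
  zero := by rw [gegenbauerPair]
  X_mul_zero := by
    have h := X_eq_recurrenceCoeff_mul (μ := μ) (by linarith)
    rw [show gegenbauerPair μ 0 = 1 from rfl, C_neg]
    simp only [gegenbauerPair, gegenbauer] at h ⊢
    linear_combination h
  X_mul_succ i := by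
    have hpos : 0 < μ := by linarith
    have hsucc := X_mul_gegenbauer_succ hpos i
    rcases i with _ | i
    · have hzero := X_eq_recurrenceCoeff_mul hpos.ne'
      simp only [gegenbauerPair, C_sub, C_1, gegenbauer] at *
      linear_combination hsucc + hzero
    · have hprev := X_mul_gegenbauer_succ hpos i
      simp only [gegenbauerPair, C_sub, C_1] at *
      linear_combination hsucc + hprev
  eval_pos i x hx := by
    cases i with
    | zero => simp [gegenbauerPair]
    | succ i =>
      rw [gegenbauerPair, eval_add]
      have hpos := eval_gegenbauer_pos (μ := μ) (by linarith) hx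
      exact add_pos (hpos _) (hpos _)

end

/-- The parity of the degree of Levenshtein's extremal polynomials. It selects the case in the
definition of his bound and the system of adjacent Jacobi polynomials that goes with it. -/
inductive Parity
  | odd
  | even

/-- The adjacent Jacobi polynomials up to positive factors: `p_d^{α+1,α}` in the odd case and
`p_d^{α+1,α+1}` in the even case, where `μ = α + 3/2`. -/
def adjacent (μ : ℝ) : Parity → ℕ → ℝ[X]
  | .odd => gegenbauerPair μ
  | .even => gegenbauer μ

/-- The second Jacobi parameter of the adjacent polynomials; the first one is `μ - 1/2`. -/
def adjacentBeta (μ : ℝ) : Parity → ℝ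
  | .odd => μ - 3 / 2
  | .even => μ - 1 / 2

/-- The recurrence of the adjacent polynomials. -/
def adjacentThreeTerm {μ : ℝ} (hμ : 1 / 2 < μ) : (ε : Parity) → ThreeTerm (adjacent μ ε)
  | .odd => gegenbauerPairThreeTerm hμ
  | .even => gegenbauerThreeTerm hμ

lemma eval_one_adjacent_pos {μ : ℝ} (hμ : 1 / 2 < μ) (ε : Parity) (d : ℕ) :
    0 < (adjacent μ ε d).eval 1 :=
  (adjacentThreeTerm hμ ε).eval_pos d 1 le_rfl

theorem adjacent_ode (μ : ℝ) (ε : Parity) (d : ℕ) :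
    (1 - X ^ 2) * derivative (derivative (adjacent μ ε d))
      + (C (adjacentBeta μ ε - (μ - 1 / 2)) - C ((μ - 1 / 2) + adjacentBeta μ ε + 2) * X)
        * derivative (adjacent μ ε d)
      + C ((d : ℝ) * (d + (μ - 1 / 2) + adjacentBeta μ ε + 1)) * adjacent μ ε d = 0 := by
  cases ε with
  | odd =>
    simp only [adjacent, adjacentBeta]
    rw [show μ - 3 / 2 - (μ - 1 / 2) = -1 by ring,
      show μ - 1 / 2 + (μ - 3 / 2) + 2 = 2 * μ by ring,
      show (d : ℝ) + (μ - 1 / 2) + (μ - 3 / 2) + 1 = d + 2 * μ - 1 by ring, C_neg, C_1]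
    linear_combination gegenbauerPair_ode μ d
  | even =>
    simp only [adjacent, adjacentBeta]
    rw [sub_self, show μ - 1 / 2 + (μ - 1 / 2) + 2 = 2 * μ + 1 by ring,
      show (d : ℝ) + (μ - 1 / 2) + (μ - 1 / 2) + 1 = d + 2 * μ by ring, C_0]
    linear_combination gegenbauer_ode μ d

/-- The factor `p_d^{α+1,α}` (odd case) or `(1 + t) p_d^{α+1,α+1}` (even case) of Levenshtein's
extremal polynomial; its value at `1` is Levenshtein's bound. -/
def levenshteinFactor (μ : ℝ) : Parity → ℕ → ℝ[X]
  | .odd, d => gegenbauerPair μ d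
  | .even, d => (1 + X) * gegenbauer μ d

lemma levenshteinFactor_eq_add_zonal {μ : ℝ} (hμ : 0 < μ) (ε : Parity) (d : ℕ) :
    ∃ γ : ℝ, 0 ≤ γ ∧ levenshteinFactor μ ε d = gegenbauerPair μ d + C γ * zonal μ (d + 1) := by
  cases ε with
  | odd => exact ⟨0, le_rfl, by simp [levenshteinFactor]⟩
  | even => exact ⟨_, (recurrenceCoeff_pos hμ d).le, one_add_X_mul_gegenbauer hμ d⟩

end Adjacent

section Jacobi
open Polynomial

lemma genBinom_zero (x : ℝ) : genBinom x 0 = 1 := by simp [genBinom]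

lemma genBinom_succ (x : ℝ) (k : ℕ) :
    ((k : ℝ) + 1) * genBinom x (k + 1) = (x - k) * genBinom x k := by
  unfold genBinom
  rw [Finset.prod_range_succ, Nat.factorial_succ]
  push_cast
  field_simp

lemma genBinom_pos {x : ℝ} {k : ℕ} (hk : (k : ℝ) < x + 1) : 0 < genBinom x k := by
  refine div_pos (Finset.prod_pos fun i hi => ?_) (by positivity)
  have hik : ((i + 1 : ℕ) : ℝ) ≤ k := by exact_mod_cast Finset.mem_range.1 hi
  push_cast at hik
  linarith

/-- The coefficient of `((x - 1)/2)^s ((x + 1)/2)^(d - s)` in `jacobiP`. -/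
def jacobiCoeff (a b : ℝ) (d s : ℕ) : ℝ :=
  genBinom ((d : ℝ) + a) (d - s) * genBinom ((d : ℝ) + b) s

lemma jacobiCoeff_succ (a b : ℝ) (s j : ℕ) :
    ((s : ℝ) + 1) * (s + 1 + a) * jacobiCoeff a b (s + 1 + j) (s + 1) =
      (j + 1) * (j + 1 + b) * jacobiCoeff a b (s + 1 + j) s := by
  have hb := genBinom_succ (((s + 1 + j : ℕ) : ℝ) + b) s
  have ha := genBinom_succ (((s + 1 + j : ℕ) : ℝ) + a) j
  unfold jacobiCoeff
  rw [show s + 1 + j - (s + 1) = j by omega, show s + 1 + j - s = j + 1 by omega]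
  push_cast at *
  linear_combination (s + 1 + a) * genBinom (s + 1 + j + a) j * hb -
    (j + 1 + b) * genBinom (s + 1 + j + b) s * ha

/-- The Jacobi polynomial as a polynomial in the variable `(x - 1)/2`. -/
def shiftedJacobi (a b : ℝ) (d : ℕ) : ℝ[X] :=
  ∑ s ∈ Finset.range (d + 1), C (jacobiCoeff a b d s) * (X ^ s * (X + 1) ^ (d - s))

lemma eval_shiftedJacobi (a b : ℝ) (d : ℕ) (x : ℝ) :
    (shiftedJacobi a b d).eval ((x - 1) / 2) = jacobiP a b d x := by
  unfold shiftedJacobi jacobiP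
  rw [eval_finsetSum]
  refine Finset.sum_congr rfl fun s _ => ?_
  simp only [jacobiCoeff, eval_mul, eval_C, eval_pow, eval_X, eval_add, eval_one]
  rw [show (x - 1) / 2 + 1 = (x + 1) / 2 by ring]
  ring

lemma shiftedJacobi_coeff_zero_pos {a : ℝ} (ha : -1 < a) (b : ℝ) (d : ℕ) :
    0 < (shiftedJacobi a b d).coeff 0 := by
  have h : (shiftedJacobi a b d).coeff 0 = genBinom (d + a) d := by
    rw [coeff_zero_eq_eval_zero, shiftedJacobi, eval_finsetSum, Finset.sum_range_succ']
    simp [jacobiCoeff, genBinom_zero]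
  rw [h]
  exact genBinom_pos (by linarith)

/-- The hypergeometric operator in the variable `(x - 1)/2`; the Jacobi polynomial of degree `d`
spans its polynomial kernel when `Λ = d (d + a + b + 1)`. -/
def hypergeometricOp (a b Λ : ℝ) : ℝ[X] →ₗ[ℝ] ℝ[X] where
  toFun f := X * (X + 1) * derivative (derivative f)
    + (C (a + 1) + C (a + b + 2) * X) * derivative f - C Λ * f
  map_add' f g := by simp only [derivative_add]; ring
  map_smul' c f := by simp only [smul_eq_C_mul, derivative_C_mul, RingHom.id_apply]; ring

lemma hypergeometricOp_apply (a b Λ : ℝ) (f : ℝ[X]) :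
    hypergeometricOp a b Λ f = X * (X + 1) * derivative (derivative f)
      + (C (a + 1) + C (a + b + 2) * X) * derivative f - C Λ * f := rfl

lemma coeff_X_mul_derivative (q : ℝ[X]) (j : ℕ) : coeff (X * derivative q) j = j * coeff q j := by
  rcases j with _ | j
  · simp
  · rw [coeff_X_mul, coeff_derivative]; push_cast; ring

lemma coeff_hypergeometricOp (a b Λ : ℝ) (f : ℝ[X]) (k : ℕ) :
    coeff (hypergeometricOp a b Λ f) k =
      ((k : ℝ) + 1) * (k + 1 + a) * coeff f (k + 1) + (k * (k + a + b + 1) - Λ) * coeff f k := by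
  have hsecond : coeff (X * (X * derivative (derivative f))) k = k * (k - 1) * coeff f k := by
    rcases k with _ | j
    · simp
    · rw [coeff_X_mul, coeff_X_mul_derivative, coeff_derivative]; push_cast; ring
  rw [hypergeometricOp_apply, show X * (X + 1) * derivative (derivative f)
        + (C (a + 1) + C (a + b + 2) * X) * derivative f - C Λ * f =
      X * (X * derivative (derivative f)) + X * derivative (derivative f)
        + C (a + 1) * derivative f + C (a + b + 2) * (X * derivative f) - C Λ * f by ring]
  simp only [coeff_add, coeff_sub, coeff_C_mul, hsecond, coeff_X_mul_derivative, coeff_derivative]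
  ring

lemma eq_zero_of_hypergeometricOp_eq_zero {a b Λ : ℝ} (ha : -1 < a) {f : ℝ[X]}
    (h : hypergeometricOp a b Λ f = 0) (h0 : f.coeff 0 = 0) : f = 0 := by
  ext k
  rw [coeff_zero]
  induction k with
  | zero => exact h0
  | succ k ih =>
    have hcoeff := coeff_hypergeometricOp a b Λ f k
    have hk : 0 < (k : ℝ) + 1 + a := by linarith [k.cast_nonneg (α := ℝ)]
    rw [h, coeff_zero, ih, mul_zero, add_zero] at hcoeff
    exact (mul_eq_zero.1 hcoeff.symm).resolve_left (by positivity)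

lemma hypergeometricOp_term (a b : ℝ) (s j : ℕ) :
    hypergeometricOp a b (((s : ℝ) + j) * (s + j + a + b + 1)) (X ^ s * (X + 1) ^ j) =
      C ((s : ℝ) * (s + a)) * (X ^ (s - 1) * (X + 1) ^ j) -
        C ((j : ℝ) * (j + b)) * (X ^ s * (X + 1) ^ (j - 1)) := by
  have hderiv (j : ℕ) : derivative ((X + 1 : ℝ[X]) ^ j) = C (j : ℝ) * (X + 1) ^ (j - 1) := by
    simpa using derivative_X_add_C_pow (1 : ℝ) j
  simp only [hypergeometricOp_apply, derivative_mul, hderiv, derivative_X_pow, derivative_add,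
    derivative_C]
  rcases s with _ | _ | s <;> rcases j with _ | _ | j <;>
  · simp only [Nat.add_sub_cancel, Nat.zero_sub, zero_add, Nat.sub_self]
    push_cast
    simp only [C_add, C_mul, C_1, C_0, C_ofNat]
    ring

lemma hypergeometricOp_shiftedJacobi (a b : ℝ) (d : ℕ) :
    hypergeometricOp a b ((d : ℝ) * (d + a + b + 1)) (shiftedJacobi a b d) = 0 := by
  have hterm : ∀ s ∈ Finset.range (d + 1),
      hypergeometricOp a b ((d : ℝ) * (d + a + b + 1))
          (C (jacobiCoeff a b d s) * (X ^ s * (X + 1) ^ (d - s))) =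
        C (s * (s + a) * jacobiCoeff a b d s) * (X ^ (s - 1) * (X + 1) ^ (d - s)) -
          C (((d - s : ℕ) : ℝ) * ((d - s : ℕ) + b) * jacobiCoeff a b d s) *
            (X ^ s * (X + 1) ^ (d - s - 1)) := by
    intro s hs
    have hd : (d : ℝ) = (s : ℝ) + (d - s : ℕ) := by
      rw [← Nat.cast_add, Nat.add_sub_of_le (Finset.mem_range_succ_iff.1 hs)]
    have h := hypergeometricOp_term a b s (d - s)
    rw [← hd] at h
    rw [← smul_eq_C_mul, map_smul, h, smul_eq_C_mul]
    simp only [C_mul]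
    ring
  rw [shiftedJacobi, map_sum, Finset.sum_congr rfl hterm, Finset.sum_sub_distrib,
    Finset.sum_range_succ', Finset.sum_range_succ]
  simp only [Nat.cast_zero, zero_mul, C_0, add_zero, Nat.sub_self, sub_eq_zero]
  refine Finset.sum_congr rfl fun s hs => ?_
  obtain ⟨j, rfl⟩ := Nat.exists_eq_add_of_lt (Finset.mem_range.1 hs)
  rw [show s + j + 1 = s + 1 + j by ring, show s + 1 + j - (s + 1) = j by omega,
    show s + 1 + j - s = j + 1 by omega]
  push_cast
  rw [jacobiCoeff_succ]

/-- Both sides solve the Jacobi differential equation and agree at `x = 1`. -/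
lemma adjacent_proportional_jacobiP {μ : ℝ} (hμ : -1 / 2 < μ) (ε : Parity) (d : ℕ) (x : ℝ) :
    (adjacent μ ε d).eval 1 * jacobiP (μ - 1 / 2) (adjacentBeta μ ε) d x =
      (shiftedJacobi (μ - 1 / 2) (adjacentBeta μ ε) d).coeff 0 * (adjacent μ ε d).eval x := by
  set L := hypergeometricOp (μ - 1 / 2) (adjacentBeta μ ε)
    ((d : ℝ) * (d + (μ - 1 / 2) + adjacentBeta μ ε + 1)) with hL
  set P := shiftedJacobi (μ - 1 / 2) (adjacentBeta μ ε) d with hP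
  set q : ℝ[X] := (adjacent μ ε d).comp (2 * X + 1) with hq
  have hLq : L q = 0 := by
    have h := congrArg (fun p => p.comp (2 * X + 1)) (adjacent_ode μ ε d)
    rw [hL, hypergeometricOp_apply, hq]
    simp only [derivative_comp, derivative_mul, derivative_add]
    simp only [one_div, map_sub, map_add, C_ofNat, map_mul, map_natCast, map_one, add_comp,
      mul_comp, sub_comp, one_comp, pow_comp, X_comp, C_comp, ofNat_comp, Nat.cast_ofNat,
      natCast_comp, zero_comp, derivative_ofNat, derivative_zero, zero_mul, derivative_X, mul_one,
      add_zero, derivative_one, mul_zero, zero_add] at h ⊢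
    linear_combination (-1 : ℝ[X]) * h
  have hq0 : q.coeff 0 = (adjacent μ ε d).eval 1 := by
    rw [coeff_zero_eq_eval_zero, hq, eval_comp]; simp
  have hzero : (adjacent μ ε d).eval 1 • P - P.coeff 0 • q = 0 := by
    apply eq_zero_of_hypergeometricOp_eq_zero (a := μ - 1 / 2) (by linarith)
    · rw [← hL, map_sub, map_smul, map_smul, hLq, hL, hypergeometricOp_shiftedJacobi]
      simp
    · rw [coeff_sub, coeff_smul, coeff_smul, hq0, smul_eq_mul, smul_eq_mul, mul_comm, sub_self]
  have h := congrArg (eval ((x - 1) / 2)) hzero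
  rw [eval_sub, eval_smul, eval_smul, hP, eval_shiftedJacobi, hq, eval_comp] at h
  simp only [eval_add, eval_mul, eval_ofNat, eval_X, eval_one, eval_zero, smul_eq_mul,
    mul_div_cancel₀ (x - 1) (two_ne_zero' ℝ), sub_add_cancel] at h
  exact sub_eq_zero.1 h

theorem maxRoot_eq_largestRoot_adjacent {μ : ℝ} (hμ : 1 / 2 < μ) (ε : Parity) (d : ℕ) :
    maxRoot (μ - 1 / 2) (adjacentBeta μ ε) d = largestRoot (adjacent μ ε d) := by
  have hroots (x : ℝ) :
      jacobiP (μ - 1 / 2) (adjacentBeta μ ε) d x = 0 ↔ (adjacent μ ε d).eval x = 0 := by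
    have h := adjacent_proportional_jacobiP (μ := μ) (by linarith) ε d x
    have hone := (eval_one_adjacent_pos hμ ε d).ne'
    have hcoeff := (shiftedJacobi_coeff_zero_pos (a := μ - 1 / 2) (by linarith)
      (adjacentBeta μ ε) d).ne'
    rw [← mul_eq_zero_iff_left hone, h, mul_eq_zero_iff_left hcoeff]
  simp only [maxRoot, largestRoot, hroots]

end Jacobi

section Coefficients
open Polynomial

lemma gegenbauer_coeff_eq_zero (μ : ℝ) (k i : ℕ) (h : k < i ∨ Odd (i + k)) :
    (gegenbauer μ k).coeff i = 0 := by
  rw [Nat.odd_iff] at h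
  induction k using Nat.strong_induction_on generalizing i with
  | _ k ih =>
    match k with
    | 0 => rw [gegenbauer, coeff_one, if_neg (by omega)]
    | 1 => rw [gegenbauer, coeff_C_mul, coeff_X, if_neg (by omega), mul_zero]
    | k + 2 =>
      have hX : (X * gegenbauer μ (k + 1)).coeff i = 0 := by
        rcases i with _ | i
        · simp
        · rw [coeff_X_mul]; exact ih (k + 1) (by omega) i (by omega)
      rw [gegenbauer, mul_assoc, coeff_C_mul, coeff_sub, coeff_C_mul, coeff_C_mul, hX,
        ih k (by omega) i (by omega)]
      simp

lemma gegenbauer_coeff_self_pos {μ : ℝ} (hμ : 0 < μ) (k : ℕ) : 0 < (gegenbauer μ k).coeff k := by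
  induction k with
  | zero => simp [gegenbauer]
  | succ k ih =>
    rcases k with _ | k
    · simp [gegenbauer, hμ]
    · rw [gegenbauer, mul_assoc, coeff_C_mul, coeff_sub, coeff_C_mul, coeff_C_mul, coeff_X_mul,
        gegenbauer_coeff_eq_zero μ k (k + 2) (by omega), mul_zero, sub_zero]
      positivity

lemma zonal_coeff_eq_zero (μ : ℝ) (k i : ℕ) (h : k < i ∨ Odd (i + k)) :
    (zonal μ k).coeff i = 0 := by
  rcases k with _ | _ | k
  · exact gegenbauer_coeff_eq_zero μ 0 i h
  · exact gegenbauer_coeff_eq_zero μ 1 i h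
  · rw [zonal, coeff_sub, gegenbauer_coeff_eq_zero μ _ i h,
      gegenbauer_coeff_eq_zero μ k i (by rw [Nat.odd_iff] at *; omega), sub_zero]

lemma zonal_coeff_self_pos {μ : ℝ} (hμ : 0 < μ) (k : ℕ) : 0 < (zonal μ k).coeff k := by
  rcases k with _ | _ | k
  · exact gegenbauer_coeff_self_pos hμ 0
  · exact gegenbauer_coeff_self_pos hμ 1
  · rw [zonal, coeff_sub, gegenbauer_coeff_eq_zero μ k (k + 2) (by omega), sub_zero]
    exact gegenbauer_coeff_self_pos hμ _

lemma zonal_coeff_recurrence (μ : ℝ) (k a : ℕ) :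
    ((a : ℝ) + 2) * (a + 1) * (zonal μ k).coeff (a + 2) +
      (k - a) * (k + a + 2 * μ - 2) * (zonal μ k).coeff a = 0 := by
  have hsecond : coeff (X * (X * derivative (derivative (zonal μ k)))) a =
      a * (a - 1) * coeff (zonal μ k) a := by
    rcases a with _ | j
    · simp
    · rw [coeff_X_mul, coeff_X_mul_derivative, coeff_derivative]; push_cast; ring
  have h := congrArg (fun q => coeff q a) (zonal_ode μ k)
  simp only [sub_mul, one_mul, sq, mul_assoc] at h
  simp only [coeff_add, coeff_sub, coeff_C_mul, hsecond, coeff_X_mul_derivative,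
    coeff_derivative, coeff_zero] at h
  push_cast at h
  linear_combination h

lemma eval_eq_sum_of_coeff_odd {p : ℝ[X]} {k : ℕ} (h : ∀ i, k < i ∨ Odd (i + k) → p.coeff i = 0)
    (x : ℝ) :
    p.eval x = ∑ j ∈ Finset.range (k / 2 + 1), p.coeff (k - 2 * j) * x ^ (k - 2 * j) := by
  have hdeg : p.natDegree < k + 1 :=
    Nat.lt_succ_of_le (natDegree_le_iff_coeff_eq_zero.2 fun i hi => h i (Or.inl hi))
  rw [eval_eq_sum_range' hdeg]
  symm
  apply Finset.sum_of_injOn (fun j => k - 2 * j)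
  · intro a ha b hb hab
    simp only [Finset.coe_range, Set.mem_Iio] at ha hb hab
    omega
  · intro a _
    simp only [Finset.coe_range, Set.mem_Iio]
    omega
  · intro i hi hni
    rw [h i, zero_mul]
    by_contra hc
    simp only [Finset.mem_range, Finset.coe_range, Set.mem_image, Set.mem_Iio, Nat.odd_iff] at *
    exact hni ⟨(k - i) / 2, by omega, by omega⟩
  · exact fun _ _ => rfl

end Coefficients

section Fischer
open MvPolynomial

variable {σ : Type*} [Fintype σ]

/-- The factorial of a multi-index. -/
def multiFactorial (ν : σ →₀ ℕ) : ℝ := ∏ i, ((ν i).factorial : ℝ)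

lemma multiFactorial_pos (ν : σ →₀ ℕ) : 0 < multiFactorial ν :=
  Finset.prod_pos fun i _ => by positivity

lemma multiFactorial_add_single (ν : σ →₀ ℕ) (i : σ) :
    multiFactorial (ν + Finsupp.single i 1) = multiFactorial ν * (ν i + 1) := by
  classical
  unfold multiFactorial
  rw [← Finset.mul_prod_erase _ _ (Finset.mem_univ i),
    ← Finset.mul_prod_erase _ (fun i => ((ν i).factorial : ℝ)) (Finset.mem_univ i)]
  have hrest : ∀ j ∈ Finset.univ.erase i,
      (((ν + Finsupp.single i 1 : σ →₀ ℕ) j).factorial : ℝ) = (ν j).factorial := by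
    intro j hj
    simp [(Finset.ne_of_mem_erase hj).symm]
  rw [Finset.prod_congr rfl hrest]
  simp only [Finsupp.coe_add, Pi.add_apply, Finsupp.single_eq_same, Nat.factorial_succ]
  push_cast
  ring

/-- The Fischer product, for which `∂ᵢ` is adjoint to multiplication by `xᵢ`. -/
def fischer : MvPolynomial σ ℝ →ₗ[ℝ] MvPolynomial σ ℝ →ₗ[ℝ] ℝ :=
  (basisMonomials σ ℝ).constr ℝ fun ν => multiFactorial ν • lcoeff (R := ℝ) ν

lemma fischer_monomial (ν : σ →₀ ℕ) (a : ℝ) (q : MvPolynomial σ ℝ) :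
    fischer (monomial ν a) q = a * multiFactorial ν * coeff ν q := by
  have h : monomial ν a = a • (basisMonomials σ ℝ) ν := by simp [smul_monomial]
  rw [h, map_smul, fischer, Module.Basis.constr_basis]
  simp only [LinearMap.smul_apply, lcoeff_apply, smul_eq_mul, mul_assoc]

lemma fischer_X_mul (i : σ) (p q : MvPolynomial σ ℝ) :
    fischer (X i * p) q = fischer p (pderiv i q) := by
  induction p using MvPolynomial.induction_on' with
  | add p r hp hr => simp only [mul_add, map_add, LinearMap.add_apply, hp, hr]
  | monomial ν a =>
    rw [X, monomial_mul, one_mul, add_comm, fischer_monomial, fischer_monomial,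
      multiFactorial_add_single, coeff_pderiv]
    ring

lemma fischer_symm (p q : MvPolynomial σ ℝ) : fischer p q = fischer q p := by
  classical
  induction p using MvPolynomial.induction_on' with
  | add p r hp hr => simp only [map_add, LinearMap.add_apply, hp, hr]
  | monomial ν a =>
    induction q using MvPolynomial.induction_on' with
    | add p r hp hr => simp only [map_add, LinearMap.add_apply, hp, hr]
    | monomial ν' b =>
      rw [fischer_monomial, fischer_monomial, coeff_monomial, coeff_monomial]
      by_cases h : ν = ν'
      · subst h; simp only [if_true]; ring
      · rw [if_neg (Ne.symm h), if_neg h]; ring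

lemma fischer_self (p : MvPolynomial σ ℝ) :
    fischer p p = ∑ ν ∈ p.support, multiFactorial ν * coeff ν p ^ 2 := by
  conv_lhs => enter [1]; rw [p.as_sum]
  rw [map_sum, LinearMap.sum_apply]
  exact Finset.sum_congr rfl fun ν _ => by rw [fischer_monomial]; ring

lemma fischer_self_nonneg (p : MvPolynomial σ ℝ) : 0 ≤ fischer p p := by
  rw [fischer_self]
  exact Finset.sum_nonneg fun ν _ => mul_nonneg (multiFactorial_pos ν).le (sq_nonneg _)

lemma eq_zero_of_fischer_self_eq_zero {p : MvPolynomial σ ℝ} (h : fischer p p = 0) : p = 0 := by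
  rw [fischer_self, Finset.sum_eq_zero_iff_of_nonneg
    fun ν _ => mul_nonneg (multiFactorial_pos ν).le (sq_nonneg _)] at h
  ext ν
  by_contra hne
  have hzero := h ν (mem_support_iff.2 hne)
  exact hne (pow_eq_zero_iff two_ne_zero |>.1
    ((mul_eq_zero.1 hzero).resolve_left (multiFactorial_pos ν).ne'))

/-- The Laplace operator. -/
def laplacian : MvPolynomial σ ℝ →ₗ[ℝ] MvPolynomial σ ℝ :=
  ∑ i, (pderiv i).toLinearMap ∘ₗ (pderiv i).toLinearMap

lemma laplacian_apply (q : MvPolynomial σ ℝ) : laplacian q = ∑ i, pderiv i (pderiv i q) := by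
  simp [laplacian]

/-- The polynomial `∑ xᵢ²`. -/
def normSqPoly : MvPolynomial σ ℝ := ∑ i, X i * X i

/-- The linear form `∑ aᵢ xᵢ`. -/
def linearForm (a : σ → ℝ) : MvPolynomial σ ℝ := ∑ i, C (a i) * X i

lemma fischer_normSqPoly_mul (p q : MvPolynomial σ ℝ) :
    fischer (normSqPoly * p) q = fischer p (laplacian q) := by
  rw [normSqPoly, Finset.sum_mul, map_sum, LinearMap.sum_apply, laplacian_apply, map_sum]
  exact Finset.sum_congr rfl fun i _ => by rw [mul_assoc, fischer_X_mul, fischer_X_mul]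

lemma fischer_linearForm_mul (a : σ → ℝ) (p q : MvPolynomial σ ℝ) :
    fischer (linearForm a * p) q = fischer p (∑ i, a i • pderiv i q) := by
  rw [linearForm, Finset.sum_mul, map_sum, LinearMap.sum_apply, map_sum]
  refine Finset.sum_congr rfl fun i _ => ?_
  rw [mul_assoc, ← smul_eq_C_mul, map_smul, LinearMap.smul_apply, fischer_X_mul, map_smul]

lemma fischer_linearForm_pow (a : σ → ℝ) (k : ℕ) (q : MvPolynomial σ ℝ)
    (hq : q.IsHomogeneous k) :
    fischer (linearForm a ^ k) q = (k.factorial : ℝ) * eval a q := by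
  induction k generalizing q with
  | zero =>
    have hconst := totalDegree_eq_zero_iff_eq_C.1 (Nat.le_zero.1 hq.totalDegree_le)
    rw [pow_zero, show (1 : MvPolynomial σ ℝ) = monomial 0 1 from rfl, fischer_monomial, hconst]
    simp [multiFactorial]
  | succ k ih =>
    have hhom : (∑ i, a i • pderiv i q).IsHomogeneous k := by
      refine IsHomogeneous.sum _ _ _ fun i _ => ?_
      simpa [smul_eq_C_mul] using (isHomogeneous_C σ (a i)).mul (hq.pderiv (i := i))
    have heuler := congrArg (eval a) hq.sum_X_mul_pderiv
    simp only [map_sum, map_mul, eval_X, nsmul_eq_mul, map_natCast] at heuler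
    rw [pow_succ', fischer_linearForm_mul, ih _ hhom]
    simp only [map_sum, smul_eval]
    rw [heuler, Nat.factorial_succ]
    push_cast
    ring

lemma pderiv_linearForm (a : σ → ℝ) (i : σ) : pderiv i (linearForm a) = C (a i) := by
  simp only [linearForm, map_sum, pderiv_C_mul]
  rw [Finset.sum_eq_single i (fun j _ hj => by rw [pderiv_X_of_ne hj, mul_zero]) (by simp)]
  simp

lemma pderiv_normSqPoly (i : σ) : pderiv i (normSqPoly : MvPolynomial σ ℝ) = 2 * X i := by
  simp only [normSqPoly, map_sum, pderiv_mul]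
  rw [Finset.sum_eq_single i (fun j _ hj => by rw [pderiv_X_of_ne hj]; ring) (by simp),
    pderiv_X_self]
  ring

lemma pderiv_linearForm_pow_mul_normSqPoly_pow (x : σ → ℝ) (a j : ℕ) (i : σ) :
    pderiv i (linearForm x ^ a * normSqPoly ^ j) =
      C (x i) * (C (a : ℝ) * (linearForm x ^ (a - 1) * normSqPoly ^ j)) +
        X i * (C (2 * (j : ℝ)) * (linearForm x ^ a * normSqPoly ^ (j - 1))) := by
  rw [pderiv_mul, pderiv_pow, pderiv_pow, pderiv_linearForm, pderiv_normSqPoly, C_mul,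
    map_natCast, map_natCast, map_ofNat]
  ring

lemma laplacian_linearForm_pow_mul_normSqPoly_pow {x : σ → ℝ} (hx : x ⬝ᵥ x = 1) (a j : ℕ) :
    laplacian (linearForm x ^ a * normSqPoly ^ j) =
      C ((a : ℝ) * (a - 1)) * (linearForm x ^ (a - 2) * normSqPoly ^ j) +
        C (2 * (j : ℝ) * (2 * a + 2 * j + Fintype.card σ - 2)) *
          (linearForm x ^ a * normSqPoly ^ (j - 1)) := by
  have hsecond (i : σ) : pderiv i (pderiv i (linearForm x ^ a * normSqPoly ^ j)) =
      C (x i * x i) * (C ((a : ℝ) * (a - 1 : ℕ)) * linearForm x ^ (a - 1 - 1) * normSqPoly ^ j)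
      + C (x i) * X i * (C (4 * (a : ℝ) * j) * linearForm x ^ (a - 1) * normSqPoly ^ (j - 1))
      + 1 * (C (2 * (j : ℝ)) * linearForm x ^ a * normSqPoly ^ (j - 1))
      + X i * X i *
        (C (4 * (j : ℝ) * (j - 1 : ℕ)) * linearForm x ^ a * normSqPoly ^ (j - 1 - 1)) := by
    simp only [pderiv_linearForm_pow_mul_normSqPoly_pow, map_add, pderiv_C_mul,
      pderiv_mul (f := X i), pderiv_X_self]
    simp only [map_mul, map_natCast, map_ofNat]
    ring
  rw [laplacian_apply, Finset.sum_congr rfl fun i _ => hsecond i]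
  simp only [Finset.sum_add_distrib]
  rw [← Finset.sum_mul, ← Finset.sum_mul, ← Finset.sum_mul, ← Finset.sum_mul, ← map_sum,
    show ∑ i, x i * x i = 1 from hx, show ∑ i, C (x i) * X i = linearForm x from rfl,
    show ∑ i : σ, (X i : MvPolynomial σ ℝ) * X i = normSqPoly from rfl, Finset.sum_const,
    Finset.card_univ]
  rcases a with _ | _ | a <;> rcases j with _ | _ | j <;>
  · simp only [Nat.add_sub_cancel, Nat.zero_sub, zero_add, Nat.sub_self, nsmul_eq_mul]
    push_cast
    simp only [map_add, map_sub, map_mul, map_ofNat, map_natCast, C_1, C_0]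
    ring

end Fischer

section ZonalHarmonics
open MvPolynomial

variable {σ : Type*} [Fintype σ]

/-- The homogeneous polynomial that restricts on the unit sphere to the zonal harmonic
`y ↦ zonal k (x ⬝ᵥ y)`. -/
def zonalHarmonic (k : ℕ) (x : σ → ℝ) : MvPolynomial σ ℝ :=
  ∑ j ∈ Finset.range (k / 2 + 1), (zonal ((Fintype.card σ : ℝ) / 2) k).coeff (k - 2 * j) •
    (linearForm x ^ (k - 2 * j) * normSqPoly ^ j)

lemma isHomogeneous_linearForm (x : σ → ℝ) : (linearForm x).IsHomogeneous 1 :=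
  IsHomogeneous.sum _ _ _ fun i _ => by
    simpa using (isHomogeneous_C σ (x i)).mul (isHomogeneous_X ℝ i)

lemma isHomogeneous_normSqPoly : (normSqPoly : MvPolynomial σ ℝ).IsHomogeneous 2 :=
  IsHomogeneous.sum _ _ _ fun i _ => (isHomogeneous_X ℝ i).mul (isHomogeneous_X ℝ i)

lemma isHomogeneous_zonalHarmonic (k : ℕ) (x : σ → ℝ) : (zonalHarmonic k x).IsHomogeneous k := by
  refine IsHomogeneous.sum _ _ _ fun j hj => ?_
  have hjk : 2 * j ≤ k := by rw [Finset.mem_range] at hj; omega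
  rw [smul_eq_C_mul]
  have h := (isHomogeneous_C σ ((zonal ((Fintype.card σ : ℝ) / 2) k).coeff (k - 2 * j))).mul
    (((isHomogeneous_linearForm x).pow (k - 2 * j)).mul ((isHomogeneous_normSqPoly (σ := σ)).pow j))
  rwa [show 0 + (1 * (k - 2 * j) + 2 * j) = k by omega] at h

/-- The two terms of the Laplacian of consecutive summands cancel by the coefficient recurrence of
`zonal`. -/
lemma laplacian_zonalHarmonic (k : ℕ) {x : σ → ℝ} (hx : x ⬝ᵥ x = 1) :
    laplacian (zonalHarmonic k x) = 0 := by
  set c := (zonal ((Fintype.card σ : ℝ) / 2) k).coeff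
  set T : ℕ → MvPolynomial σ ℝ := fun j => if 2 * j ≤ k then
    C (c (k - 2 * j) * (2 * (j : ℝ) * (2 * (k - 2 * j : ℕ) + 2 * j + Fintype.card σ - 2))) *
      (linearForm x ^ (k - 2 * j) * normSqPoly ^ (j - 1)) else 0 with hT
  have hterm : ∀ j ∈ Finset.range (k / 2 + 1),
      laplacian (c (k - 2 * j) • (linearForm x ^ (k - 2 * j) * normSqPoly ^ j)) =
        -(T (j + 1) - T j) := by
    intro j hj
    rw [Finset.mem_range] at hj
    rw [map_smul, laplacian_linearForm_pow_mul_normSqPoly_pow hx, smul_eq_C_mul]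
    simp only [hT, if_pos (show 2 * j ≤ k by omega)]
    by_cases hjk : 2 * (j + 1) ≤ k
    · obtain ⟨a, ha⟩ : ∃ a, k = a + 2 * (j + 1) := ⟨k - 2 * (j + 1), by omega⟩
      have hrec := zonal_coeff_recurrence ((Fintype.card σ : ℝ) / 2) k a
      rw [if_pos hjk, show k - 2 * (j + 1) = a by omega, show k - 2 * j = a + 2 by omega,
        Nat.add_sub_cancel, Nat.add_sub_cancel]
      have hk : (k : ℝ) = a + 2 * (j + 1) := by exact_mod_cast ha
      have hcancel : c a * (2 * ((j + 1 : ℕ) : ℝ) *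
            (2 * (a : ℕ) + 2 * (j + 1 : ℕ) + Fintype.card σ - 2)) =
          -(c (a + 2) * (((a + 2 : ℕ) : ℝ) * (((a + 2 : ℕ) : ℝ) - 1))) := by
        rw [hk] at hrec
        push_cast
        linear_combination hrec
      rw [hcancel]
      simp only [C_mul, C_neg]
      ring
    · rw [if_neg hjk]
      obtain h | h : k - 2 * j = 0 ∨ k - 2 * j = 1 := by omega
      all_goals simp only [h, Nat.cast_zero, Nat.cast_one, zero_mul, sub_self, mul_zero, C_0, C_mul]
      all_goals ring
  rw [zonalHarmonic, map_sum, Finset.sum_congr rfl hterm, Finset.sum_neg_distrib,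
    Finset.sum_range_sub]
  simp only [hT]
  rw [if_neg (by omega)]
  simp

lemma eval_zonalHarmonic (k : ℕ) {x : σ → ℝ} (y : σ → ℝ) (hx : x ⬝ᵥ x = 1) :
    eval x (zonalHarmonic k y) = (zonal ((Fintype.card σ : ℝ) / 2) k).eval (x ⬝ᵥ y) := by
  have hlin : eval x (linearForm y) = x ⬝ᵥ y := by simp [linearForm, dotProduct, mul_comm]
  have hnorm : eval x normSqPoly = 1 :=
    (by simp [normSqPoly, dotProduct] : eval x normSqPoly = x ⬝ᵥ x).trans hx
  rw [eval_eq_sum_of_coeff_odd (zonal_coeff_eq_zero _ k), zonalHarmonic, map_sum]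
  refine Finset.sum_congr rfl fun j _ => ?_
  rw [smul_eval, map_mul, map_pow, map_pow, hlin, hnorm, one_pow, mul_one]

/-- Modulo `normSqPoly`, to which harmonic polynomials are orthogonal, `zonalHarmonic k x` is a
power of a linear form. -/
lemma fischer_zonalHarmonic (k : ℕ) {x y : σ → ℝ} (hx : x ⬝ᵥ x = 1) (hy : y ⬝ᵥ y = 1) :
    fischer (zonalHarmonic k x) (zonalHarmonic k y) =
      (zonal ((Fintype.card σ : ℝ) / 2) k).coeff k * (k.factorial : ℝ) *
        (zonal ((Fintype.card σ : ℝ) / 2) k).eval (x ⬝ᵥ y) := by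
  set c := (zonal ((Fintype.card σ : ℝ) / 2) k).coeff with hc
  have hsplit : zonalHarmonic k x = c k • linearForm x ^ k +
      normSqPoly * ∑ j ∈ Finset.range (k / 2), c (k - 2 * (j + 1)) •
        (linearForm x ^ (k - 2 * (j + 1)) * normSqPoly ^ j) := by
    rw [zonalHarmonic, Finset.sum_range_succ', Finset.mul_sum, add_comm]
    congr 1
    · simp [hc]
    · exact Finset.sum_congr rfl fun j _ => by rw [smul_eq_C_mul, smul_eq_C_mul, pow_succ]; ring
  rw [hsplit, map_add, LinearMap.add_apply, fischer_normSqPoly_mul, laplacian_zonalHarmonic k hy,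
    map_zero, add_zero, map_smul, LinearMap.smul_apply,
    fischer_linearForm_pow x k _ (isHomogeneous_zonalHarmonic k y), eval_zonalHarmonic k y hx,
    smul_eq_mul]
  ring

end ZonalHarmonics

section Harmonic
open MvPolynomial

variable (σ : Type*) [Fintype σ]

instance (σ : Type*) [Finite σ] (k : ℕ) : Module.Finite ℝ (homogeneousSubmodule σ ℝ k) :=
  Module.Finite.iff_fg.2 (homogeneousSubmodule_fg σ ℝ k)

lemma finrank_homogeneousSubmodule (k : ℕ) :
    Module.finrank ℝ (homogeneousSubmodule σ ℝ k) = (Fintype.card σ + k - 1).choose k := by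
  classical
  rw [homogeneousSubmodule_eq_finsupp_supported]
  refine (Module.finrank_eq_nat_card_basis
    (basisRestrictSupport ℝ {d : σ →₀ ℕ | d.degree = k})).trans ?_
  rw [← Finset.card_univ, ← Finset.card_finsuppAntidiag_nat_eq_choose,
    ← Nat.card_eq_fintype_card.trans (Fintype.card_coe _)]
  congr 2
  ext d
  simp [Finset.mem_finsuppAntidiag, Finsupp.degree_eq_sum]

/-- The space of harmonic homogeneous polynomials of degree `k`. -/
def harmonic (k : ℕ) : Submodule ℝ (MvPolynomial σ ℝ) :=
  homogeneousSubmodule σ ℝ k ⊓ LinearMap.ker laplacian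

instance (k : ℕ) : Module.Finite ℝ (harmonic σ k) := Submodule.finiteDimensional_inf_left _ _

lemma normSqPoly_ne_zero [Nonempty σ] : (normSqPoly : MvPolynomial σ ℝ) ≠ 0 := by
  intro h
  have heval : eval (fun _ => (1 : ℝ)) (normSqPoly : MvPolynomial σ ℝ) = Fintype.card σ := by
    simp [normSqPoly]
  rw [h, map_zero] at heval
  exact Fintype.card_ne_zero (Nat.cast_eq_zero.1 heval.symm)

/-- Harmonic polynomials meet the multiples of `normSqPoly` only in `0`. -/
lemma finrank_harmonic_add_two_add_choose_le [Nonempty σ] (k : ℕ) :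
    Module.finrank ℝ (harmonic σ (k + 2)) + (Fintype.card σ + k - 1).choose k ≤
      (Fintype.card σ + (k + 2) - 1).choose (k + 2) := by
  set R : Submodule ℝ (MvPolynomial σ ℝ) :=
    (homogeneousSubmodule σ ℝ k).map (LinearMap.mulLeft ℝ normSqPoly)
  have hinj : Function.Injective (LinearMap.mulLeft ℝ (normSqPoly : MvPolynomial σ ℝ)) :=
    fun p q hpq => mul_left_cancel₀ (normSqPoly_ne_zero σ) hpq
  have hrank : Module.finrank ℝ R = (Fintype.card σ + k - 1).choose k := by
    rw [← finrank_homogeneousSubmodule]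
    exact (Submodule.equivMapOfInjective _ hinj _).finrank_eq.symm
  have hinf : harmonic σ (k + 2) ⊓ R = ⊥ := by
    rw [eq_bot_iff]
    rintro _ ⟨hp, q, _, rfl⟩
    have hlap : laplacian (normSqPoly * q) = 0 := hp.2
    refine eq_zero_of_fischer_self_eq_zero (p := normSqPoly * q) ?_
    rw [fischer_normSqPoly_mul, hlap, map_zero]
  have hsup : harmonic σ (k + 2) ⊔ R ≤ homogeneousSubmodule σ ℝ (k + 2) := by
    refine sup_le inf_le_left ?_
    rintro _ ⟨q, hq, rfl⟩
    rw [add_comm]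
    exact (isHomogeneous_normSqPoly (σ := σ)).mul hq
  have hdim := Submodule.finrank_sup_add_finrank_inf_eq (harmonic σ (k + 2)) R
  rw [hinf, finrank_bot, add_zero, hrank] at hdim
  rw [← hdim, ← finrank_homogeneousSubmodule]
  exact Submodule.finrank_mono hsup

lemma finrank_harmonic_le_eval_one_zonal [Nonempty σ] (k : ℕ) :
    (Module.finrank ℝ (harmonic σ k) : ℝ) ≤ (zonal ((Fintype.card σ : ℝ) / 2) k).eval 1 := by
  obtain ⟨m, hm⟩ := Nat.exists_eq_add_of_lt (Fintype.card_pos (α := σ))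
  rw [zero_add] at hm
  have hchoose (k : ℕ) : (gegenbauer ((Fintype.card σ : ℝ) / 2) k).eval 1 =
      ((Fintype.card σ + k - 1).choose k : ℝ) := by
    rw [hm, eval_one_gegenbauer_half, show m + 1 + k - 1 = k + m by omega, Nat.choose_symm_add]
  have hle : Module.finrank ℝ (harmonic σ k) ≤ (Fintype.card σ + k - 1).choose k := by
    rw [← finrank_homogeneousSubmodule]
    exact Submodule.finrank_mono inf_le_left
  rcases k with _ | _ | k
  · rw [zonal, ← gegenbauer, hchoose]; exact_mod_cast hle
  · rw [zonal, hchoose]; exact_mod_cast hle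
  · rw [zonal, Polynomial.eval_sub, hchoose, hchoose, le_sub_iff_add_le]
    exact_mod_cast finrank_harmonic_add_two_add_choose_le σ k

end Harmonic

section Features

lemma exists_bilin_eq_sum_mul {V : Type*} [AddCommGroup V] [Module ℝ V] [FiniteDimensional ℝ V]
    {B : LinearMap.BilinForm ℝ V} (hsymm : LinearMap.IsSymm B) (hpos : ∀ p, 0 ≤ B p p) :
    ∃ φ : Fin (Module.finrank ℝ V) → V → ℝ, ∀ p q, B p q = ∑ a, φ a p * φ a q := by
  obtain ⟨v, hv⟩ := LinearMap.BilinForm.exists_orthogonal_basis hsymm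
  refine ⟨fun a p => √(B (v a) (v a)) * v.repr p a, fun p q => ?_⟩
  conv_lhs => rw [← v.sum_repr p, ← v.sum_repr q]
  rw [LinearMap.BilinForm.sum_left]
  refine Finset.sum_congr rfl fun a _ => ?_
  rw [map_sum, Finset.sum_eq_single a _ (by simp)]
  · simp only [map_smul, LinearMap.smul_apply, smul_eq_mul]
    linear_combination -(v.repr p a * v.repr q a) * Real.mul_self_sqrt (hpos (v a))
  · intro b _ hb
    have hab : B (v a) (v b) = 0 := hv hb.symm
    simp [hab]

lemma exists_zonal_dotProduct_eq_sum_mul (σ : Type*) [Fintype σ] [Nonempty σ] (k : ℕ) :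
    ∃ (N : ℕ) (e : Fin N → (σ → ℝ) → ℝ), (N : ℝ) ≤ (zonal ((Fintype.card σ : ℝ) / 2) k).eval 1 ∧
      ∀ x y : σ → ℝ, x ⬝ᵥ x = 1 → y ⬝ᵥ y = 1 →
        (zonal ((Fintype.card σ : ℝ) / 2) k).eval (x ⬝ᵥ y) = ∑ a, e a x * e a y := by
  classical
  set c := (zonal ((Fintype.card σ : ℝ) / 2) k).coeff k * (k.factorial : ℝ)
  have hc : 0 < c := mul_pos (zonal_coeff_self_pos (by positivity) k) (by positivity)
  let B : LinearMap.BilinForm ℝ (harmonic σ k) :=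
    c⁻¹ • fischer.domRestrict₁₂ (harmonic σ k) (harmonic σ k)
  have hB (p q : harmonic σ k) : B p q = c⁻¹ * fischer (p : MvPolynomial σ ℝ) q := rfl
  obtain ⟨φ, hφ⟩ := exists_bilin_eq_sum_mul (B := B)
    ⟨fun p q => by simp only [hB]; rw [fischer_symm]; rfl⟩
    fun p => mul_nonneg (inv_nonneg.2 hc.le) (fischer_self_nonneg _)
  let z (x : σ → ℝ) (hx : x ⬝ᵥ x = 1) : harmonic σ k :=
    ⟨zonalHarmonic k x, isHomogeneous_zonalHarmonic k x, laplacian_zonalHarmonic k hx⟩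
  refine ⟨_, fun a x => if hx : x ⬝ᵥ x = 1 then φ a (z x hx) else 0,
    finrank_harmonic_le_eval_one_zonal σ k, fun x y hx hy => ?_⟩
  simp only [dif_pos hx, dif_pos hy]
  rw [← hφ, hB, fischer_zonalHarmonic k hx hy, inv_mul_cancel_left₀ hc.ne']

lemma exists_zonal_inner_eq_sum_mul (E : Type*) [NormedAddCommGroup E] [InnerProductSpace ℝ E]
    [FiniteDimensional ℝ E] [Nontrivial E] (k : ℕ) :
    ∃ (N : ℕ) (e : Fin N → E → ℝ), (N : ℝ) ≤ (zonal ((Module.finrank ℝ E : ℝ) / 2) k).eval 1 ∧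
      ∀ x y : E, ‖x‖ = 1 → ‖y‖ = 1 →
        (zonal ((Module.finrank ℝ E : ℝ) / 2) k).eval ⟪x, y⟫ = ∑ a, e a x * e a y := by
  let b := stdOrthonormalBasis ℝ E
  have : Nonempty (Fin (Module.finrank ℝ E)) := ⟨⟨0, Module.finrank_pos⟩⟩
  have hdot (x y : E) : (b.repr x).ofLp ⬝ᵥ (b.repr y).ofLp = ⟪x, y⟫ := by
    rw [← b.repr.inner_map_map, EuclideanSpace.inner_eq_star_dotProduct, star_trivial,
      dotProduct_comm]
  have hunit (x : E) (hx : ‖x‖ = 1) : (b.repr x).ofLp ⬝ᵥ (b.repr x).ofLp = 1 := by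
    rw [hdot, real_inner_self_eq_norm_sq, hx, one_pow]
  obtain ⟨N, e, hN, he⟩ := exists_zonal_dotProduct_eq_sum_mul (Fin (Module.finrank ℝ E)) k
  rw [Fintype.card_fin] at hN he
  refine ⟨N, fun a x => e a (b.repr x).ofLp, hN, fun x y hx hy => ?_⟩
  rw [← hdot, he _ _ (hunit x hx) (hunit y hy)]

end Features

section LinearProgramming
open Polynomial

variable {E ι : Type*} [NormedAddCommGroup E] [InnerProductSpace ℝ E] [Fintype ι]

/-- The quadratic form `∑ᵢ ∑ⱼ fᵢ fⱼ p ⟪vᵢ, vⱼ⟫` of weights `f` on vectors `v`, as a linear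
functional of the polynomial kernel `p`. -/
def kernelForm (f : ι → ℝ) (v : ι → E) : ℝ[X] →ₗ[ℝ] ℝ :=
  ∑ i, ∑ j, (f i * f j) • leval ⟪v i, v j⟫

lemma kernelForm_apply (f : ι → ℝ) (v : ι → E) (p : ℝ[X]) :
    kernelForm f v p = ∑ i, ∑ j, f i * f j * p.eval ⟪v i, v j⟫ := by
  simp [kernelForm, LinearMap.sum_apply, leval]

variable {f : ι → ℝ} {v : ι → E}

lemma kernelForm_eq_sum_sq {κ : Type*} [Fintype κ] (hv : ∀ i, f i ≠ 0 → ‖v i‖ = 1) {p : ℝ[X]}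
    {e : κ → E → ℝ}
    (he : ∀ x y : E, ‖x‖ = 1 → ‖y‖ = 1 → p.eval ⟪x, y⟫ = ∑ a, e a x * e a y) :
    kernelForm f v p = ∑ a, (∑ i, f i * e a (v i)) ^ 2 := by
  have hterm (i j : ι) :
      f i * f j * p.eval ⟪v i, v j⟫ = ∑ a, (f i * e a (v i)) * (f j * e a (v j)) := by
    by_cases hi : f i = 0
    · simp [hi]
    by_cases hj : f j = 0
    · simp [hj]
    rw [he _ _ (hv i hi) (hv j hj), Finset.mul_sum]
    exact Finset.sum_congr rfl fun a _ => by ring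
  simp_rw [kernelForm_apply, hterm, pow_two, Finset.sum_mul_sum]
  rw [Finset.sum_comm (s := (Finset.univ : Finset κ))]
  exact Finset.sum_congr rfl fun i _ => Finset.sum_comm

variable [FiniteDimensional ℝ E] [Nontrivial E]

local notation "μE" => ((Module.finrank ℝ E : ℝ) / 2)

lemma kernelForm_zonal_mul_zonal_nonneg (hv : ∀ i, f i ≠ 0 → ‖v i‖ = 1) (j k : ℕ) :
    0 ≤ kernelForm f v (zonal μE j * zonal μE k) := by
  obtain ⟨N, e, -, he⟩ := exists_zonal_inner_eq_sum_mul E j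
  obtain ⟨N', e', -, he'⟩ := exists_zonal_inner_eq_sum_mul E k
  rw [kernelForm_eq_sum_sq (e := fun (a : Fin N × Fin N') x => e a.1 x * e' a.2 x) hv]
  · positivity
  · intro x y hx hy
    rw [eval_mul, he x y hx hy, he' x y hx hy, Finset.sum_mul_sum, Fintype.sum_prod_type]
    exact Finset.sum_congr rfl fun a _ => Finset.sum_congr rfl fun b _ => by ring

/-- Only the diagonal features `e a * e a` of the square of the zonal kernel are kept; they add up
to its value at `1`, so Cauchy–Schwarz applies. -/
lemma eval_one_mul_sq_sum_le_kernelForm_zonal_sq (hv : ∀ i, f i ≠ 0 → ‖v i‖ = 1) (k : ℕ) :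
    (zonal μE k).eval 1 * (∑ i, f i) ^ 2 ≤ kernelForm f v (zonal μE k * zonal μE k) := by
  obtain ⟨N, e, hN, he⟩ := exists_zonal_inner_eq_sum_mul E k
  rw [kernelForm_eq_sum_sq (e := fun (a : Fin N × Fin N) x => e a.1 x * e a.2 x) hv]
  swap
  · intro x y hx hy
    rw [eval_mul, he x y hx hy, Finset.sum_mul_sum, Fintype.sum_prod_type]
    exact Finset.sum_congr rfl fun a _ => Finset.sum_congr rfl fun b _ => by ring
  set z := (zonal μE k).eval 1
  set D : Fin N → ℝ := fun a => ∑ i, f i * (e a (v i) * e a (v i))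
  have hz : 0 ≤ z := (Nat.cast_nonneg N).trans hN
  have htrace : z * ∑ i, f i = ∑ a, D a := by
    rw [Finset.sum_comm, Finset.mul_sum]
    refine Finset.sum_congr rfl fun i _ => ?_
    by_cases hi : f i = 0
    · simp [hi]
    have hself := he _ _ (hv i hi) (hv i hi)
    rw [real_inner_self_eq_norm_sq, hv i hi, one_pow] at hself
    rw [← Finset.mul_sum, ← hself, mul_comm]
  have hcauchy : (z * ∑ i, f i) ^ 2 ≤ z * ∑ a, D a ^ 2 := by
    rw [htrace]
    refine (sq_sum_le_card_mul_sum_sq (s := Finset.univ) (f := D)).trans ?_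
    rw [Finset.card_univ, Fintype.card_fin]
    gcongr
  have hdiag :
      ∑ a, D a ^ 2 ≤ ∑ a : Fin N × Fin N, (∑ i, f i * (e a.1 (v i) * e a.2 (v i))) ^ 2 := by
    rw [Fintype.sum_prod_type]
    exact Finset.sum_le_sum fun a _ => Finset.single_le_sum
      (f := fun b => (∑ i, f i * (e a (v i) * e b (v i))) ^ 2)
      (fun b _ => sq_nonneg _) (Finset.mem_univ a)
  refine le_trans ?_ hdiag
  rcases hz.eq_or_lt with hz0 | hz0
  · rw [← hz0, zero_mul]
    positivity
  · exact le_of_mul_le_mul_left (by nlinarith) hz0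

lemma eval_one_zonal_mul_sq_sum_le_kernelForm (hv : ∀ i, f i ≠ 0 → ‖v i‖ = 1) (ε : Parity)
    {d k : ℕ} (hk : k ≤ d) : (zonal μE k).eval 1 * (∑ i, f i) ^ 2 ≤
      kernelForm f v (levenshteinFactor μE ε d * zonal μE k) := by
  have hμ : 0 < μE := by have := Module.finrank_pos (R := ℝ) (M := E); positivity
  obtain ⟨γ, hγ, hfactor⟩ := levenshteinFactor_eq_add_zonal hμ ε d
  rw [hfactor, add_mul, map_add, gegenbauerPair_eq_sum_zonal, Finset.sum_mul, map_sum, mul_assoc,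
    ← smul_eq_C_mul, map_smul, smul_eq_mul]
  have hsquare := eval_one_mul_sq_sum_le_kernelForm_zonal_sq hv k
  have hlast := mul_nonneg hγ (kernelForm_zonal_mul_zonal_nonneg hv (d + 1) k)
  have hsum := Finset.single_le_sum (s := Finset.range (d + 1))
    (f := fun j => kernelForm f v (zonal μE j * zonal μE k))
    (fun j _ => kernelForm_zonal_mul_zonal_nonneg hv j k) (Finset.mem_range_succ_iff.2 hk)
  linarith

lemma eval_one_gegenbauer_mul_sq_sum_le_kernelForm (hv : ∀ i, f i ≠ 0 → ‖v i‖ = 1) (ε : Parity)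
    {d k : ℕ} (hk : k ≤ d) : (gegenbauer μE k).eval 1 * (∑ i, f i) ^ 2 ≤
      kernelForm f v (levenshteinFactor μE ε d * gegenbauer μE k) := by
  induction k using Nat.twoStepInduction with
  | zero => exact eval_one_zonal_mul_sq_sum_le_kernelForm hv ε hk
  | one => exact eval_one_zonal_mul_sq_sum_le_kernelForm hv ε hk
  | more k ih _ =>
    have hsplit : gegenbauer μE (k + 2) = zonal μE (k + 2) + gegenbauer μE k := by
      rw [zonal]; ring
    rw [hsplit, eval_add, mul_add, map_add]
    linarith [ih (by omega), eval_one_zonal_mul_sq_sum_le_kernelForm hv ε hk]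

lemma eval_one_adjacent_mul_sq_sum_le_kernelForm (hv : ∀ i, f i ≠ 0 → ‖v i‖ = 1) (ε : Parity)
    {d k : ℕ} (hk : k ≤ d) : (adjacent μE ε k).eval 1 * (∑ i, f i) ^ 2 ≤
      kernelForm f v (levenshteinFactor μE ε d * adjacent μE ε k) := by
  cases ε with
  | even => exact eval_one_gegenbauer_mul_sq_sum_le_kernelForm hv .even hk
  | odd =>
    rcases k with _ | k
    · exact eval_one_zonal_mul_sq_sum_le_kernelForm hv .odd hk
    · rw [adjacent, gegenbauerPair, eval_add, mul_add, map_add]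
      linarith [eval_one_gegenbauer_mul_sq_sum_le_kernelForm hv .odd hk,
        eval_one_gegenbauer_mul_sq_sum_le_kernelForm hv .odd (d := d) (k := k) (by omega)]

lemma eval_one_mul_sq_sum_le_kernelForm (hv : ∀ i, f i ≠ 0 → ‖v i‖ = 1) (ε : Parity) {d : ℕ}
    {w : ℕ → ℝ} (hw : ∀ i < d, 0 ≤ w i) :
    (∑ i ∈ Finset.range d, C (w i) * adjacent μE ε i).eval 1 * (∑ i, f i) ^ 2 ≤
      kernelForm f v (levenshteinFactor μE ε d *
        ∑ i ∈ Finset.range d, C (w i) * adjacent μE ε i) := by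
  rw [eval_finsetSum, Finset.mul_sum, map_sum, Finset.sum_mul]
  refine Finset.sum_le_sum fun k hk => ?_
  have hkd := Finset.mem_range.1 hk
  rw [eval_mul, eval_C, mul_left_comm, ← smul_eq_C_mul, map_smul, smul_eq_mul, mul_assoc]
  exact mul_le_mul_of_nonneg_left (eval_one_adjacent_mul_sq_sum_le_kernelForm hv ε hkd.le)
    (hw k hkd)

end LinearProgramming

section HyperplaneLinearProgramming
open Polynomial

theorem eval_one_mul_sq_sum_le_sum_of_inner_eq_zero {E ι : Type*} [NormedAddCommGroup E]
    [InnerProductSpace ℝ E] [Fintype ι] {m : ℕ} [NeZero m]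
    (hE : Module.finrank ℝ E = m + 1) {z : E} (hz : z ≠ 0) {f : ι → ℝ} {v : ι → E}
    (hvz : ∀ i, ⟪z, v i⟫ = 0) (hv : ∀ i, f i ≠ 0 → ‖v i‖ = 1) (ε : Parity) {d : ℕ} {w : ℕ → ℝ}
    (hw : ∀ i < d, 0 ≤ w i) :
    (∑ i ∈ Finset.range d, C (w i) * adjacent ((m : ℝ) / 2) ε i).eval 1 * (∑ i, f i) ^ 2 ≤
      ∑ i, ∑ j, f i * f j * (levenshteinFactor ((m : ℝ) / 2) ε d *
        ∑ i ∈ Finset.range d, C (w i) * adjacent ((m : ℝ) / 2) ε i).eval ⟪v i, v j⟫ := by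
  have : Fact (Module.finrank ℝ E = m + 1) := ⟨hE⟩
  have : FiniteDimensional ℝ E := .of_finrank_eq_succ hE
  have hdim : Module.finrank ℝ (ℝ ∙ z)ᗮ = m := Submodule.finrank_orthogonal_span_singleton hz
  have : Nontrivial (ℝ ∙ z)ᗮ := Module.nontrivial_of_finrank_pos (R := ℝ)
    (hdim ▸ Nat.pos_of_ne_zero (NeZero.ne m))
  let u : ι → (ℝ ∙ z)ᗮ := fun i =>
    ⟨v i, Submodule.mem_orthogonal_singleton_iff_inner_right.2 (hvz i)⟩
  have hu : ∀ i, f i ≠ 0 → ‖u i‖ = 1 := hv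
  have hbound := eval_one_mul_sq_sum_le_kernelForm hu ε hw
  rwa [hdim, kernelForm_apply] at hbound

end HyperplaneLinearProgramming

section PolarCoordinates
open scoped ENNReal

lemma lintegral_fun_norm {E : Type*} [NormedAddCommGroup E] [NormedSpace ℝ E] [Nontrivial E]
    [FiniteDimensional ℝ E] [MeasurableSpace E] [BorelSpace E] (μ : Measure E)
    [μ.IsAddHaarMeasure] {f : ℝ → ℝ≥0∞} (hf : Measurable f) :
    ∫⁻ x, f ‖x‖ ∂μ = μ.toSphere Set.univ *
      ∫⁻ y in Set.Ioi (0 : ℝ), ENNReal.ofReal (y ^ (Module.finrank ℝ E - 1)) * f y := by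
  calc
    ∫⁻ x, f ‖x‖ ∂μ = ∫⁻ x : ({(0)}ᶜ : Set E), f ‖x.1‖ ∂(μ.comap (↑)) := by
      rw [lintegral_subtype_comap (measurableSet_singleton _).compl fun x => f ‖x‖,
        restrict_compl_singleton]
    _ = ∫⁻ x, f x.2 ∂μ.toSphere.prod (.volumeIoiPow (Module.finrank ℝ E - 1)) := by
      simpa using μ.measurePreserving_homeomorphUnitSphereProd.lintegral_comp
        (f := fun x : Metric.sphere (0 : E) 1 × Set.Ioi (0 : ℝ) => f x.2) (by fun_prop)
    _ = μ.toSphere Set.univ *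
        ∫⁻ x : Set.Ioi (0 : ℝ), f x ∂.volumeIoiPow (Module.finrank ℝ E - 1) := by
      rw [lintegral_prod _ (by fun_prop)]
      simp [mul_comm]
    _ = _ := by
      rw [Measure.volumeIoiPow, lintegral_withDensity_eq_lintegral_mul _ (by fun_prop)
        (by fun_prop)]
      congr 1
      exact lintegral_subtype_comap measurableSet_Ioi
        fun x => ENNReal.ofReal (x ^ (Module.finrank ℝ E - 1)) * f x

lemma sqrt_sq_sub_image_Ioi {p : ℝ} (hp : 0 ≤ p) :
    (fun R : ℝ => √(R ^ 2 - p ^ 2)) '' Set.Ioi p = Set.Ioi 0 := by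
  ext y
  simp only [Set.mem_image, Set.mem_Ioi]
  constructor
  · rintro ⟨R, hR, rfl⟩
    exact Real.sqrt_pos.2 (by nlinarith)
  · intro hy
    refine ⟨√(p ^ 2 + y ^ 2), Real.lt_sqrt_of_sq_lt (by nlinarith), ?_⟩
    rw [Real.sq_sqrt (by positivity), add_sub_cancel_left, Real.sqrt_sq hy.le]

lemma lintegral_Ioi_comp_sqrt {p : ℝ} (hp : 0 ≤ p) {l : ℕ} (hl : l ≠ 0) (ψ : ℝ → ℝ≥0∞) :
    ∫⁻ y in Set.Ioi (0 : ℝ), ENNReal.ofReal (y ^ (l + 1)) * ψ √(p ^ 2 + y ^ 2) =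
      ∫⁻ R in Set.Ioi 0, ENNReal.ofReal (R * √(R ^ 2 - p ^ 2) ^ l) * ψ R := by
  have hderiv : ∀ R ∈ Set.Ioi p, HasDerivWithinAt (fun R : ℝ => √(R ^ 2 - p ^ 2))
      (R / √(R ^ 2 - p ^ 2)) (Set.Ioi p) R := fun R (hR : p < R) => by
    have hpos : 0 < R ^ 2 - p ^ 2 := by nlinarith
    have h := ((hasDerivAt_pow 2 R).sub_const (p ^ 2)).sqrt hpos.ne'
    refine (h.congr_deriv ?_).hasDerivWithinAt
    rw [Nat.cast_ofNat, pow_one, mul_div_mul_left _ _ two_ne_zero]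
  have hmono : MonotoneOn (fun R : ℝ => √(R ^ 2 - p ^ 2)) (Set.Ioi p) :=
    fun R (hR : p < R) _ _ h => Real.sqrt_le_sqrt (by nlinarith)
  have hsupport : (fun R => ENNReal.ofReal (R * √(R ^ 2 - p ^ 2) ^ l) * ψ R).support ⊆
      Set.Ioi p := fun R hR => by
    by_contra hRp
    have hRp : R ≤ p := not_lt.1 hRp
    refine hR (mul_eq_zero_of_left (ENNReal.ofReal_of_nonpos ?_) _)
    rcases le_total R 0 with hR0 | hR0
    · exact mul_nonpos_of_nonpos_of_nonneg hR0 (by positivity)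
    · rw [Real.sqrt_eq_zero_of_nonpos (by nlinarith), zero_pow hl, mul_zero]
  rw [← setLIntegral_eq_of_support_subset (μ := volume.restrict (Set.Ioi 0)) hsupport]
  rw [Measure.restrict_restrict_of_subset (Set.Ioi_subset_Ioi hp), ← sqrt_sq_sub_image_Ioi hp,
    lintegral_image_eq_lintegral_deriv_mul_of_monotoneOn measurableSet_Ioi hderiv hmono]
  refine setLIntegral_congr_fun measurableSet_Ioi fun R (hR : p < R) => ?_
  have hpos : 0 < R ^ 2 - p ^ 2 := by nlinarith
  simp only [Real.sq_sqrt hpos.le, add_sub_cancel, Real.sqrt_sq (hp.trans hR.le)]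
  rw [← mul_assoc, ← ENNReal.ofReal_mul (by have := hp.trans_lt hR; positivity), pow_succ]
  congr 2
  have hsqrt := (Real.sqrt_pos.2 hpos).ne'
  field_simp
  ring

lemma lintegral_comp_inv_smul {E : Type*} [NormedAddCommGroup E] [InnerProductSpace ℝ E]
    [FiniteDimensional ℝ E] [MeasurableSpace E] [BorelSpace E] {h : E → ℝ≥0∞}
    (hh : Measurable h) {R : ℝ} (hR : 0 < R) :
    ∫⁻ p, h (R⁻¹ • p) = ENNReal.ofReal (R ^ Module.finrank ℝ E) * ∫⁻ q, h q := by
  have hmap := lintegral_map (μ := (volume : Measure E)) hh (measurable_const_smul R⁻¹)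
  rw [Measure.map_addHaar_smul _ (inv_ne_zero hR.ne'), lintegral_smul_measure, smul_eq_mul,
    ← inv_pow, inv_inv, abs_of_pos (by positivity)] at hmap
  exact hmap.symm

/-- Up to normalization, the density of the projection to `E` of a uniform point of the sphere of
a space that contains `E` with codimension `l + 2`; the square root vanishes off the unit ball. -/
def projectionDensity {E : Type*} [NormedAddCommGroup E] (l : ℕ) (p : E) : ℝ≥0∞ :=
  ENNReal.ofReal (√(1 - ‖p‖ ^ 2) ^ l)

@[fun_prop]
lemma measurable_projectionDensity {E : Type*} [NormedAddCommGroup E] [MeasurableSpace E]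
    [BorelSpace E] (l : ℕ) : Measurable (projectionDensity l : E → ℝ≥0∞) := by
  unfold projectionDensity
  fun_prop

lemma ofReal_mul_sqrt_pow_eq {E : Type*} [NormedAddCommGroup E] [NormedSpace ℝ E] {R : ℝ}
    (hR : 0 < R) (l : ℕ) (p : E) :
    ENNReal.ofReal (R * √(R ^ 2 - ‖p‖ ^ 2) ^ l) =
      ENNReal.ofReal (R ^ (l + 1)) * projectionDensity l (R⁻¹ • p) := by
  have hfactor : R ^ 2 - ‖p‖ ^ 2 = R ^ 2 * (1 - ‖R⁻¹ • p‖ ^ 2) := by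
    rw [norm_smul, norm_inv, Real.norm_of_nonneg hR.le]
    field_simp
  rw [projectionDensity, ← ENNReal.ofReal_mul (by positivity), hfactor,
    Real.sqrt_mul (by positivity), Real.sqrt_sq hR.le, mul_pow, pow_succ']
  congr 1
  ring

variable {E : Type*} [NormedAddCommGroup E] [InnerProductSpace ℝ E] [FiniteDimensional ℝ E]
  [MeasurableSpace E] [BorelSpace E]

lemma lintegral_prod_radial {W : Type*} [NormedAddCommGroup W] [InnerProductSpace ℝ W]
    [FiniteDimensional ℝ W] [MeasurableSpace W] [BorelSpace W] {l : ℕ} (hl : l ≠ 0)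
    (hW : Module.finrank ℝ W = l + 2) {ψ : ℝ → ℝ≥0∞} (hψ : Measurable ψ) {Φ : E → ℝ≥0∞}
    (hΦ : Measurable Φ) :
    ∫⁻ z : E × W, ψ √(‖z.1‖ ^ 2 + ‖z.2‖ ^ 2) * Φ ((√(‖z.1‖ ^ 2 + ‖z.2‖ ^ 2))⁻¹ • z.1) =
      (volume : Measure W).toSphere Set.univ * ((∫⁻ R in Set.Ioi (0 : ℝ),
        ψ R * ENNReal.ofReal (R ^ (l + 1)) * ENNReal.ofReal (R ^ Module.finrank ℝ E)) *
        ∫⁻ q : E, projectionDensity l q * Φ q) := by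
  have : Nontrivial W := Module.nontrivial_of_finrank_pos (R := ℝ) (by omega)
  have hdensity : Measurable (fun q : E => projectionDensity l q * Φ q) :=
    (measurable_projectionDensity l).mul hΦ
  have hfiber (p : E) :
      ∫⁻ w : W, ψ √(‖p‖ ^ 2 + ‖w‖ ^ 2) * Φ ((√(‖p‖ ^ 2 + ‖w‖ ^ 2))⁻¹ • p) =
        (volume : Measure W).toSphere Set.univ * ∫⁻ R in Set.Ioi (0 : ℝ),
          ENNReal.ofReal (R * √(R ^ 2 - ‖p‖ ^ 2) ^ l) * (ψ R * Φ (R⁻¹ • p)) := by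
    rw [lintegral_fun_norm volume
      (f := fun y => ψ √(‖p‖ ^ 2 + y ^ 2) * Φ ((√(‖p‖ ^ 2 + y ^ 2))⁻¹ • p)) (by fun_prop),
      ← lintegral_Ioi_comp_sqrt (norm_nonneg p) hl fun R => ψ R * Φ (R⁻¹ • p), hW]
    rfl
  have hshell {R : ℝ} (hR : 0 < R) :
      ∫⁻ p : E, ENNReal.ofReal (R * √(R ^ 2 - ‖p‖ ^ 2) ^ l) * (ψ R * Φ (R⁻¹ • p)) =
        ψ R * ENNReal.ofReal (R ^ (l + 1)) * ENNReal.ofReal (R ^ Module.finrank ℝ E) *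
          ∫⁻ q : E, projectionDensity l q * Φ q := by
    simp_rw [ofReal_mul_sqrt_pow_eq hR]
    rw [mul_assoc _ (ENNReal.ofReal _) (lintegral _ _), ← lintegral_comp_inv_smul hdensity hR,
      ← lintegral_const_mul _ (by fun_prop)]
    exact lintegral_congr fun p => by ring
  rw [Measure.volume_eq_prod, lintegral_prod _ (by fun_prop)]
  simp_rw [hfiber]
  rw [lintegral_const_mul _ (by fun_prop), lintegral_lintegral_swap (by fun_prop),
    ← lintegral_mul_const _ (by fun_prop)]
  congr 1
  exact setLIntegral_congr_fun measurableSet_Ioi fun R hR => hshell hR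

theorem exists_lintegral_projection (K : Submodule ℝ E) {l : ℕ} (hl : l ≠ 0)
    (hK : Module.finrank ℝ Kᗮ = l + 2) : ∃ C : ℝ≥0∞, ∀ Φ : K → ℝ≥0∞, Measurable Φ →
      ∫⁻ z in Metric.ball (0 : E) 1, Φ (‖z‖⁻¹ • K.orthogonalProjectionOnto z) =
        C * ∫⁻ q : K, projectionDensity l q * Φ q := by
  refine ⟨(volume : Measure Kᗮ).toSphere Set.univ * ∫⁻ R in Set.Ioi (0 : ℝ),
    Set.indicator (Set.Iio 1) 1 R * ENNReal.ofReal (R ^ (l + 1)) *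
      ENNReal.ofReal (R ^ Module.finrank ℝ K), fun Φ hΦ => ?_⟩
  have hψ : Measurable (Set.indicator (Set.Iio (1 : ℝ)) (1 : ℝ → ℝ≥0∞)) :=
    measurable_one.indicator measurableSet_Iio
  rw [mul_assoc, ← lintegral_prod_radial hl hK hψ hΦ]
  have hsplit : MeasurePreserving (fun z : E => (K.orthogonalDecomposition z).ofLp) :=
    (WithLp.volume_preserving_ofLp _ _).comp K.orthogonalDecomposition.measurePreserving
  have hnorm (z : E) : √(‖(K.orthogonalDecomposition z).ofLp.1‖ ^ 2 +
      ‖(K.orthogonalDecomposition z).ofLp.2‖ ^ 2) = ‖z‖ := by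
    rw [← K.orthogonalDecomposition.norm_map z, WithLp.prod_norm_eq_of_L2]
    rfl
  rw [← hsplit.lintegral_comp (by fun_prop), ← lintegral_indicator measurableSet_ball]
  refine lintegral_congr fun z => ?_
  simp only [hnorm]
  simp [Set.indicator, Submodule.orthogonalDecomposition_apply]

end PolarCoordinates

section SphereIntegrals
open scoped ENNReal

variable {E : Type*} [NormedAddCommGroup E] [InnerProductSpace ℝ E]

lemma inner_inv_norm_smul_projection {K : Submodule ℝ E} [K.HasOrthogonalProjection]
    {x : E} (hx : x ∈ K) (z : E) :
    ⟪x, ((‖z‖⁻¹ • K.orthogonalProjectionOnto z : K) : E)⟫ = ⟪x, z⟫ / ‖z‖ := by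
  rw [Submodule.coe_smul, inner_smul_right, div_eq_inv_mul]
  congr 1
  exact Submodule.inner_orthogonalProjectionOnto_eq_of_mem_left ⟨x, hx⟩ z

lemma integral_sqrt_one_sub_sq_pow_pos {l : ℕ} (hl : l ≠ 0) :
    0 < ∫ u : ℝ, √(1 - u ^ 2) ^ l := by
  refine Continuous.integral_pos_of_hasCompactSupport_nonneg_nonzero (x := 0) (by fun_prop)
    (.intro (isCompact_Icc (a := -1) (b := 1)) fun u hu => ?_) (fun u => by positivity) (by simp)
  rw [Set.mem_Icc, ← abs_le, ← sq_le_one_iff_abs_le_one, not_le] at hu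
  rw [sqrt_eq_zero_of_nonpos (by linarith), zero_pow hl]

/-- The squared norm of the point of the plane spanned by two unit vectors with inner product `t`
whose inner products with them are `u` and `v`. -/
def planeNormSq (t u v : ℝ) : ℝ := (u ^ 2 + v ^ 2 - 2 * t * u * v) / (1 - t ^ 2)

variable {x y : E} {t : ℝ}

/-- The pairing of the plane spanned by `x` and `y` with these two vectors. -/
def planePairing (x y : E) : Submodule.span ℝ {x, y} →ₗ[ℝ] ℝ × ℝ :=
  ((innerSL ℝ x).toLinearMap.prod (innerSL ℝ y).toLinearMap).comp (Submodule.subtype _)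

lemma planePairing_apply (x y : E) (q : Submodule.span ℝ {x, y}) :
    planePairing x y q = (⟪x, (q : E)⟫, ⟪y, (q : E)⟫) := rfl

lemma norm_sq_eq_planeNormSq (hx : ‖x‖ = 1) (hy : ‖y‖ = 1) (ht : ⟪x, y⟫ = t) (ht1 : t ^ 2 < 1)
    (q : Submodule.span ℝ {x, y}) : ‖q‖ ^ 2 = planeNormSq t ⟪x, (q : E)⟫ ⟪y, (q : E)⟫ := by
  obtain ⟨q, hq⟩ := q
  obtain ⟨a, b, rfl⟩ := Submodule.mem_span_pair.1 hq
  have hyx : ⟪y, x⟫ = t := real_inner_comm x y ▸ ht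
  rw [planeNormSq, eq_div_iff (by linarith), Submodule.coe_norm, ← real_inner_self_eq_norm_sq]
  simp only [inner_add_right, inner_smul_right, inner_add_left, real_inner_smul_left,
    real_inner_self_eq_norm_sq, hx, hy, ht, hyx]
  ring

lemma bijective_planePairing (hx : ‖x‖ = 1) (hy : ‖y‖ = 1) (ht : ⟪x, y⟫ = t) (ht1 : t ^ 2 < 1) :
    Function.Bijective (planePairing x y) := by
  constructor
  · refine (injective_iff_map_eq_zero _).2 fun q hq => ?_
    have hnorm := norm_sq_eq_planeNormSq hx hy ht ht1 q
    rw [planePairing_apply, Prod.mk_eq_zero] at hq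
    simpa [hq, planeNormSq] using hnorm
  · rintro ⟨u, v⟩
    have hdet : 1 - t ^ 2 ≠ 0 := by linarith
    have hyx : ⟪y, x⟫ = t := real_inner_comm x y ▸ ht
    refine ⟨⟨((u - t * v) / (1 - t ^ 2)) • x + ((v - t * u) / (1 - t ^ 2)) • y,
      Submodule.mem_span_pair.2 ⟨_, _, rfl⟩⟩, ?_⟩
    simp only [planePairing_apply, inner_add_right, inner_smul_right, real_inner_self_eq_norm_sq,
      hx, hy, ht, hyx]
    ext <;> field_simp <;> ring

lemma finrank_span_pair (hx : ‖x‖ = 1) (hy : ‖y‖ = 1) (ht : ⟪x, y⟫ = t) (ht1 : t ^ 2 < 1) :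
    Module.finrank ℝ (Submodule.span ℝ {x, y}) = 2 := by
  rw [(LinearEquiv.ofBijective _ (bijective_planePairing hx hy ht ht1)).finrank_eq]
  simp

variable [FiniteDimensional ℝ E] [MeasurableSpace E] [BorelSpace E]

lemma measurable_projection_normalized (K : Submodule ℝ E) :
    Measurable (fun z : E => ‖z‖⁻¹ • K.orthogonalProjectionOnto z) :=
  measurable_norm.inv.smul K.orthogonalProjectionOnto.measurable

lemma exists_map_projection_eq_withDensity (K : Submodule ℝ E) {l : ℕ} (hl : l ≠ 0)
    (hK : Module.finrank ℝ Kᗮ = l + 2) : ∃ C : ℝ≥0∞,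
      Measure.map (fun z : E => ‖z‖⁻¹ • K.orthogonalProjectionOnto z)
        (volume.restrict (Metric.ball 0 1)) =
          C • (volume : Measure K).withDensity (projectionDensity l) := by
  obtain ⟨C, hC⟩ := exists_lintegral_projection K hl hK
  have hmeas := measurable_projection_normalized K
  refine ⟨C, Measure.ext fun s hs => ?_⟩
  have h := hC (Set.indicator s 1) (measurable_one.indicator hs)
  simp_rw [← Set.indicator_mul_right, Pi.one_apply, mul_one] at h
  rw [Measure.map_apply hmeas hs, Measure.smul_apply, withDensity_apply _ hs, smul_eq_mul,
    ← lintegral_indicator hs, ← h, ← lintegral_indicator_one (hmeas hs)]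
  rfl

lemma exists_integral_projection (K : Submodule ℝ E) {l : ℕ} (hl : l ≠ 0)
    (hK : Module.finrank ℝ Kᗮ = l + 2) : ∃ C : ℝ, 0 ≤ C ∧ ∀ φ : K → ℝ, Measurable φ →
      ∫ z in Metric.ball (0 : E) 1, φ (‖z‖⁻¹ • K.orthogonalProjectionOnto z) =
        C * ∫ q : K, √(1 - ‖q‖ ^ 2) ^ l * φ q := by
  obtain ⟨C, hC⟩ := exists_map_projection_eq_withDensity K hl hK
  refine ⟨C.toReal, ENNReal.toReal_nonneg, fun φ hφ => ?_⟩
  rw [← integral_map (measurable_projection_normalized K).aemeasurable hφ.aestronglyMeasurable, hC,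
    integral_smul_measure, integral_withDensity_eq_integral_toReal_smul
      (measurable_projectionDensity l) (.of_forall fun _ => ENNReal.ofReal_lt_top), smul_eq_mul]
  congr 1
  refine integral_congr_ae (.of_forall fun q => ?_)
  simp only [projectionDensity, smul_eq_mul]
  rw [ENNReal.toReal_ofReal (by positivity)]

theorem exists_integral_inner {l : ℕ} (hl : l ≠ 0) (hE : Module.finrank ℝ E = l + 3)
    (hx : ‖x‖ = 1) :
    ∃ C : ℝ, 0 ≤ C ∧ ∀ φ : ℝ → ℝ, Measurable φ →
      ∫ z in Metric.ball (0 : E) 1, φ (⟪x, z⟫ / ‖z‖) = C * ∫ u : ℝ, √(1 - u ^ 2) ^ l * φ u := by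
  have : Fact (Module.finrank ℝ E = (l + 2) + 1) := ⟨hE⟩
  have hx0 : x ≠ 0 := by rintro rfl; simp at hx
  obtain ⟨C, hC0, hC⟩ := exists_integral_projection (ℝ ∙ x) hl
    (Submodule.finrank_orthogonal_span_singleton hx0)
  refine ⟨C, hC0, fun φ hφ => ?_⟩
  have h := hC (fun q => φ ⟪x, (q : E)⟫) (by fun_prop)
  simp_rw [inner_inv_norm_smul_projection (Submodule.mem_span_singleton_self x)] at h
  rw [h]
  let e := LinearIsometryEquiv.toSpanUnitSingleton (𝕜 := ℝ) x hx
  rw [← e.measurePreserving.integral_comp e.toHomeomorph.measurableEmbedding]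
  simp [e, inner_smul_right, norm_smul, hx]

lemma integral_inner_eq {l : ℕ} (hl : l ≠ 0) (hE : Module.finrank ℝ E = l + 3)
    (hx : ‖x‖ = 1) {φ : ℝ → ℝ} (hφ : Measurable φ) :
    ∫ z in Metric.ball (0 : E) 1, φ (⟪x, z⟫ / ‖z‖) =
      volume.real (Metric.ball (0 : E) 1) / (∫ u : ℝ, √(1 - u ^ 2) ^ l) *
        ∫ u : ℝ, √(1 - u ^ 2) ^ l * φ u := by
  obtain ⟨C, -, hC⟩ := exists_integral_inner hl hE hx
  have htotal := hC (fun _ => 1) measurable_const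
  simp only [integral_const, measureReal_restrict_apply_univ, smul_eq_mul, mul_one] at htotal
  rw [hC φ hφ, htotal, mul_div_cancel_right₀ _ (integral_sqrt_one_sub_sq_pow_pos hl).ne']

lemma exists_integral_comp_planePairing (hx : ‖x‖ = 1) (hy : ‖y‖ = 1) (ht : ⟪x, y⟫ = t)
    (ht1 : t ^ 2 < 1) : ∃ c : ℝ, 0 ≤ c ∧ ∀ f : ℝ × ℝ → ℝ,
      ∫ q, f (planePairing x y q) = c * ∫ w, f w := by
  let e := (LinearEquiv.ofBijective _
    (bijective_planePairing hx hy ht ht1)).toContinuousLinearEquiv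
  have := e.isAddHaarMeasure_map volume
  refine ⟨Measure.addHaarScalarFactor (Measure.map e volume) volume, by positivity, fun f => ?_⟩
  rw [← smul_eq_mul, ← NNReal.smul_def, ← integral_smul_nnreal_measure,
    ← Measure.isAddLeftInvariant_eq_smul]
  exact (e.toHomeomorph.measurableEmbedding.integral_map f).symm

theorem exists_integral_inner_inner {l : ℕ} (hl : l ≠ 0) (hE : Module.finrank ℝ E = l + 4)
    (hx : ‖x‖ = 1) (hy : ‖y‖ = 1) (ht : ⟪x, y⟫ = t) (ht1 : t ^ 2 < 1) :
    ∃ C : ℝ, 0 ≤ C ∧ ∀ H : ℝ × ℝ → ℝ, Measurable H →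
      ∫ z in Metric.ball (0 : E) 1, H (⟪x, z⟫ / ‖z‖, ⟪y, z⟫ / ‖z‖) =
        C * ∫ w : ℝ × ℝ, √(1 - planeNormSq t w.1 w.2) ^ l * H w := by
  have hfinrank := (Submodule.span ℝ {x, y}).finrank_add_finrank_orthogonal
  rw [finrank_span_pair hx hy ht ht1] at hfinrank
  obtain ⟨C, hC0, hC⟩ := exists_integral_projection (Submodule.span ℝ {x, y}) hl (by omega)
  obtain ⟨c, hc0, hc⟩ := exists_integral_comp_planePairing hx hy ht ht1
  refine ⟨C * c, by positivity, fun H hH => ?_⟩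
  have h := hC (fun q => H (⟪x, (q : E)⟫, ⟪y, (q : E)⟫)) (by fun_prop)
  simp_rw [inner_inv_norm_smul_projection (Submodule.mem_span_pair.2 ⟨1, 0, by simp⟩ :
      x ∈ Submodule.span ℝ {x, y}), inner_inv_norm_smul_projection
      (Submodule.mem_span_pair.2 ⟨0, 1, by simp⟩ : y ∈ Submodule.span ℝ {x, y}),
    norm_sq_eq_planeNormSq hx hy ht ht1] at h
  rw [h, mul_assoc, ← hc]
  rfl

end SphereIntegrals

section CodeBound

/-- The inner product of the normalized projections to `zᗮ` of two unit vectors with inner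
product `t` whose inner products with the unit vector `z` are `u` and `v`. -/
def projectedInner (t u v : ℝ) : ℝ := (t - u * v) / (√(1 - u ^ 2) * √(1 - v ^ 2))

lemma measurable_projectedInner (t : ℝ) :
    Measurable (fun w : ℝ × ℝ => projectedInner t w.1 w.2) := by
  unfold projectedInner
  fun_prop

lemma projectedInner_self {u : ℝ} (hu : u ^ 2 < 1) : projectedInner 1 u u = 1 := by
  rw [projectedInner, mul_self_sqrt (by linarith), ← sq, div_self (by linarith)]

section Projection
variable {E : Type*} [NormedAddCommGroup E] [InnerProductSpace ℝ E]

/-- The projection of a unit vector `x` to the hyperplane `zᗮ`, normalized. -/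
def normalizedProjection (x z : E) : E :=
  (√(1 - (⟪x, z⟫ / ‖z‖) ^ 2))⁻¹ • (x - (⟪x, z⟫ / ‖z‖ / ‖z‖) • z)

lemma inner_normalizedProjection_right (x z : E) : ⟪z, normalizedProjection x z⟫ = 0 := by
  rcases eq_or_ne z 0 with rfl | hz
  · simp
  have hz' := norm_ne_zero_iff.2 hz
  rw [normalizedProjection, inner_smul_right, inner_sub_right, inner_smul_right,
    real_inner_self_eq_norm_sq, real_inner_comm]
  field_simp
  simp

lemma inner_normalizedProjection (x y : E) {z : E} (hz : z ≠ 0) :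
    ⟪normalizedProjection x z, normalizedProjection y z⟫ =
      projectedInner ⟪x, y⟫ (⟪x, z⟫ / ‖z‖) (⟪y, z⟫ / ‖z‖) := by
  have hz' := norm_ne_zero_iff.2 hz
  have hinner : ⟪x - (⟪x, z⟫ / ‖z‖ / ‖z‖) • z, y - (⟪y, z⟫ / ‖z‖ / ‖z‖) • z⟫ =
      ⟪x, y⟫ - ⟪x, z⟫ / ‖z‖ * (⟪y, z⟫ / ‖z‖) := by
    simp only [inner_sub_right, inner_sub_left, inner_smul_right, real_inner_smul_left,
      real_inner_self_eq_norm_sq, real_inner_comm y z]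
    field_simp
    ring
  rw [normalizedProjection, normalizedProjection, inner_smul_right, real_inner_smul_left, hinner,
    projectedInner]
  field_simp

lemma norm_normalizedProjection {x z : E} (hx : ‖x‖ = 1) (hz : z ≠ 0)
    (hxz : (⟪x, z⟫ / ‖z‖) ^ 2 < 1) : ‖normalizedProjection x z‖ = 1 := by
  have h := inner_normalizedProjection x x hz
  rw [real_inner_self_eq_norm_sq, real_inner_self_eq_norm_sq, hx, one_pow,
    projectedInner_self hxz] at h
  exact (pow_eq_one_iff_of_nonneg (norm_nonneg _) two_ne_zero).1 h

end Projection

section Averaging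
variable {Ω : Type*} [MeasurableSpace Ω] {ν : Measure Ω} [IsFiniteMeasure ν]

lemma sq_integral_le_measureReal_mul_integral_sq {S : Ω → ℝ} (hS : MemLp S 2 ν) :
    (∫ z, S z ∂ν) ^ 2 ≤ ν.real Set.univ * ∫ z, S z ^ 2 ∂ν := by
  rcases eq_zero_or_neZero ν with rfl | hν
  · simp
  have hpos : 0 < ν.real Set.univ := measureReal_univ_pos
  have h := (even_two.convexOn_pow (𝕜 := ℝ)).map_average_le (continuous_pow 2).continuousOn
    isClosed_univ (.of_forall fun _ => Set.mem_univ _) (hS.integrable one_le_two) hS.integrable_sq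
  rw [average_eq, average_eq, smul_eq_mul, smul_eq_mul] at h
  field_simp at h
  exact h

lemma mul_sq_card_mul_le_of_sum_kernel {ι : Type*} [Fintype ι] {φ : ι → Ω → ℝ}
    {k : ι → ι → Ω → ℝ} {B a b : ℝ} (hB : 0 ≤ B) (hφ : ∀ i, MemLp (φ i) 2 ν)
    (hk : ∀ i j, Integrable (k i j) ν)
    (hle : ∀ᵐ z ∂ν, B * (∑ i, φ i z) ^ 2 ≤ ∑ i, ∑ j, k i j z) (ha : ∀ i, ∫ z, φ i z ∂ν = a)
    (hoff : ∀ i j, i ≠ j → ∫ z, k i j z ∂ν ≤ 0) (hdiag : ∀ i, ∫ z, k i i z ∂ν = b) :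
    B * (Fintype.card ι * a) ^ 2 ≤ ν.real Set.univ * (Fintype.card ι * b) := by
  classical
  have hS : MemLp (fun z => ∑ i, φ i z) 2 ν := memLp_finsetSum _ fun i _ => hφ i
  have hsum : ∫ z, ∑ i, φ i z ∂ν = Fintype.card ι * a := by
    rw [integral_finsetSum _ fun i _ => (hφ i).integrable one_le_two]
    simp [ha]
  have hdouble : ∫ z, ∑ i, ∑ j, k i j z ∂ν ≤ Fintype.card ι * b := by
    rw [integral_finsetSum _ fun i _ => integrable_finsetSum _ fun j _ => hk i j, ← nsmul_eq_mul]
    refine Finset.sum_le_card_nsmul _ _ _ fun i _ => ?_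
    rw [integral_finsetSum _ fun j _ => hk i j, ← Finset.add_sum_erase _ _ (Finset.mem_univ i),
      hdiag]
    exact add_le_of_nonpos_right
      (Finset.sum_nonpos fun j hj => hoff i j (Finset.ne_of_mem_erase hj).symm)
  calc B * (Fintype.card ι * a) ^ 2
      ≤ B * (ν.real Set.univ * ∫ z, (∑ i, φ i z) ^ 2 ∂ν) := by
        rw [← hsum]
        exact mul_le_mul_of_nonneg_left (sq_integral_le_measureReal_mul_integral_sq hS) hB
    _ = ν.real Set.univ * ∫ z, B * (∑ i, φ i z) ^ 2 ∂ν := by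
        rw [integral_const_mul]
        ring
    _ ≤ ν.real Set.univ * ∫ z, ∑ i, ∑ j, k i j z ∂ν := by
        refine mul_le_mul_of_nonneg_left (integral_mono_ae (hS.integrable_sq.const_mul B)
          (integrable_finsetSum _ fun i _ => integrable_finsetSum _ fun j _ => hk i j) hle)
          measureReal_nonneg
    _ ≤ ν.real Set.univ * (Fintype.card ι * b) :=
        mul_le_mul_of_nonneg_left hdouble measureReal_nonneg

end Averaging

/-- A bounded measurable weight supported in `(0, 1)`, to be evaluated at the inner product of two
unit vectors. -/
structure IsCapWeight (F : ℝ → ℝ) : Prop where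
  measurable : Measurable F
  nonneg : ∀ u, 0 ≤ F u
  exists_le : ∃ M, ∀ u, F u ≤ M
  mem_Ioo : ∀ {u}, F u ≠ 0 → u ∈ Set.Ioo (0 : ℝ) 1

namespace IsCapWeight
variable {F : ℝ → ℝ}

lemma sq_lt_one (hF : IsCapWeight F) {u : ℝ} (hu : F u ≠ 0) : u ^ 2 < 1 := by
  obtain ⟨hu0, hu1⟩ := hF.mem_Ioo hu
  exact pow_lt_one₀ hu0.le hu1 two_ne_zero

lemma memLp_comp {Ω : Type*} [MeasurableSpace Ω] {ν : Measure Ω} [IsFiniteMeasure ν]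
    (hF : IsCapWeight F) {U : Ω → ℝ} (hU : Measurable U) : MemLp (fun z => F (U z)) 2 ν := by
  obtain ⟨M, hM⟩ := hF.exists_le
  refine .of_bound (hF.measurable.comp hU).aestronglyMeasurable M (.of_forall fun z => ?_)
  rw [norm_of_nonneg (hF.nonneg _)]
  exact hM _

end IsCapWeight

section Kernel
variable {E : Type*} [NormedAddCommGroup E] [InnerProductSpace ℝ E] {F : ℝ → ℝ}

/-- The polynomial kernel of the normalized projections of `x` and `y` to `zᗮ`, weighted by the
heights of `x` and `y` over this hyperplane. -/
def capKernel (F : ℝ → ℝ) (g : Polynomial ℝ) (x y z : E) : ℝ :=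
  F (⟪x, z⟫ / ‖z‖) * F (⟪y, z⟫ / ‖z‖) *
    g.eval (projectedInner ⟪x, y⟫ (⟪x, z⟫ / ‖z‖) (⟪y, z⟫ / ‖z‖))

lemma capKernel_self (hF : IsCapWeight F) (g : Polynomial ℝ) {x : E} (hx : ‖x‖ = 1) (z : E) :
    capKernel F g x x z = g.eval 1 * F (⟪x, z⟫ / ‖z‖) ^ 2 := by
  rw [capKernel]
  by_cases h : F (⟪x, z⟫ / ‖z‖) = 0
  · simp [h]
  rw [real_inner_self_eq_norm_sq, hx, one_pow, projectedInner_self (hF.sq_lt_one h)]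
  ring

lemma capKernel_neg_left (hF : IsCapWeight F) (g : Polynomial ℝ) (y z : E) :
    capKernel F g (-y) y z = 0 := by
  rw [capKernel, inner_neg_left, neg_div, mul_eq_zero, mul_eq_zero, ← not_ne_iff,
    ← not_ne_iff (b := (0 : ℝ)), ← not_and_or]
  exact .inl fun h => by linarith [(hF.mem_Ioo h.1).1, (hF.mem_Ioo h.2).1]

lemma measurable_capWeight_mul_eval (hF : IsCapWeight F) (g : Polynomial ℝ) (t : ℝ) :
    Measurable (fun w : ℝ × ℝ => F w.1 * F w.2 * g.eval (projectedInner t w.1 w.2)) :=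
  ((hF.measurable.comp measurable_fst).mul (hF.measurable.comp measurable_snd)).mul
    (g.continuous.measurable.comp (measurable_projectedInner t))

lemma ae_mul_sq_sum_le_sum_capKernel [MeasurableSpace E] {ν : Measure E} [NullSingletonClass ν]
    (hF : IsCapWeight F) {g : Polynomial ℝ} {B : ℝ} {ι : Type*} [Fintype ι] {x : ι → E}
    (hx : ∀ i, ‖x i‖ = 1)
    (hLP : ∀ (z : E) (f : ι → ℝ) (v : ι → E), z ≠ 0 → (∀ i, ⟪z, v i⟫ = 0) →
      (∀ i, f i ≠ 0 → ‖v i‖ = 1) →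
        B * (∑ i, f i) ^ 2 ≤ ∑ i, ∑ j, f i * f j * g.eval ⟪v i, v j⟫) :
    ∀ᵐ z ∂ν, B * (∑ i, F (⟪x i, z⟫ / ‖z‖)) ^ 2 ≤ ∑ i, ∑ j, capKernel F g (x i) (x j) z := by
  filter_upwards [compl_mem_ae_iff.2 (measure_singleton (0 : E))] with z hz
  have h := hLP z (fun i => F (⟪x i, z⟫ / ‖z‖)) (fun i => normalizedProjection (x i) z) hz
    (fun i => inner_normalizedProjection_right _ _)
    fun i hi => norm_normalizedProjection (hx i) hz (hF.sq_lt_one hi)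
  simpa only [capKernel, inner_normalizedProjection _ _ hz] using h

variable [MeasurableSpace E] [BorelSpace E] [FiniteDimensional ℝ E]

lemma measurable_inner_div_norm (x : E) : Measurable (fun z : E => ⟪x, z⟫ / ‖z‖) := by
  fun_prop

lemma integrable_capKernel {ν : Measure E} [IsFiniteMeasure ν] [NullSingletonClass ν]
    (hF : IsCapWeight F) (g : Polynomial ℝ) {x y : E} (hx : ‖x‖ = 1) (hy : ‖y‖ = 1) :
    Integrable (capKernel F g x y) ν := by
  obtain ⟨M, hM⟩ := hF.exists_le
  obtain ⟨G, hG⟩ := isCompact_Icc.exists_bound_of_continuousOn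
    (g.continuous.continuousOn (s := Set.Icc (-1 : ℝ) 1))
  have hG0 : 0 ≤ G := (norm_nonneg _).trans (hG 0 (by norm_num))
  have hM0 : 0 ≤ M := (hF.nonneg 0).trans (hM 0)
  refine .of_bound ((measurable_capWeight_mul_eval hF g ⟪x, y⟫).comp
    ((measurable_inner_div_norm x).prodMk (measurable_inner_div_norm y))).aestronglyMeasurable
    (M * M * G) ?_
  filter_upwards [compl_mem_ae_iff.2 (measure_singleton (0 : E))] with z hz
  by_cases hxz : F (⟪x, z⟫ / ‖z‖) = 0
  · simpa [capKernel, hxz] using by positivity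
  by_cases hyz : F (⟪y, z⟫ / ‖z‖) = 0
  · simpa [capKernel, hyz] using by positivity
  have hinner := abs_real_inner_le_norm (normalizedProjection x z) (normalizedProjection y z)
  rw [norm_normalizedProjection hx hz (hF.sq_lt_one hxz),
    norm_normalizedProjection hy hz (hF.sq_lt_one hyz), one_mul] at hinner
  rw [capKernel, norm_mul, norm_mul, norm_of_nonneg (hF.nonneg _), norm_of_nonneg (hF.nonneg _),
    ← inner_normalizedProjection x y hz]
  gcongr
  · exact hF.nonneg _
  · exact hM _
  · exact hM _
  · exact hG _ (abs_le.1 hinner)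

lemma integral_capKernel_nonpos {l : ℕ} (hl : l ≠ 0) (hE : Module.finrank ℝ E = l + 4)
    (hF : IsCapWeight F) {g : Polynomial ℝ} {c : ℝ} (hc : c < 1)
    (hJ : ∀ t, -1 < t → t ≤ c → ∫ w : ℝ × ℝ, √(1 - planeNormSq t w.1 w.2) ^ l *
      (F w.1 * F w.2 * g.eval (projectedInner t w.1 w.2)) ≤ 0)
    {x y : E} (hx : ‖x‖ = 1) (hy : ‖y‖ = 1) (hxy : ⟪x, y⟫ ≤ c) :
    ∫ z in Metric.ball (0 : E) 1, capKernel F g x y z ≤ 0 := by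
  have hge := neg_le_of_abs_le (abs_real_inner_le_norm x y)
  rw [hx, hy, one_mul] at hge
  rcases hge.eq_or_lt with hxy' | hlt
  · rw [(inner_eq_neg_one_iff_of_norm_eq_one hx hy).1 hxy'.symm]
    simp [capKernel_neg_left hF]
  · obtain ⟨C, hC0, hC⟩ := exists_integral_inner_inner hl hE hx hy rfl (by nlinarith)
    exact (hC _ (measurable_capWeight_mul_eval hF g ⟪x, y⟫)).trans_le
      (mul_nonpos_of_nonneg_of_nonpos hC0 (hJ _ hlt hxy))

/-- Averaging over all hyperplanes an inequality satisfied by the normalized projections of the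
points of a spherical code. -/
theorem mul_card_mul_sq_integral_le {l : ℕ} (hl : l ≠ 0) (hE : Module.finrank ℝ E = l + 4)
    (hF : IsCapWeight F) {g : Polynomial ℝ} {B c : ℝ} (hB : 0 ≤ B) (hc : c < 1)
    (hJ : ∀ t, -1 < t → t ≤ c → ∫ w : ℝ × ℝ, √(1 - planeNormSq t w.1 w.2) ^ l *
      (F w.1 * F w.2 * g.eval (projectedInner t w.1 w.2)) ≤ 0)
    {ι : Type*} [Fintype ι] [Nonempty ι] {x : ι → E} (hx : ∀ i, ‖x i‖ = 1)
    (hxc : ∀ i j, i ≠ j → ⟪x i, x j⟫ ≤ c)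
    (hLP : ∀ (z : E) (f : ι → ℝ) (v : ι → E), z ≠ 0 → (∀ i, ⟪z, v i⟫ = 0) →
      (∀ i, f i ≠ 0 → ‖v i‖ = 1) →
        B * (∑ i, f i) ^ 2 ≤ ∑ i, ∑ j, f i * f j * g.eval ⟪v i, v j⟫) :
    B * Fintype.card ι * (∫ u, √(1 - u ^ 2) ^ (l + 1) * F u) ^ 2 ≤
      g.eval 1 * (∫ u, √(1 - u ^ 2) ^ (l + 1) * F u ^ 2) * ∫ u, √(1 - u ^ 2) ^ (l + 1) := by
  have : Nontrivial E := Module.nontrivial_of_finrank_pos (R := ℝ) (by omega)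
  have hball : 0 < volume.real (Metric.ball (0 : E) 1) :=
    ENNReal.toReal_pos (Metric.measure_ball_pos _ _ one_pos).ne' measure_ball_lt_top.ne
  have : IsFiniteMeasure (volume.restrict (Metric.ball (0 : E) 1)) :=
    ⟨by simpa using measure_ball_lt_top⟩
  have havg := mul_sq_card_mul_le_of_sum_kernel hB
    (fun i => hF.memLp_comp (measurable_inner_div_norm (x i)))
    (fun i j => integrable_capKernel hF g (hx i) (hx j))
    (ae_mul_sq_sum_le_sum_capKernel hF hx hLP)
    (fun i => integral_inner_eq l.succ_ne_zero hE (hx i) hF.measurable)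
    (fun i j hij => integral_capKernel_nonpos hl hE hF hc hJ (hx i) (hx j) (hxc i j hij))
    (b := g.eval 1 * (volume.real (Metric.ball (0 : E) 1) / (∫ u : ℝ, √(1 - u ^ 2) ^ (l + 1)) *
      ∫ u : ℝ, √(1 - u ^ 2) ^ (l + 1) * F u ^ 2)) fun i => by
        simp_rw [capKernel_self hF g (hx i)]
        rw [integral_const_mul,
          integral_inner_eq l.succ_ne_zero hE (hx i) (hF.measurable.pow_const 2)]
  have htotal := integral_sqrt_one_sub_sq_pow_pos l.succ_ne_zero
  have hcard : (0 : ℝ) < Fintype.card ι := by exact_mod_cast Fintype.card_pos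
  rw [measureReal_restrict_apply_univ] at havg
  set V := volume.real (Metric.ball (0 : E) 1)
  set J := ∫ u : ℝ, √(1 - u ^ 2) ^ (l + 1)
  field_simp at havg
  exact havg.trans_eq (by ring)

end Kernel

end CodeBound

section Sturm

lemma exists_potential_lt_of_pos {y y' Q : ℝ → ℝ} {l δ : ℝ} (hδ : 0 < δ)
    (hy : ∀ s ∈ Set.Icc l (l + δ), HasDerivAt y (y' s) s)
    (hy' : ∀ s ∈ Set.Icc l (l + δ), HasDerivAt y' (-Q s * y s) s)
    (hl : 0 ≤ y l) (hpos : ∀ s ∈ Set.Ioc l (l + δ), 0 < y s) :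
    ∃ s ∈ Set.Icc l (l + δ), Q s < (π / δ) ^ 2 := by
  by_contra! hQ
  set k := π / δ with hk
  have hk0 : 0 < k := by positivity
  have hkδ : k * δ = π := by rw [hk]; field_simp
  have hlr : l < l + δ := by linarith
  -- Compare with `sin (k * (s - l))` through the Wronskian.
  let W : ℝ → ℝ := fun s => y' s * sin (k * (s - l)) - k * (y s * cos (k * (s - l)))
  have hW : ∀ s ∈ Set.Icc l (l + δ),
      HasDerivAt W ((k ^ 2 - Q s) * y s * sin (k * (s - l))) s := by
    intro s hs
    have hlin : HasDerivAt (fun s => k * (s - l)) k s := by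
      simpa using ((hasDerivAt_id s).sub_const l).const_mul k
    refine (((hy' s hs).mul hlin.sin).sub
      (((hy s hs).mul hlin.cos).const_mul k)).congr_deriv ?_
    ring
  have hanti : AntitoneOn W (Set.Icc l (l + δ)) := by
    refine antitoneOn_of_hasDerivWithinAt_nonpos (convex_Icc _ _)
      (fun s hs => (hW s hs).continuousAt.continuousWithinAt)
      (fun s hs => (hW s (interior_subset hs)).hasDerivWithinAt) fun s hs => ?_
    rw [interior_Icc] at hs
    have hsin : 0 ≤ sin (k * (s - l)) := sin_nonneg_of_nonneg_of_le_pi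
      (mul_nonneg hk0.le (by linarith [hs.1])) (by nlinarith [hs.2])
    exact mul_nonpos_of_nonpos_of_nonneg (mul_nonpos_of_nonpos_of_nonneg
      (by linarith [hQ s ⟨hs.1.le, hs.2.le⟩]) (hpos s ⟨hs.1, hs.2.le⟩).le) hsin
  have h := hanti (Set.left_mem_Icc.2 hlr.le) (Set.right_mem_Icc.2 hlr.le) hlr.le
  simp only [W, add_sub_cancel_left, hkδ, sub_self, mul_zero, sin_zero, cos_zero, sin_pi,
    cos_pi] at h
  linarith [mul_pos hk0 (hpos _ (Set.right_mem_Ioc.2 hlr)), mul_nonneg hk0.le hl]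

section LinearApproximation
variable {y y' Q : ℝ → ℝ} {s₀ w β : ℝ}

lemma exists_abs_deriv_sub_le (hw : 0 ≤ w) (hβ : 0 ≤ β)
    (hy : ∀ s ∈ Set.Icc (s₀ - w) (s₀ + w), HasDerivAt y (y' s) s)
    (hy' : ∀ s ∈ Set.Icc (s₀ - w) (s₀ + w), HasDerivAt y' (-Q s * y s) s) (h0 : y s₀ = 0)
    (hQ : ∀ s ∈ Set.Icc (s₀ - w) (s₀ + w), |Q s| ≤ β) :
    ∃ x ∈ Set.Icc (s₀ - w) (s₀ + w), ∀ s ∈ Set.Icc (s₀ - w) (s₀ + w),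
      |y' s - y' s₀| ≤ β * w ^ 2 * |y' x| := by
  have hs₀ : s₀ ∈ Set.Icc (s₀ - w) (s₀ + w) := ⟨by linarith, by linarith⟩
  have hconv : Convex ℝ (Set.Icc (s₀ - w) (s₀ + w)) := convex_Icc _ _
  have habs : ∀ s ∈ Set.Icc (s₀ - w) (s₀ + w), |s - s₀| ≤ w := fun s hs =>
    abs_le.2 ⟨by linarith [hs.1], by linarith [hs.2]⟩
  obtain ⟨x, hx, hmax⟩ := isCompact_Icc.exists_isMaxOn ⟨s₀, hs₀⟩
    fun s hs => (hy' s hs).continuousAt.continuousWithinAt.abs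
  refine ⟨x, hx, fun s hs => ?_⟩
  have hybound : ∀ s ∈ Set.Icc (s₀ - w) (s₀ + w), |y s| ≤ |y' x| * w := by
    intro s hs
    have h := hconv.norm_image_sub_le_of_norm_hasDerivWithin_le
      (fun s hs => (hy s hs).hasDerivWithinAt) hmax hs₀ hs
    rw [h0, sub_zero] at h
    exact h.trans (mul_le_mul_of_nonneg_left (habs s hs) (abs_nonneg _))
  have h := hconv.norm_image_sub_le_of_norm_hasDerivWithin_le (C := β * (|y' x| * w))
    (fun s hs => (hy' s hs).hasDerivWithinAt) (fun s hs => by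
      rw [norm_mul, norm_neg]
      exact mul_le_mul (hQ s hs) (hybound s hs) (norm_nonneg _) hβ) hs₀ hs
  calc |y' s - y' s₀| ≤ β * (|y' x| * w) * |s - s₀| := h
    _ ≤ β * (|y' x| * w) * w := mul_le_mul_of_nonneg_left (habs s hs) (by positivity)
    _ = β * w ^ 2 * |y' x| := by ring

lemma abs_sub_linear_le (hw : 0 ≤ w) (hβ : 0 ≤ β) (hβw : β * w ^ 2 ≤ 1 / 2)
    (hy : ∀ s ∈ Set.Icc (s₀ - w) (s₀ + w), HasDerivAt y (y' s) s)
    (hy' : ∀ s ∈ Set.Icc (s₀ - w) (s₀ + w), HasDerivAt y' (-Q s * y s) s) (h0 : y s₀ = 0)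
    (hQ : ∀ s ∈ Set.Icc (s₀ - w) (s₀ + w), |Q s| ≤ β) {s : ℝ}
    (hs : s ∈ Set.Icc (s₀ - w) (s₀ + w)) :
    |y s - y' s₀ * (s - s₀)| ≤ 2 * (β * w ^ 2) * |y' s₀| * |s - s₀| := by
  obtain ⟨x, hx, hderiv⟩ := exists_abs_deriv_sub_le hw hβ hy hy' h0 hQ
  have hmax : |y' x| ≤ 2 * |y' s₀| := by
    nlinarith [hderiv x hx, abs_sub_abs_le_abs_sub (y' x) (y' s₀), abs_nonneg (y' x)]
  have h := (convex_Icc (s₀ - w) (s₀ + w)).norm_image_sub_le_of_norm_hasDerivWithin_le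
    (f := fun s => y s - y' s₀ * (s - s₀)) (f' := fun s => y' s - y' s₀)
    (fun s hs => ((hy s hs).sub (((hasDerivAt_id s).sub_const s₀).const_mul
      (y' s₀))).hasDerivWithinAt.congr_deriv (by ring)) hderiv
    (⟨by linarith, by linarith⟩ : s₀ ∈ Set.Icc (s₀ - w) (s₀ + w)) hs
  simp only [h0, sub_self, mul_zero, sub_zero, norm_eq_abs] at h
  refine h.trans (mul_le_mul_of_nonneg_right ?_ (abs_nonneg _))
  calc β * w ^ 2 * |y' x| ≤ β * w ^ 2 * (2 * |y' s₀|) := by gcongr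
    _ = 2 * (β * w ^ 2) * |y' s₀| := by ring

end LinearApproximation

end Sturm

section NormalForm

/-- The numerator of the potential of the Jacobi equation in Liouville normal form. -/
def potentialNumer (E A B s : ℝ) : ℝ := E * (1 - s ^ 2) - A * (1 + s) ^ 2 - B * (1 - s) ^ 2

/-- `y`, with derivative `y'`, solves the Jacobi equation in Liouville normal form,
`y'' = -potentialNumer / (1 - s²)² * y`, and `s₀` is its last zero before `1`. -/
structure NormalForm (y y' : ℝ → ℝ) (E A B s₀ : ℝ) : Prop where
  B_nonneg : 0 ≤ B
  B_le_A : B ≤ A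
  E_nonneg : 0 ≤ E
  lt_one : s₀ < 1
  hasDerivAt : ∀ s ∈ Set.Ioo (-1 : ℝ) 1, HasDerivAt y (y' s) s
  hasDerivAt_deriv : ∀ s ∈ Set.Ioo (-1 : ℝ) 1,
    HasDerivAt y' (-(potentialNumer E A B s / (1 - s ^ 2) ^ 2) * y s) s
  continuous : Continuous y
  apply_zero : y s₀ = 0
  apply_one : y 1 = 0
  pos : ∀ s ∈ Set.Ioo (-1 : ℝ) 1, s₀ < s → 0 < y s

lemma potentialNumer_sub (E A B s t : ℝ) :
    potentialNumer E A B s - potentialNumer E A B t =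
      -((E * (s + t) + (A - B) * 2 + (A + B) * (s + t)) * (s - t)) := by
  unfold potentialNumer
  ring

namespace NormalForm
variable {y y' : ℝ → ℝ} {E A B s₀ t δ : ℝ}

lemma exists_potentialNumer_lt (S : NormalForm y y' E A B s₀) (ht : 0 ≤ t) (hst : s₀ ≤ t)
    (hδ : 0 < δ) (hδ1 : t + δ < 1) :
    ∃ s ∈ Set.Icc t (t + δ), potentialNumer E A B s < (π / δ) ^ 2 := by
  have hyt : 0 ≤ y t := by
    rcases hst.eq_or_lt with rfl | hst
    · exact S.apply_zero.ge
    · exact (S.pos t ⟨by linarith, by linarith⟩ hst).le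
  obtain ⟨s, hs, hlt⟩ := exists_potential_lt_of_pos hδ
    (fun s hs => S.hasDerivAt s ⟨by linarith [hs.1], by linarith [hs.2]⟩)
    (fun s hs => S.hasDerivAt_deriv s ⟨by linarith [hs.1], by linarith [hs.2]⟩)
    hyt (fun s hs => S.pos s ⟨by linarith [hs.1], by linarith [hs.2]⟩ (hst.trans_lt hs.1))
  have hs2 : 0 < 1 - s ^ 2 := by nlinarith [hs.1, hs.2]
  rw [div_lt_iff₀ (by positivity)] at hlt
  refine ⟨s, hs, hlt.trans_le (mul_le_of_le_one_right (by positivity) ?_)⟩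
  exact pow_le_one₀ hs2.le (by linarith [sq_nonneg s])

lemma potentialNumer_nonneg (S : NormalForm y y' E A B s₀) (hs₀ : 0 ≤ s₀) :
    0 ≤ potentialNumer E A B s₀ := by
  have hs₁ := S.lt_one
  by_contra! hneg
  -- Otherwise `y` is convex on `[s₀, 1]` and vanishes at both ends, hence is nonpositive.
  have hneg' : ∀ s ∈ Set.Ioo s₀ 1, potentialNumer E A B s ≤ 0 := by
    intro s hs
    have hsum : 0 ≤ s + s₀ := by linarith [hs.1]
    have hfactor : 0 ≤ E * (s + s₀) + (A - B) * 2 + (A + B) * (s + s₀) := by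
      have := S.E_nonneg
      have := S.B_nonneg
      have := S.B_le_A
      have : 0 ≤ A - B := by linarith
      have : 0 ≤ A + B := by linarith
      positivity
    linarith [potentialNumer_sub E A B s s₀, mul_nonneg hfactor (sub_nonneg.2 hs.1.le)]
  have hconv : ConvexOn ℝ (Set.Icc s₀ 1) y := by
    refine convexOn_of_hasDerivWithinAt2_nonneg (f' := y')
      (f'' := fun s => -(potentialNumer E A B s / (1 - s ^ 2) ^ 2) * y s) (convex_Icc _ _)
      S.continuous.continuousOn ?_ ?_ ?_ <;> rw [interior_Icc] <;> intro s hs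
    · exact (S.hasDerivAt s ⟨by linarith [hs.1], hs.2⟩).hasDerivWithinAt
    · exact (S.hasDerivAt_deriv s ⟨by linarith [hs.1], hs.2⟩).hasDerivWithinAt
    · exact mul_nonneg (neg_nonneg.2 (div_nonpos_of_nonpos_of_nonneg (hneg' s hs)
        (by positivity))) (S.pos s ⟨by linarith [hs.1], hs.2⟩ hs.1).le
  have hmid := hconv.2 (Set.left_mem_Icc.2 hs₁.le) (Set.right_mem_Icc.2 hs₁.le)
    (show (0 : ℝ) ≤ 1 / 2 by norm_num) (show (0 : ℝ) ≤ 1 / 2 by norm_num) (by norm_num)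
  rw [S.apply_zero, S.apply_one, smul_zero, add_zero, smul_eq_mul, smul_eq_mul] at hmid
  exact hmid.not_gt (S.pos _ ⟨by linarith, by linarith⟩ (by linarith))

lemma E_le (S : NormalForm y y' E A B s₀) {N : ℝ} (ht : 0 ≤ t) (hst : s₀ ≤ t) (hδ : 0 < δ)
    (hδ1 : t + 2 * δ ≤ 1) (hN : 1 ≤ N) (hA : A ≤ N ^ 2) : E ≤ ((π / δ) ^ 2 + 5) / δ * N ^ 2 := by
  obtain ⟨s, ⟨hts, hs⟩, hlt⟩ := S.exists_potentialNumer_lt ht hst hδ (by linarith)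
  have hs0 : 0 ≤ s := ht.trans hts
  have hE : E * δ ≤ E * (1 - s ^ 2) := mul_le_mul_of_nonneg_left (by nlinarith) S.E_nonneg
  have hAs : A * (1 + s) ^ 2 ≤ N ^ 2 * 2 ^ 2 := by
    gcongr
    linarith
  have hBs : B * (1 - s) ^ 2 ≤ N ^ 2 * 1 := by
    gcongr
    · exact S.B_le_A.trans hA
    · nlinarith
  have hπ : (π / δ) ^ 2 ≤ (π / δ) ^ 2 * N ^ 2 :=
    le_mul_of_one_le_right (by positivity) (one_le_pow₀ hN)
  rw [div_mul_eq_mul_div, le_div_iff₀ hδ]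
  unfold potentialNumer at hlt
  linarith

lemma abs_potentialNumer_sub_le (S : NormalForm y y' E A B s₀) {C N s : ℝ} (hs₀ : 0 ≤ s₀)
    (hA : A ≤ N ^ 2) (hE : E ≤ C * N ^ 2) (hs : |s| ≤ 1) :
    |potentialNumer E A B s - potentialNumer E A B s₀| ≤ (2 * C + 6) * N ^ 2 * |s - s₀| := by
  have hs₁ := S.lt_one
  have hE0 := S.E_nonneg
  have hB := S.B_nonneg
  have hBA := S.B_le_A
  rw [potentialNumer_sub, abs_neg, abs_mul]
  refine mul_le_mul_of_nonneg_right ?_ (abs_nonneg _)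
  rw [abs_le] at hs ⊢
  constructor <;> nlinarith

end NormalForm

end NormalForm

section Window

variable {δ ζ K η : ℝ}

lemma eventually_abs_potentialNumer_le (hδ : 0 < δ) (hζ : 0 < ζ) (K : ℝ) :
    ∀ᶠ N : ℝ in atTop, ∀ {y y' : ℝ → ℝ} {E A B s₀ : ℝ}, NormalForm y y' E A B s₀ → 0 ≤ s₀ →
      A ≤ N ^ 2 → s₀ + 3 * δ ≤ 1 → ∀ s, |s - s₀| ≤ K / N →
        |potentialNumer E A B s| ≤ ζ * N ^ 2 := by
  set L : ℝ := 2 * (((π / δ) ^ 2 + 5) / δ) + 6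
  have hL : 0 < L := by positivity
  set ρ := min δ (ζ / (4 * L))
  have hρ : 0 < ρ := lt_min hδ (by positivity)
  have hLρ : L * ρ ≤ ζ / 4 :=
    (mul_le_mul_of_nonneg_left (min_le_right _ _) hL.le).trans_eq (by field_simp)
  have hKN : ∀ᶠ N : ℝ in atTop, K / N ≤ ρ :=
    (tendsto_const_nhds.div_atTop tendsto_id).eventually_le_const hρ
  have hsq : ∀ᶠ N : ℝ in atTop, (π / ρ) ^ 2 / (ζ / 4) ≤ N ^ 2 :=
    (tendsto_pow_atTop two_ne_zero).eventually_ge_atTop _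
  filter_upwards [eventually_ge_atTop 1, hKN, hsq] with N hN hKN hsq
  intro y y' E A B s₀ S hs₀ hA hδ₀ s hs
  rw [div_le_iff₀ (by positivity)] at hsq
  have hρδ : ρ ≤ δ := min_le_left _ _
  have hE := S.E_le hs₀ le_rfl hδ (by linarith) hN hA
  have hLip : ∀ t, |t - s₀| ≤ ρ →
      |potentialNumer E A B t - potentialNumer E A B s₀| ≤ ζ / 4 * N ^ 2 := by
    intro t ht
    have ht' := abs_le.1 ht
    calc |potentialNumer E A B t - potentialNumer E A B s₀| ≤ L * N ^ 2 * |t - s₀| :=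
          S.abs_potentialNumer_sub_le hs₀ hA hE (abs_le.2 ⟨by linarith, by linarith⟩)
      _ ≤ L * N ^ 2 * ρ := by gcongr
      _ = L * ρ * N ^ 2 := by ring
      _ ≤ ζ / 4 * N ^ 2 := by gcongr
  obtain ⟨t, ht, hlt⟩ := S.exists_potentialNumer_lt hs₀ le_rfl hρ (by linarith)
  have hts := abs_le.1 (hLip t (abs_le.2 ⟨by linarith [ht.1], by linarith [ht.2]⟩))
  have hss := abs_le.1 (hLip s (hs.trans hKN))
  have h₀ := S.potentialNumer_nonneg hs₀
  rw [abs_le]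
  constructor <;> nlinarith

lemma eventually_abs_sub_linear_le (hδ : 0 < δ) (hη : 0 < η) (hK : 0 < K) :
    ∀ᶠ N : ℝ in atTop, ∀ {y y' : ℝ → ℝ} {E A B s₀ : ℝ}, NormalForm y y' E A B s₀ → 0 ≤ s₀ →
      A ≤ N ^ 2 → s₀ + 3 * δ ≤ 1 →
        y' s₀ ≠ 0 ∧ ∀ s, |s - s₀| ≤ K / N → |y s - y' s₀ * (s - s₀)| ≤ η * |y' s₀| * |s - s₀| := by
  set η' := min η 1
  have hη' : 0 < η' := lt_min hη one_pos
  have hKN : ∀ᶠ N : ℝ in atTop, K / N ≤ δ :=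
    (tendsto_const_nhds.div_atTop tendsto_id).eventually_le_const hδ
  filter_upwards [eventually_gt_atTop 0, hKN,
    eventually_abs_potentialNumer_le hδ (ζ := η' * δ ^ 2 / (2 * K ^ 2)) (by positivity) K]
    with N hN hKN hQ
  intro y y' E A B s₀ S hs₀ hA hδ₀
  have hKN0 : 0 < K / N := by positivity
  have hmem : ∀ s ∈ Set.Icc (s₀ - K / N) (s₀ + K / N), |s - s₀| ≤ K / N ∧
      s ∈ Set.Ioo (-1 : ℝ) 1 ∧ δ ≤ 1 - s ^ 2 := fun s hs =>
    ⟨abs_le.2 ⟨by linarith [hs.1], by linarith [hs.2]⟩, ⟨by linarith [hs.1], by linarith [hs.2]⟩,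
      by nlinarith [hs.1, hs.2]⟩
  have hβ : η' * δ ^ 2 / (2 * K ^ 2) * N ^ 2 / δ ^ 2 * (K / N) ^ 2 = η' / 2 := by field_simp
  have hlin : ∀ s, |s - s₀| ≤ K / N →
      |y s - y' s₀ * (s - s₀)| ≤ η' * |y' s₀| * |s - s₀| := by
    intro s hs
    have hs' := abs_le.1 hs
    refine (abs_sub_linear_le hKN0.le (by positivity) (hβ.trans_le ?_)
      (fun s hs => S.hasDerivAt s (hmem s hs).2.1)
      (fun s hs => S.hasDerivAt_deriv s (hmem s hs).2.1)
      S.apply_zero (fun s hs => ?_) ⟨by linarith, by linarith⟩).trans_eq ?_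
    · linarith [min_le_right η 1]
    · obtain ⟨hs, -, hδs⟩ := hmem s hs
      rw [abs_div, abs_sq]
      have := hQ S hs₀ hA hδ₀ s hs
      gcongr
    · rw [hβ]
      ring
  refine ⟨fun hY => ?_, fun s hs => (hlin s hs).trans ?_⟩
  · have hzero := hlin (s₀ + K / N) (by rw [add_sub_cancel_left, abs_of_pos hKN0])
    rw [hY, zero_mul, sub_zero, abs_zero, mul_zero, zero_mul] at hzero
    exact (S.pos (s₀ + K / N) ⟨by linarith, by linarith⟩ (by linarith)).ne' (abs_nonpos_iff.1 hzero)
  · gcongr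
    exact min_le_left _ _

lemma abs_sub_linear_le_of_mul_eq_sq {x y Y G q q₀ c : ℝ} (hη : η ≤ 1) (hc : 0 < c) (hq : 0 < q)
    (hq₀ : 0 < q₀) (hqq : |q - q₀| ≤ η * q) (hx : x ≠ 0) (hy : |y - Y * x| ≤ η * |Y| * |x|)
    (hG : x * G * q = c * y ^ 2) :
    |G - c * Y ^ 2 / q₀ * x| ≤ 7 * η * (c * Y ^ 2 / q₀) * |x| := by
  have hη0 : 0 ≤ η := nonneg_of_mul_nonneg_left ((abs_nonneg _).trans hqq) hq
  set D := c * Y ^ 2 / q₀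
  have hD : 0 ≤ D := by positivity
  have hDq : D * q₀ = c * Y ^ 2 := div_mul_cancel₀ _ hq₀.ne'
  have hsum : |y + Y * x| ≤ 3 * (|Y| * |x|) := by
    have hsplit := abs_add_le (y - Y * x) (2 * (Y * x))
    rw [abs_mul 2, abs_mul Y, abs_two, show y - Y * x + 2 * (Y * x) = y + Y * x by ring] at hsplit
    have : η * |Y| * |x| ≤ 1 * |Y| * |x| := by gcongr
    linarith
  have hGq : |G * q - D * q₀ * x| ≤ 3 * η * (D * q₀) * |x| := by
    refine le_of_mul_le_mul_left ?_ (abs_pos.2 hx)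
    calc |x| * |G * q - D * q₀ * x| = c * |y - Y * x| * |y + Y * x| := by
          rw [← abs_mul, hDq, ← abs_of_pos hc, ← abs_mul, ← abs_mul, abs_of_pos hc]
          congr 1
          linear_combination hG
      _ ≤ c * (η * |Y| * |x|) * (3 * (|Y| * |x|)) := by gcongr
      _ = |x| * (3 * η * (c * |Y| ^ 2) * |x|) := by ring
      _ = |x| * (3 * η * (D * q₀) * |x|) := by rw [hDq, sq_abs]
  have hq₀q : q₀ ≤ 2 * q := by nlinarith [(abs_le.1 hqq).1]
  refine le_of_mul_le_mul_right ?_ hq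
  calc |G - D * x| * q = |(G * q - D * q₀ * x) + D * x * (q₀ - q)| := by
        rw [← abs_of_pos hq, ← abs_mul, abs_of_pos hq]
        ring_nf
    _ ≤ |G * q - D * q₀ * x| + D * |x| * |q - q₀| := by
        refine (abs_add_le _ _).trans_eq ?_
        rw [abs_mul (D * x), abs_mul D, abs_of_nonneg hD, abs_sub_comm q₀]
    _ ≤ 3 * η * (D * (2 * q)) * |x| + D * |x| * (η * q) := by gcongr; exact hGq.trans (by gcongr)
    _ = 7 * η * D * |x| * q := by ring

lemma eventually_exists_le_linear (hδ : 0 < δ) (hη : 0 < η) (hK : 0 < K) :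
    ∀ᶠ N : ℝ in atTop, ∀ {y y' : ℝ → ℝ} {E A B s₀ : ℝ}, NormalForm y y' E A B s₀ → 0 ≤ s₀ →
      A ≤ N ^ 2 → s₀ + 3 * δ ≤ 1 → ∀ {G : ℝ → ℝ} {c : ℝ}, 0 < c → G s₀ = 0 →
        (∀ s ∈ Set.Ioo (-1 : ℝ) 1, (s - s₀) * G s * ((1 - s) ^ 2 * (1 + s)) = c * y s ^ 2) →
          ∃ D > 0, ∀ s, |s - s₀| ≤ K / N → G s ≤ D * ((s - s₀) + η / N) := by
  set η' := min 1 (η / (7 * K))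
  have hη' : 0 < η' := lt_min one_pos (by positivity)
  have hKN : ∀ᶠ N : ℝ in atTop, K / N ≤ min δ (η' * (2 * δ ^ 2) / 8) :=
    (tendsto_const_nhds.div_atTop tendsto_id).eventually_le_const (lt_min hδ (by positivity))
  filter_upwards [eventually_gt_atTop 0, hKN, eventually_abs_sub_linear_le hδ hη' hK]
    with N hN hKN hlin
  intro y y' E A B s₀ S hs₀ hA hδ₀ G c hc hG₀ hG
  obtain ⟨hKδ, hKη⟩ := le_min_iff.1 hKN
  obtain ⟨hY, hlin⟩ := hlin S hs₀ hA hδ₀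
  have hs₁ : 0 < 1 - s₀ := by linarith
  refine ⟨c * y' s₀ ^ 2 / ((1 - s₀) ^ 2 * (1 + s₀)), by positivity, fun s hs => ?_⟩
  set D := c * y' s₀ ^ 2 / ((1 - s₀) ^ 2 * (1 + s₀))
  have hs' := abs_le.1 hs
  have hq : 2 * δ ^ 2 ≤ (1 - s) ^ 2 * (1 + s) := by
    have : (2 * δ) ^ 2 * (1 / 2) ≤ (1 - s) ^ 2 * (1 + s) := by gcongr <;> linarith
    linarith
  have hqq : |(1 - s) ^ 2 * (1 + s) - (1 - s₀) ^ 2 * (1 + s₀)| ≤ 8 * |s - s₀| := by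
    rw [show (1 - s) ^ 2 * (1 + s) - (1 - s₀) ^ 2 * (1 + s₀) =
      (s ^ 2 + s * s₀ + s₀ ^ 2 - (s + s₀) - 1) * (s - s₀) by ring, abs_mul]
    gcongr
    rw [abs_le]
    constructor <;> nlinarith
  have hclose : |G s - D * (s - s₀)| ≤ 7 * η' * D * |s - s₀| := by
    rcases eq_or_ne s s₀ with rfl | hne
    · rw [hG₀, sub_self, mul_zero, sub_zero, abs_zero, mul_zero]
    · exact abs_sub_linear_le_of_mul_eq_sq (min_le_left _ _) hc (by nlinarith) (by positivity)
        (hqq.trans (by nlinarith)) (sub_ne_zero.2 hne) (hlin s hs)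
        (hG s ⟨by linarith, by linarith⟩)
  calc G s ≤ D * (s - s₀) + 7 * η' * D * |s - s₀| := by linarith [(abs_le.1 hclose).2]
    _ ≤ D * (s - s₀) + 7 * (η / (7 * K)) * D * (K / N) := by
        gcongr
        exact min_le_right _ _
    _ = D * ((s - s₀) + η / N) := by field_simp

end Window

section LiouvilleTransform
open Polynomial

/-- The factor `(1 - s)^a (1 + s)^b` which brings the Jacobi equation with parameters
`2a - 1` and `2b - 1` into Liouville normal form. -/
def liouvilleFactor (a b s : ℝ) : ℝ := (1 - s) ^ a * (1 + s) ^ b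

/-- The logarithmic derivative of `liouvilleFactor a b`. -/
def liouvilleLogDeriv (a b s : ℝ) : ℝ := -a / (1 - s) + b / (1 + s)

variable {a b s : ℝ}

lemma liouvilleFactor_pos (hs : s ∈ Set.Ioo (-1 : ℝ) 1) : 0 < liouvilleFactor a b s :=
  mul_pos (rpow_pos_of_pos (by linarith [hs.2]) _) (rpow_pos_of_pos (by linarith [hs.1]) _)

lemma continuous_liouvilleFactor (ha : 0 ≤ a) (hb : 0 ≤ b) : Continuous (liouvilleFactor a b) :=
  ((continuous_const.sub continuous_id).rpow_const fun _ => Or.inr ha).mul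
    ((continuous_const.add continuous_id).rpow_const fun _ => Or.inr hb)

lemma hasDerivAt_liouvilleFactor (hs : s ∈ Set.Ioo (-1 : ℝ) 1) :
    HasDerivAt (liouvilleFactor a b) (liouvilleLogDeriv a b s * liouvilleFactor a b s) s := by
  have hl : 1 - s ≠ 0 := by linarith [hs.2]
  have hr : 1 + s ≠ 0 := by linarith [hs.1]
  refine ((((hasDerivAt_id s).const_sub 1).rpow_const (p := a) (Or.inl hl)).mul
    (((hasDerivAt_id s).const_add 1).rpow_const (p := b) (Or.inl hr))).congr_deriv ?_
  simp only [id_eq, rpow_sub_one hl, rpow_sub_one hr, liouvilleFactor, liouvilleLogDeriv]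
  field_simp

lemma hasDerivAt_liouvilleLogDeriv (hs : s ∈ Set.Ioo (-1 : ℝ) 1) :
    HasDerivAt (liouvilleLogDeriv a b) (-a / (1 - s) ^ 2 - b / (1 + s) ^ 2) s := by
  have hl : 1 - s ≠ 0 := by linarith [hs.2]
  have hr : 1 + s ≠ 0 := by linarith [hs.1]
  refine (((hasDerivAt_const s (-a)).div ((hasDerivAt_id s).const_sub 1) hl).add
    ((hasDerivAt_const s b).div ((hasDerivAt_id s).const_add 1) hr)).congr_deriv ?_
  simp only [id_eq]
  field_simp
  ring

lemma normalForm_of_jacobi_ode {p : ℝ[X]} {Λ s₀ : ℝ} (hb : 1 ≤ b) (hba : b ≤ a) (hΛ : 0 ≤ Λ)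
    (hs₀ : s₀ < 1) (hroot : p.eval s₀ = 0) (hpos : ∀ x, s₀ < x → 0 < p.eval x)
    (hode : ∀ x, (1 - x ^ 2) * (derivative (derivative p)).eval x +
      (2 * (b - a) - 2 * (a + b) * x) * (derivative p).eval x + Λ * p.eval x = 0) :
    NormalForm (fun s => liouvilleFactor a b s * p.eval s)
      (fun s => liouvilleFactor a b s *
        (liouvilleLogDeriv a b s * p.eval s + (derivative p).eval s))
      (Λ + 2 * a * b) (a * (a - 1)) (b * (b - 1)) s₀ where
  B_nonneg := by nlinarith
  B_le_A := by nlinarith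
  E_nonneg := by nlinarith
  lt_one := hs₀
  hasDerivAt s hs :=
    ((hasDerivAt_liouvilleFactor hs).mul (p.hasDerivAt s)).congr_deriv (by ring)
  hasDerivAt_deriv s hs := by
    have hl : 0 < 1 - s := by linarith [hs.2]
    have hr : 0 < 1 + s := by linarith [hs.1]
    refine ((hasDerivAt_liouvilleFactor hs).mul (((hasDerivAt_liouvilleLogDeriv hs).mul
      (p.hasDerivAt s)).add ((derivative p).hasDerivAt s))).congr_deriv ?_
    have hp'' : (derivative (derivative p)).eval s =
        -((2 * (b - a) - 2 * (a + b) * s) * (derivative p).eval s + Λ * p.eval s) /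
          ((1 - s) * (1 + s)) := by
      rw [eq_div_iff (by positivity)]
      linear_combination hode s
    simp only [Pi.mul_apply, Pi.add_apply]
    rw [hp'', show 1 - s ^ 2 = (1 - s) * (1 + s) by ring]
    unfold liouvilleLogDeriv potentialNumer
    field_simp
    ring
  continuous := (continuous_liouvilleFactor (by linarith) (by linarith)).mul p.continuous
  apply_zero := by rw [hroot, mul_zero]
  apply_one := by rw [liouvilleFactor, sub_self, zero_rpow (by linarith), zero_mul, zero_mul]
  pos s hs hlt := mul_pos (liouvilleFactor_pos hs) (hpos s hlt)

end LiouvilleTransform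

section LevenshteinPolynomial
open Polynomial

/-- Levenshtein's extremal polynomial when the weights `w` are those of the Christoffel–Darboux
kernel with one argument at the largest root of `adjacent μ ε d`. -/
def levenshteinPoly (μ : ℝ) (ε : Parity) (d : ℕ) (w : ℕ → ℝ) : ℝ[X] :=
  levenshteinFactor μ ε d * ∑ i ∈ Finset.range d, C (w i) * adjacent μ ε i

variable {μ : ℝ} {ε : Parity} {d : ℕ}

lemma eval_levenshteinFactor_mul_adjacent_nonneg {s : ℝ} (hs : -1 ≤ s) :
    0 ≤ (levenshteinFactor μ ε d * adjacent μ ε d).eval s := by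
  have hs' : 0 ≤ 1 + s := by linarith
  cases ε <;> simp only [levenshteinFactor, adjacent, eval_mul, eval_add, eval_one, eval_X]
  · exact mul_self_nonneg _
  · rw [mul_assoc]
    exact mul_nonneg hs' (mul_self_nonneg _)

lemma exists_levenshteinPoly_mul_eq (hμ : 1 / 2 < μ) (ε : Parity) (hd : 1 ≤ d) :
    ∃ w c, (∀ i < d, 0 < w i) ∧ 0 < c ∧
      (levenshteinPoly μ ε d w).eval (largestRoot (adjacent μ ε d)) = 0 ∧
      ∀ s, (s - largestRoot (adjacent μ ε d)) * (levenshteinPoly μ ε d w).eval s =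
        c * (levenshteinFactor μ ε d * adjacent μ ε d).eval s := by
  obtain ⟨w, c, hw, hc, hid⟩ := (adjacentThreeTerm hμ ε).exists_pos_combination hd
  have hroot := (adjacentThreeTerm hμ ε).eval_largestRoot hd
  refine ⟨w, c, hw, hc, ?_, fun s => ?_⟩
  · cases ε <;> simp only [adjacent] at hroot <;>
      simp only [levenshteinPoly, levenshteinFactor, adjacent, eval_mul, hroot, mul_zero, zero_mul]
  · have := congrArg (eval s) hid
    simp only [levenshteinPoly, eval_mul, eval_sub, eval_X, eval_C] at this ⊢
    linear_combination (levenshteinFactor μ ε d).eval s * this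

lemma rpow_sq_eq_sqrt_pow_mul_pow {x a : ℝ} {l k : ℕ} (hx : 0 < x) (ha : 2 * a = l / 2 + k) :
    (x ^ a) ^ 2 = √x ^ l * x ^ k := by
  rw [sqrt_eq_rpow, ← rpow_natCast, ← rpow_natCast, ← rpow_natCast x, ← rpow_mul hx.le,
    ← rpow_mul hx.le, ← rpow_add hx]
  congr 1
  push_cast
  linarith

lemma sqrt_pow_mul_levenshteinFactor_mul_adjacent {l : ℕ} (hl : 2 * μ = l + 3) (ε : Parity) (d : ℕ)
    {s : ℝ} (hs : s ∈ Set.Ioo (-1 : ℝ) 1) :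
    √(1 - s ^ 2) ^ l * (levenshteinFactor μ ε d * adjacent μ ε d).eval s *
        ((1 - s) ^ 2 * (1 + s)) =
      (liouvilleFactor (μ / 2 + 1 / 4) ((adjacentBeta μ ε + 1) / 2) s *
        (adjacent μ ε d).eval s) ^ 2 := by
  have hr : 0 < 1 - s := by linarith [hs.2]
  have hr' : 0 < 1 + s := by linarith [hs.1]
  rw [show 1 - s ^ 2 = (1 - s) * (1 + s) by ring, sqrt_mul hr.le, liouvilleFactor, mul_pow,
    mul_pow, mul_pow, rpow_sq_eq_sqrt_pow_mul_pow (l := l) (k := 2) hr (by push_cast; linarith)]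
  cases ε
  · rw [rpow_sq_eq_sqrt_pow_mul_pow (l := l) (k := 1) hr'
      (by simp only [adjacentBeta]; push_cast; linarith)]
    simp only [levenshteinFactor, adjacent, eval_mul]
    ring
  · rw [rpow_sq_eq_sqrt_pow_mul_pow (l := l) (k := 2) hr'
      (by simp only [adjacentBeta]; push_cast; linarith)]
    simp only [levenshteinFactor, adjacent, eval_mul, eval_add, eval_one, eval_X]
    ring

lemma sub_le_adjacentBeta (μ : ℝ) (ε : Parity) : μ - 3 / 2 ≤ adjacentBeta μ ε := by
  cases ε <;> simp only [adjacentBeta] <;> linarith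

lemma adjacentBeta_le (μ : ℝ) (ε : Parity) : adjacentBeta μ ε ≤ μ - 1 / 2 := by
  cases ε <;> simp only [adjacentBeta] <;> linarith

lemma normalForm_adjacent (hμ : 5 / 2 ≤ μ) (ε : Parity) (hd : 1 ≤ d) :
    NormalForm
      (fun s => liouvilleFactor (μ / 2 + 1 / 4) ((adjacentBeta μ ε + 1) / 2) s *
        (adjacent μ ε d).eval s)
      (fun s => liouvilleFactor (μ / 2 + 1 / 4) ((adjacentBeta μ ε + 1) / 2) s *
        (liouvilleLogDeriv (μ / 2 + 1 / 4) ((adjacentBeta μ ε + 1) / 2) s *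
          (adjacent μ ε d).eval s + (derivative (adjacent μ ε d)).eval s))
      (d * (d + (μ - 1 / 2) + adjacentBeta μ ε + 1) +
        2 * (μ / 2 + 1 / 4) * ((adjacentBeta μ ε + 1) / 2))
      ((μ / 2 + 1 / 4) * (μ / 2 + 1 / 4 - 1))
      ((adjacentBeta μ ε + 1) / 2 * ((adjacentBeta μ ε + 1) / 2 - 1))
      (largestRoot (adjacent μ ε d)) := by
  have hβ := sub_le_adjacentBeta μ ε
  have hβ' := adjacentBeta_le μ ε
  have T := adjacentThreeTerm (show 1 / 2 < μ by linarith) ε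
  refine normalForm_of_jacobi_ode (by linarith) (by linarith) ?_ (T.largestRoot_lt_one hd)
    (T.eval_largestRoot hd) (fun x hx => T.eval_pos_of_largestRoot_lt hd hx) fun x => ?_
  · have := d.cast_nonneg (α := ℝ)
    exact mul_nonneg this (by linarith)
  · have hode := congrArg (eval x) (adjacent_ode μ ε d)
    simp only [eval_add, eval_mul, eval_sub, eval_one, eval_pow, eval_X, eval_C,
      eval_zero] at hode
    linear_combination hode

lemma exists_le_largestRoot_adjacent (hμ : 5 / 2 ≤ μ) (ε : Parity) {c : ℝ} (hc0 : 0 ≤ c)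
    (hc1 : c < 1) : ∃ d, 1 ≤ d ∧ c ≤ largestRoot (adjacent μ ε d) := by
  obtain ⟨d, hd⟩ := exists_nat_gt
    (((π / ((1 - c) / 2)) ^ 2 + 5) / ((1 - c) / 2) * (2 * μ + 1) ^ 2)
  refine ⟨d + 1, by omega, ?_⟩
  by_contra! hlt
  have hE := (normalForm_adjacent hμ ε (d := d + 1) (by omega)).E_le (N := 2 * μ + 1) hc0 hlt.le
    (δ := (1 - c) / 2) (by linarith) (by linarith) (by linarith) (by nlinarith)
  have hβ := sub_le_adjacentBeta μ ε
  have := d.cast_nonneg (α := ℝ)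
  push_cast at hE
  nlinarith

lemma exists_MLev_eq {m : ℕ} (hm : 5 ≤ m) {θ' : ℝ} (hc0 : 0 ≤ cos θ') (hc1 : cos θ' < 1) :
    ∃ ε d, 1 ≤ d ∧ cos θ' ≤ largestRoot (adjacent ((m : ℝ) / 2) ε d) ∧
      MLev m θ' = (levenshteinFactor ((m : ℝ) / 2) ε d).eval 1 := by
  have hm' : (5 : ℝ) ≤ m := by exact_mod_cast hm
  have hμ : (1 : ℝ) / 2 < m / 2 := by linarith
  obtain ⟨k, rfl⟩ := Nat.exists_eq_add_of_le' (show 1 ≤ m by omega)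
  set μ := ((k + 1 : ℕ) : ℝ) / 2 with hμ_def
  have hα : (((k + 1 : ℕ) : ℝ) - 3) / 2 + 1 = μ - 1 / 2 := by rw [hμ_def]; ring
  have hα' : (((k + 1 : ℕ) : ℝ) - 3) / 2 = adjacentBeta μ .odd := by
    rw [adjacentBeta, hμ_def]; ring
  have hodd := maxRoot_eq_largestRoot_adjacent hμ .odd
  have heven := maxRoot_eq_largestRoot_adjacent hμ .even
  rw [show adjacentBeta μ .even = μ - 1 / 2 from rfl] at heven
  have hlev : 1 ≤ levD (k + 1) θ' ∧
      cos θ' ≤ largestRoot (adjacent μ .even (levD (k + 1) θ')) := by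
    simp only [levD, hα, heven]
    exact Nat.sInf_mem (exists_le_largestRoot_adjacent (by linarith) .even hc0 hc1)
  rw [MLev, hα, hα', hodd]
  split_ifs with hlt
  · refine ⟨.even, levD (k + 1) θ', hlev.1, hlev.2, ?_⟩
    rw [levenshteinFactor, eval_mul, eval_one_gegenbauer_half]
    simp [one_add_one_eq_two]
  · refine ⟨.odd, levD (k + 1) θ', hlev.1, not_lt.1 hlt, ?_⟩
    obtain ⟨e, he⟩ := Nat.exists_eq_add_of_le' hlev.1
    rw [he, levenshteinFactor, gegenbauerPair, eval_add, eval_one_gegenbauer_half,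
      eval_one_gegenbauer_half, show e + 1 + (k + 1) - 2 = e + k by omega]
    rfl

lemma eval_levenshteinPoly_nonpos {w : ℕ → ℝ} {c s₀ s : ℝ} (hc : 0 < c)
    (h₀ : (levenshteinPoly μ ε d w).eval s₀ = 0)
    (hid : ∀ s, (s - s₀) * (levenshteinPoly μ ε d w).eval s =
      c * (levenshteinFactor μ ε d * adjacent μ ε d).eval s)
    (hs : -1 ≤ s) (hs₀ : s ≤ s₀) : (levenshteinPoly μ ε d w).eval s ≤ 0 := by
  rcases hs₀.eq_or_lt with rfl | hlt
  · exact h₀.le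
  · refine nonpos_of_mul_nonneg_right ?_ (sub_neg.2 hlt)
    rw [hid]
    exact mul_nonneg hc.le (eval_levenshteinFactor_mul_adjacent_nonneg hs)

lemma eventually_exists_levenshteinPoly {δ η K : ℝ} (hδ : 0 < δ) (hη : 0 < η) (hK : 0 < K) :
    ∀ᶠ l : ℕ in atTop, ∀ {μ : ℝ}, 2 * μ = l + 3 → ∀ {ε d s₀}, 1 ≤ d →
      largestRoot (adjacent μ ε d) = s₀ → 0 ≤ s₀ → ∃ w, (∀ i < d, 0 < w i) ∧
        (∀ s, -1 ≤ s → s ≤ s₀ → (levenshteinPoly μ ε d w).eval s ≤ 0) ∧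
        (s₀ + 3 * δ ≤ 1 → ∃ D > 0, ∀ s, |s - s₀| ≤ K / (l + 4) →
          √(1 - s ^ 2) ^ l * (levenshteinPoly μ ε d w).eval s ≤ D * (s - s₀ + η / (l + 4))) := by
  have hcast : Tendsto (fun l : ℕ => (l : ℝ) + 4) atTop atTop :=
    tendsto_atTop_add_const_right _ _ tendsto_natCast_atTop_atTop
  filter_upwards [hcast.eventually (eventually_exists_le_linear hδ hη hK),
    eventually_ge_atTop 2] with l hlin hl
  rintro μ hμ ε d _ hd rfl hs₀
  have hl' : (2 : ℝ) ≤ l := by exact_mod_cast hl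
  obtain ⟨w, c, hw, hc, h₀, hid⟩ := exists_levenshteinPoly_mul_eq (μ := μ) (by linarith) ε hd
  refine ⟨w, hw, fun s hs hs₁ => eval_levenshteinPoly_nonpos hc h₀ hid hs hs₁, fun hδ₀ => ?_⟩
  refine hlin (normalForm_adjacent (by linarith) ε hd) hs₀ (by nlinarith) hδ₀ hc ?_ fun s hs => ?_
  · rw [h₀, mul_zero]
  · rw [← sqrt_pow_mul_levenshteinFactor_mul_adjacent hμ ε d hs]
    linear_combination √(1 - s ^ 2) ^ l * ((1 - s) ^ 2 * (1 + s)) * hid s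

end LevenshteinPolynomial

section Sign

lemma projectedInner_eq_div_sqrt {u : ℝ} (hu : u ^ 2 ≤ 1) (t v : ℝ) :
    projectedInner t u v = (t - u * v) / √((1 - u * v) ^ 2 - (u - v) ^ 2) := by
  rw [projectedInner, ← sqrt_mul (by linarith)]
  ring_nf

lemma div_sqrt_sq_sub_le {X Z : ℝ} (hX : 0 < X) (hZ : 0 ≤ Z) (hZX : 2 * Z ≤ X ^ 2) :
    X / √(X ^ 2 - Z) ≤ 1 + Z / X ^ 2 := by
  have hpos : 0 < X ^ 2 - Z := by nlinarith
  obtain ⟨z, rfl⟩ : ∃ z, Z = z * X ^ 2 := ⟨Z / X ^ 2, by field_simp⟩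
  have hX2 : 0 < X ^ 2 := by positivity
  have hz : 0 ≤ z := nonneg_of_mul_nonneg_left hZ hX2
  have hz2 : z ≤ 1 / 2 := by nlinarith
  have hone : 0 ≤ z * (1 - z - z ^ 2) := mul_nonneg hz (by nlinarith)
  rw [mul_div_cancel_right₀ _ hX2.ne', div_le_iff₀ (sqrt_pos.2 hpos)]
  refine le_of_sq_le_sq ?_ (by positivity)
  rw [mul_pow, sq_sqrt hpos.le]
  nlinarith

lemma projectedInner_le {c t u v : ℝ} (hc : c ≤ 1) (htc : t ≤ c) (hu : u ^ 2 ≤ 1)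
    (huv : u * v < 1) (hsub : 2 * (u - v) ^ 2 ≤ (1 - u * v) ^ 2) :
    projectedInner t u v ≤ (c - u * v) / (1 - u * v) + (u - v) ^ 2 / (1 - u * v) ^ 2 := by
  have hX : 0 < 1 - u * v := by linarith
  rw [projectedInner_eq_div_sqrt hu]
  have hfactor := div_sqrt_sq_sub_le hX (sq_nonneg (u - v)) hsub
  set X := 1 - u * v
  set R := √(X ^ 2 - (u - v) ^ 2)
  have hR : 0 < R := sqrt_pos.2 (by nlinarith [pow_pos hX 2])
  have hRX : R ≤ X := sqrt_le_iff.2 ⟨hX.le, by nlinarith [sq_nonneg (u - v)]⟩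
  have hz : 0 ≤ (u - v) ^ 2 / X ^ 2 := by positivity
  refine (div_le_div_of_nonneg_right (sub_le_sub_right htc _) hR.le).trans ?_
  rcases le_or_gt 0 (c - u * v) with hnonneg | hneg
  · have hq : (c - u * v) / X ≤ 1 := (div_le_one hX).2 (sub_le_sub_right hc _)
    calc (c - u * v) / R = (c - u * v) / X * (X / R) := by field_simp
      _ ≤ (c - u * v) / X * (1 + (u - v) ^ 2 / X ^ 2) := by gcongr
      _ ≤ (c - u * v) / X + (u - v) ^ 2 / X ^ 2 := by nlinarith
  · have : (c - u * v) / R ≤ (c - u * v) / X := by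
      rw [div_le_div_iff₀ hR hX]
      nlinarith
    linarith

lemma sub_div_one_sub_le_tangent {c' r p : ℝ} (hc' : c' ≤ 1) (hr : r ^ 2 < 1) (hp : p < 1) :
    (c' + r ^ 2 * (1 - c') - p) / (1 - p) ≤ c' - (1 - c') / (1 - r ^ 2) * (p - r ^ 2) := by
  have hr' : 0 < 1 - r ^ 2 := by linarith
  have hp' : 0 < 1 - p := by linarith
  have hremainder : c' - (1 - c') / (1 - r ^ 2) * (p - r ^ 2) -
      (c' + r ^ 2 * (1 - c') - p) / (1 - p) =
        (1 - c') * (p - r ^ 2) ^ 2 / ((1 - r ^ 2) * (1 - p)) := by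
    field_simp
    ring
  have : 0 ≤ (1 - c') * (p - r ^ 2) ^ 2 / ((1 - r ^ 2) * (1 - p)) :=
    div_nonneg (mul_nonneg (by linarith) (sq_nonneg _)) (by positivity)
  linarith

lemma projectedInner_le_affine {c' r e p t u v : ℝ} (hc' : c' ≤ 1) (hr : r ^ 2 < 1) (hp : 0 < p)
    (hep : 8 * e ^ 2 ≤ p ^ 2) (hu : |u - r| ≤ e) (hv : |v - r| ≤ e) (hu1 : u ^ 2 ≤ 1)
    (huv : p ≤ 1 - u * v) (ht : t ≤ c' + r ^ 2 * (1 - c')) :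
    projectedInner t u v ≤ c' - (1 - c') / (1 - r ^ 2) * r * (u - r) -
      (1 - c') / (1 - r ^ 2) * r * (v - r) + ((1 - c') / (1 - r ^ 2) + 4 / p ^ 2) * e ^ 2 := by
  have htangent := sub_div_one_sub_le_tangent hc' hr (by linarith : u * v < 1)
  have hc : c' + r ^ 2 * (1 - c') ≤ 1 := by nlinarith
  have hκ : 0 ≤ (1 - c') / (1 - r ^ 2) := div_nonneg (by linarith) (by linarith)
  have he : 0 ≤ e := (abs_nonneg _).trans hu
  have hsub : (u - v) ^ 2 ≤ 4 * e ^ 2 := by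
    rw [abs_le] at hu hv
    nlinarith
  have hprod : |(u - r) * (v - r)| ≤ e ^ 2 := by
    rw [abs_mul, sq]
    gcongr
  have hquot : (u - v) ^ 2 / (1 - u * v) ^ 2 ≤ 4 / p ^ 2 * e ^ 2 := by
    rw [div_mul_eq_mul_div]
    gcongr
  have hpX : p ^ 2 ≤ (1 - u * v) ^ 2 := by gcongr
  have hle := projectedInner_le hc ht hu1 (by linarith : u * v < 1) (by linarith)
  have hcross := mul_le_mul_of_nonneg_left (neg_le_of_abs_le hprod) hκ
  linarith

lemma exists_projectedInner_le {c' r : ℝ} (hc' : c' < 1) (hr0 : 0 < r) (hr1 : r < 1) :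
    ∃ β > 0, ∃ C > 0, ∃ e₀ > 0, ∀ {e t u v : ℝ}, e ≤ e₀ → |u - r| ≤ e → |v - r| ≤ e →
      t ≤ c' + r ^ 2 * (1 - c') →
        projectedInner t u v ≤ c' - β * (u - r) - β * (v - r) + C * e ^ 2 := by
  have hr : 0 < 1 - r ^ 2 := by nlinarith
  have hκ : 0 < (1 - c') / (1 - r ^ 2) := div_pos (by linarith) hr
  set q := (1 + r) / 2 with hq
  have hp : 0 < 1 - q ^ 2 := by nlinarith
  refine ⟨_, mul_pos hκ hr0, (1 - c') / (1 - r ^ 2) + 4 / (1 - q ^ 2) ^ 2, by positivity,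
    min (min r ((1 - r) / 2)) ((1 - q ^ 2) / 3),
    lt_min (lt_min hr0 (by linarith)) (by positivity), fun {e t u v} he hu hv ht => ?_⟩
  obtain ⟨⟨her, he1⟩, hep⟩ : (e ≤ r ∧ e ≤ (1 - r) / 2) ∧ e ≤ (1 - q ^ 2) / 3 := by
    simpa only [le_min_iff] using he
  have he0 : 0 ≤ e := (abs_nonneg _).trans hu
  have mem_Icc : ∀ x, |x - r| ≤ e → 0 ≤ x ∧ x ≤ q := fun x hx => by
    rw [abs_le] at hx
    constructor <;> linarith
  have huv : u * v ≤ q ^ 2 := by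
    rw [sq]
    exact mul_le_mul (mem_Icc u hu).2 (mem_Icc v hv).2 (mem_Icc v hv).1 (by linarith)
  exact projectedInner_le_affine hc'.le (by linarith) hp (by nlinarith) hu hv
    (by nlinarith [mem_Icc u hu]) (by linarith) ht

lemma exists_abs_projectedInner_sub_le {q : ℝ} (hq : q < 1) :
    ∃ C > 0, ∀ {t u v u₀ v₀ e : ℝ}, t ∈ Set.Icc (-1) 1 → u ∈ Set.Icc 0 q → v ∈ Set.Icc 0 q →
      u₀ ∈ Set.Icc 0 q → v₀ ∈ Set.Icc 0 q → |u - u₀| ≤ e → |v - v₀| ≤ e →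
        |projectedInner t u v - projectedInner t u₀ v₀| ≤ C * e := by
  have hlocal : LocallyLipschitzOn (Set.Icc (-1) 1 ×ˢ Set.Icc 0 q ×ˢ Set.Icc 0 q)
      fun w : ℝ × ℝ × ℝ => projectedInner w.1 w.2.1 w.2.2 := by
    rintro ⟨t, u, v⟩ ⟨-, hu, hv⟩
    simp only at hu hv
    have hu' : 0 < 1 - u ^ 2 := by nlinarith [hu.1, hu.2]
    have hv' : 0 < 1 - v ^ 2 := by nlinarith [hv.1, hv.2]
    have hdiff :
        ContDiffAt ℝ 1 (fun w : ℝ × ℝ × ℝ => projectedInner w.1 w.2.1 w.2.2) (t, u, v) := by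
      have hnum : ContDiffAt ℝ 1 (fun w : ℝ × ℝ × ℝ => w.1 - w.2.1 * w.2.2) (t, u, v) := by fun_prop
      have hdu : ContDiffAt ℝ 1 (fun w : ℝ × ℝ × ℝ => 1 - w.2.1 ^ 2) (t, u, v) := by fun_prop
      have hdv : ContDiffAt ℝ 1 (fun w : ℝ × ℝ × ℝ => 1 - w.2.2 ^ 2) (t, u, v) := by fun_prop
      exact hnum.div ((hdu.sqrt hu'.ne').mul (hdv.sqrt hv'.ne'))
        (mul_pos (sqrt_pos.2 hu') (sqrt_pos.2 hv')).ne'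
    obtain ⟨C, s, hs, hC⟩ := hdiff.exists_lipschitzOnWith
    exact ⟨C, s, mem_nhdsWithin_of_mem_nhds hs, hC⟩
  obtain ⟨C, hC⟩ := hlocal.exists_lipschitzOnWith_of_compact
    (isCompact_Icc.prod (isCompact_Icc.prod isCompact_Icc))
  refine ⟨C + 1, by positivity, fun {t u v u₀ v₀ e} ht hu hv hu₀ hv₀ hue hve => ?_⟩
  have he : 0 ≤ e := (abs_nonneg _).trans hue
  have hdist := hC.dist_le_mul (t, u, v) ⟨ht, hu, hv⟩ (t, u₀, v₀) ⟨ht, hu₀, hv₀⟩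
  simp only [Prod.dist_eq, dist_self, Real.dist_eq] at hdist
  calc _ ≤ _ := hdist
    _ ≤ C * e := by gcongr; exact max_le he (max_le hue hve)
    _ ≤ (C + 1) * e := by nlinarith

lemma sqrt_one_sub_planeNormSq_pow {t u v : ℝ} (ht : t ^ 2 < 1) (hu : u ^ 2 < 1) (hv : v ^ 2 < 1)
    (k : ℕ) : √(1 - planeNormSq t u v) ^ k = (1 / √(1 - t ^ 2)) ^ k *
      (√(1 - u ^ 2) ^ k * √(1 - v ^ 2) ^ k) * √(1 - projectedInner t u v ^ 2) ^ k := by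
  have ht' : 0 < 1 - t ^ 2 := by linarith
  have hu' : 0 < 1 - u ^ 2 := by linarith
  have hv' : 0 < 1 - v ^ 2 := by linarith
  have hfactor : 1 - planeNormSq t u v = 1 / (1 - t ^ 2) * ((1 - u ^ 2) * (1 - v ^ 2)) *
      (1 - projectedInner t u v ^ 2) := by
    rw [planeNormSq, projectedInner, div_pow, mul_pow, sq_sqrt hu'.le, sq_sqrt hv'.le]
    field_simp
    ring
  rw [hfactor, sqrt_mul (by positivity), sqrt_mul (by positivity), sqrt_mul hu'.le,
    sqrt_div zero_le_one, sqrt_one, ← mul_pow, ← mul_pow, ← mul_pow]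

lemma IsCapWeight.integrable_mul {F g : ℝ → ℝ} (hF : IsCapWeight F) (hg : Continuous g) :
    Integrable fun u => F u * g u := by
  obtain ⟨M, hM⟩ := hF.exists_le
  have hbdd : ∀ᵐ u ∂volume.restrict (Set.Icc (0 : ℝ) 1), ‖F u‖ ≤ M :=
    Eventually.of_forall fun u => by rw [norm_of_nonneg (hF.nonneg u)]; exact hM u
  have hon : IntegrableOn (fun u => F u * g u) (Set.Icc 0 1) :=
    (hg.integrableOn_Icc).bdd_mul hF.measurable.aestronglyMeasurable hbdd
  refine (integrableOn_iff_integrable_of_support_subset fun u hu => ?_).1 hon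
  exact Set.Ioo_subset_Icc_self (hF.mem_Ioo (left_ne_zero_of_mul hu))

lemma integral_mul_mul_nonpos_of_le_affine {φ ψ : ℝ → ℝ} (hφ : ∀ u, 0 ≤ φ u)
    (hφi : Integrable φ) (hψi : Integrable fun u => φ u * ψ u) {G : ℝ × ℝ → ℝ} {D b : ℝ}
    (hD : 0 ≤ D) (hG : ∀ u v, φ u ≠ 0 → φ v ≠ 0 → G (u, v) ≤ D * (b - ψ u - ψ v))
    (hmoment : b * ∫ u, φ u ≤ 2 * ∫ u, φ u * ψ u) :
    ∫ w : ℝ × ℝ, φ w.1 * φ w.2 * G w ≤ 0 := by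
  by_cases hint : Integrable fun w : ℝ × ℝ => φ w.1 * φ w.2 * G w
  swap
  · rw [integral_undef hint]
  have i₀ : Integrable fun w : ℝ × ℝ => b * (φ w.1 * φ w.2) := (hφi.mul_prod hφi).const_mul b
  have i₁ : Integrable fun w : ℝ × ℝ => φ w.1 * ψ w.1 * φ w.2 := hψi.mul_prod hφi
  have i₂ : Integrable fun w : ℝ × ℝ => φ w.1 * (φ w.2 * ψ w.2) := hφi.mul_prod hψi
  have i₀₁ : Integrable fun w : ℝ × ℝ => b * (φ w.1 * φ w.2) - φ w.1 * ψ w.1 * φ w.2 := i₀.sub i₁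
  have hle : ∀ w : ℝ × ℝ, φ w.1 * φ w.2 * G w ≤
      D * (b * (φ w.1 * φ w.2) - φ w.1 * ψ w.1 * φ w.2 - φ w.1 * (φ w.2 * ψ w.2)) := by
    rintro ⟨u, v⟩
    by_cases hu : φ u = 0
    · simp [hu]
    by_cases hv : φ v = 0
    · simp [hv]
    calc φ u * φ v * G (u, v) ≤ φ u * φ v * (D * (b - ψ u - ψ v)) :=
          mul_le_mul_of_nonneg_left (hG u v hu hv) (mul_nonneg (hφ u) (hφ v))
      _ = _ := by ring
  calc _ ≤ ∫ w : ℝ × ℝ,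
          D * (b * (φ w.1 * φ w.2) - φ w.1 * ψ w.1 * φ w.2 - φ w.1 * (φ w.2 * ψ w.2)) :=
        integral_mono hint ((i₀₁.sub i₂).const_mul D) hle
    _ = D * (b * ((∫ u, φ u) * ∫ u, φ u) - (∫ u, φ u * ψ u) * (∫ u, φ u) -
          (∫ u, φ u) * ∫ u, φ u * ψ u) := by
        rw [integral_const_mul, integral_sub i₀₁ i₂, integral_sub i₀ i₁,
          integral_const_mul, Measure.volume_eq_prod, integral_prod_mul φ φ,
          integral_prod_mul (fun u => φ u * ψ u) φ, integral_prod_mul φ (fun u => φ u * ψ u)]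
    _ = D * ((∫ u, φ u) * (b * (∫ u, φ u) - 2 * ∫ u, φ u * ψ u)) := by ring
    _ ≤ 0 := mul_nonpos_of_nonneg_of_nonpos hD
        (mul_nonpos_of_nonneg_of_nonpos (integral_nonneg hφ) (by linarith))

lemma integral_planeNormSq_mul_nonpos {l : ℕ} {F ψ : ℝ → ℝ} (hF : IsCapWeight F)
    (hψ : Continuous ψ) {g : Polynomial ℝ} {t D b : ℝ} (ht : t ^ 2 < 1) (hD : 0 ≤ D)
    (hg : ∀ u v, F u ≠ 0 → F v ≠ 0 → √(1 - projectedInner t u v ^ 2) ^ l *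
      g.eval (projectedInner t u v) ≤ D * (b - ψ u - ψ v))
    (hmoment : b * ∫ u, F u * √(1 - u ^ 2) ^ l ≤ 2 * ∫ u, F u * √(1 - u ^ 2) ^ l * ψ u) :
    ∫ w : ℝ × ℝ, √(1 - planeNormSq t w.1 w.2) ^ l *
      (F w.1 * F w.2 * g.eval (projectedInner t w.1 w.2)) ≤ 0 := by
  set φ : ℝ → ℝ := fun u => F u * √(1 - u ^ 2) ^ l with hφ
  have hfactor : ∀ w : ℝ × ℝ, √(1 - planeNormSq t w.1 w.2) ^ l *
      (F w.1 * F w.2 * g.eval (projectedInner t w.1 w.2)) = (1 / √(1 - t ^ 2)) ^ l *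
        (φ w.1 * φ w.2 * (√(1 - projectedInner t w.1 w.2 ^ 2) ^ l *
          g.eval (projectedInner t w.1 w.2))) := by
    intro w
    by_cases h₁ : F w.1 = 0
    · simp [hφ, h₁]
    by_cases h₂ : F w.2 = 0
    · simp [hφ, h₂]
    rw [sqrt_one_sub_planeNormSq_pow ht (hF.sq_lt_one h₁) (hF.sq_lt_one h₂)]
    ring
  have hψi : Integrable fun u => φ u * ψ u := by
    simpa only [hφ, mul_assoc] using
      hF.integrable_mul (by fun_prop : Continuous fun u => √(1 - u ^ 2) ^ l * ψ u)
  simp only [hfactor]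
  rw [integral_const_mul]
  exact mul_nonpos_of_nonneg_of_nonpos (by positivity) <|
    integral_mul_mul_nonpos_of_le_affine (fun u => mul_nonneg (hF.nonneg u) (by positivity))
      (hF.integrable_mul (by fun_prop)) hψi hD
      (fun u v hu hv => hg u v (left_ne_zero_of_mul hu) (left_ne_zero_of_mul hv)) hmoment

end Sign

section Ramp
open Topology

/-- The length scale on which the measure `(1 - u²)^((n-3)/2) du`, `n = l + 4`, decays by a
factor `e` beyond the cap height `r`. -/
def rampScale (r : ℝ) (l : ℕ) : ℝ := (1 - r ^ 2) / (r * (l + 4))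

/-- The height with rescaled coordinate `τ`; the origin `τ = 0` lies `A` units below the cap
height `r`. -/
def rampNode (r A : ℝ) (l : ℕ) (τ : ℝ) : ℝ := r + (τ - A) * rampScale r l

/-- The cap weight that increases linearly from `0` over the rescaled interval `[0, T]`. -/
def rampWeight (r A T : ℝ) (l : ℕ) : ℝ → ℝ :=
  (Set.Icc (rampNode r A l 0) (rampNode r A l T)).indicator fun u => u - rampNode r A l 0

/-- The factor by which `√(1 - u²)` changes between the cap height `r` and the height with
rescaled coordinate `τ`. -/
def nodeRatio (r A : ℝ) (l : ℕ) (τ : ℝ) : ℝ := √(1 - rampNode r A l τ ^ 2) / √(1 - r ^ 2)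

variable {r A T : ℝ}

lemma rampScale_pos (hr0 : 0 < r) (hr1 : r < 1) (l : ℕ) : 0 < rampScale r l := by
  have : 0 < 1 - r ^ 2 := by nlinarith
  unfold rampScale
  positivity

lemma tendsto_natCast_mul_rampScale (hr0 : 0 < r) :
    Tendsto (fun l : ℕ => (l : ℝ) * rampScale r l) atTop (𝓝 ((1 - r ^ 2) / r)) := by
  have h := (tendsto_natCast_div_add_atTop (4 : ℝ)).mul_const ((1 - r ^ 2) / r)
  rw [one_mul] at h
  refine h.congr fun l => ?_
  unfold rampScale
  field_simp

lemma tendsto_rampScale (r : ℝ) : Tendsto (rampScale r) atTop (𝓝 0) := by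
  have h := (tendsto_const_div_atTop_nhds_zero_nat ((1 - r ^ 2) / r)).comp
    (tendsto_add_atTop_nat 4)
  refine h.congr fun l => ?_
  simp only [Function.comp_apply, rampScale]
  push_cast
  rw [div_div]

lemma rampNode_eq_mul_add (r A : ℝ) (l : ℕ) (τ : ℝ) :
    rampNode r A l τ = rampScale r l * τ + rampNode r A l 0 := by
  unfold rampNode
  ring

lemma continuous_rampNode (r A : ℝ) (l : ℕ) : Continuous (rampNode r A l) := by
  unfold rampNode
  fun_prop

lemma tendsto_rampNode (r A τ : ℝ) :
    Tendsto (fun l => rampNode r A l τ) atTop (𝓝 r) := by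
  simpa only [rampNode, mul_zero, add_zero] using
    ((tendsto_rampScale r).const_mul (τ - A)).const_add r

lemma abs_sub_le_of_rampWeight_ne_zero (hr0 : 0 < r) (hr1 : r < 1) (hA : 0 ≤ A) (hAT : A ≤ T)
    {l : ℕ} {u : ℝ} (hu : rampWeight r A T l u ≠ 0) : |u - r| ≤ T * rampScale r l := by
  have hs := rampScale_pos hr0 hr1 l
  have hmem := Set.mem_of_indicator_ne_zero hu
  rw [Set.mem_Icc, rampNode, rampNode] at hmem
  rw [abs_le]
  constructor <;> nlinarith

lemma eventually_isCapWeight_rampWeight (A T : ℝ) (hr0 : 0 < r) (hr1 : r < 1) :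
    ∀ᶠ l in atTop, IsCapWeight (rampWeight r A T l) := by
  filter_upwards [(tendsto_rampNode r A 0).eventually_const_lt hr0,
    (tendsto_rampNode r A T).eventually_lt_const hr1] with l h0 h1
  have hmem : ∀ {u}, rampWeight r A T l u ≠ 0 →
      rampNode r A l 0 ≤ u ∧ u ≤ rampNode r A l T := Set.mem_of_indicator_ne_zero
  refine ⟨Measurable.indicator (by fun_prop) measurableSet_Icc,
    Set.indicator_nonneg fun u hu => sub_nonneg.2 hu.1, ⟨1, fun u => ?_⟩,
    fun hu => ⟨h0.trans_le (hmem hu).1, (hmem hu).2.trans_lt h1⟩⟩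
  exact Set.indicator_le' (fun u hu => by linarith [hu.2]) (fun u _ => zero_le_one) u

lemma integral_comp_rampWeight (hr0 : 0 < r) (hr1 : r < 1) (hT : 0 ≤ T) (l : ℕ) {Φ : ℝ → ℝ → ℝ}
    (hΦ : ∀ u, Φ 0 u = 0) : ∫ u, Φ (rampWeight r A T l u) u =
      rampScale r l * ∫ τ in (0 : ℝ)..T, Φ (rampScale r l * τ) (rampNode r A l τ) := by
  have hs := rampScale_pos hr0 hr1 l
  have hle : rampNode r A l 0 ≤ rampNode r A l T := by
    rw [rampNode_eq_mul_add r A l T]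
    nlinarith
  have hindicator : (fun u => Φ (rampWeight r A T l u) u) =
      (Set.Icc (rampNode r A l 0) (rampNode r A l T)).indicator
        fun u => Φ (u - rampNode r A l 0) u := by
    ext u
    simp only [rampWeight, Set.indicator_apply]
    split_ifs <;> simp [hΦ]
  have hsubst := intervalIntegral.smul_integral_comp_mul_add (a := 0) (b := T)
    (fun u => Φ (u - rampNode r A l 0) u) (rampScale r l) (rampNode r A l 0)
  simp only [← rampNode_eq_mul_add, smul_eq_mul] at hsubst
  rw [hindicator, integral_indicator measurableSet_Icc, integral_Icc_eq_integral_Ioc,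
    ← intervalIntegral.integral_of_le hle, ← hsubst]
  have hsub : ∀ τ, rampNode r A l τ - rampNode r A l 0 = rampScale r l * τ := fun τ => by
    rw [rampNode_eq_mul_add r A l τ, add_sub_cancel_right]
  simp only [hsub]

lemma sqrt_one_sub_rampNode_sq_pow (A : ℝ) (hr : r ^ 2 < 1) (l m : ℕ) (τ : ℝ) :
    √(1 - rampNode r A l τ ^ 2) ^ m = √(1 - r ^ 2) ^ m * nodeRatio r A l τ ^ m := by
  rw [← mul_pow, nodeRatio, mul_div_cancel₀ _ (sqrt_pos.2 (by linarith)).ne']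

lemma integral_rampWeight_mul (hr0 : 0 < r) (hr1 : r < 1) (hT : 0 ≤ T) (l m : ℕ) :
    ∫ u, rampWeight r A T l u * √(1 - u ^ 2) ^ m =
      rampScale r l ^ 2 * √(1 - r ^ 2) ^ m * ∫ τ in (0 : ℝ)..T, τ * nodeRatio r A l τ ^ m := by
  rw [integral_comp_rampWeight hr0 hr1 hT l (Φ := fun a u => a * √(1 - u ^ 2) ^ m) (by simp),
    ← intervalIntegral.integral_const_mul, ← intervalIntegral.integral_const_mul]
  simp only [sqrt_one_sub_rampNode_sq_pow A (by nlinarith : r ^ 2 < 1)]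
  congr! 2
  ring

lemma integral_rampWeight_mul_mul_sub (hr0 : 0 < r) (hr1 : r < 1) (hT : 0 ≤ T) (l m : ℕ) :
    ∫ u, rampWeight r A T l u * √(1 - u ^ 2) ^ m * (u - r) =
      rampScale r l ^ 3 * √(1 - r ^ 2) ^ m *
        ∫ τ in (0 : ℝ)..T, τ * (τ - A) * nodeRatio r A l τ ^ m := by
  rw [integral_comp_rampWeight hr0 hr1 hT l (Φ := fun a u => a * √(1 - u ^ 2) ^ m * (u - r))
    (by simp), ← intervalIntegral.integral_const_mul, ← intervalIntegral.integral_const_mul]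
  simp only [sqrt_one_sub_rampNode_sq_pow A (by nlinarith : r ^ 2 < 1)]
  congr! 2
  rw [rampNode]
  ring

lemma integral_mul_rampWeight_sq (hr0 : 0 < r) (hr1 : r < 1) (hT : 0 ≤ T) (l m : ℕ) :
    ∫ u, √(1 - u ^ 2) ^ m * rampWeight r A T l u ^ 2 =
      rampScale r l ^ 3 * √(1 - r ^ 2) ^ m *
        ∫ τ in (0 : ℝ)..T, τ ^ 2 * nodeRatio r A l τ ^ m := by
  rw [integral_comp_rampWeight hr0 hr1 hT l (Φ := fun a u => √(1 - u ^ 2) ^ m * a ^ 2) (by simp),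
    ← intervalIntegral.integral_const_mul, ← intervalIntegral.integral_const_mul]
  simp only [sqrt_one_sub_rampNode_sq_pow A (by nlinarith : r ^ 2 < 1)]
  congr! 2
  ring

lemma nodeRatio_nonneg (r A : ℝ) (l : ℕ) (τ : ℝ) : 0 ≤ nodeRatio r A l τ := by
  unfold nodeRatio
  positivity

lemma continuous_nodeRatio (r A : ℝ) (l : ℕ) : Continuous (nodeRatio r A l) := by
  have := continuous_rampNode r A l
  unfold nodeRatio
  fun_prop

lemma tendsto_nodeRatio (A : ℝ) (hr : r ^ 2 < 1) (τ : ℝ) :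
    Tendsto (fun l => nodeRatio r A l τ) atTop (𝓝 1) := by
  have h := (((tendsto_rampNode r A τ).pow 2).const_sub 1).sqrt.div_const √(1 - r ^ 2)
  rwa [div_self (sqrt_pos.2 (by linarith)).ne'] at h

lemma nodeRatio_sq (hr : r ^ 2 < 1) {l : ℕ} {τ : ℝ} (hnode : rampNode r A l τ ^ 2 ≤ 1) :
    nodeRatio r A l τ ^ 2 = 1 - (τ - A) * (2 * r + (τ - A) * rampScale r l) / (1 - r ^ 2) *
      rampScale r l := by
  have hr' : 0 < 1 - r ^ 2 := by linarith
  rw [nodeRatio, div_pow, sq_sqrt (by linarith), sq_sqrt hr'.le, rampNode]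
  field_simp
  ring

lemma tendsto_nodeRatio_pow (A : ℝ) (hr0 : 0 < r) (hr1 : r < 1) (τ : ℝ) :
    Tendsto (fun l => nodeRatio r A l τ ^ l) atTop (𝓝 (exp (A - τ))) := by
  have hr : 0 < 1 - r ^ 2 := by nlinarith
  have hlim : Tendsto (fun l : ℕ => (l : ℝ) * (-((τ - A) * (2 * r + (τ - A) * rampScale r l) /
      (1 - r ^ 2) * rampScale r l))) atTop (𝓝 (2 * (A - τ))) := by
    have h := ((((tendsto_rampScale r).const_mul (τ - A)).const_add (2 * r)).const_mul
      (-(τ - A) / (1 - r ^ 2))).mul (tendsto_natCast_mul_rampScale hr0)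
    convert h using 2
    · field_simp
    · field_simp
      ring
  have hsqrt := (tendsto_one_add_pow_exp_of_tendsto hlim).sqrt
  rw [← exp_half, mul_div_cancel_left₀ _ two_ne_zero] at hsqrt
  refine hsqrt.congr' ?_
  have hlt : r ^ 2 < 1 := by linarith
  filter_upwards [((tendsto_rampNode r A τ).pow 2).eventually_le_const hlt] with l hnode
  rw [← sub_eq_add_neg, ← nodeRatio_sq hlt hnode, ← pow_mul, mul_comm, pow_mul,
    sqrt_sq (pow_nonneg (nodeRatio_nonneg _ _ _ _) _)]

lemma tendsto_nodeRatio_pow_add (A : ℝ) (hr0 : 0 < r) (hr1 : r < 1) (j : ℕ) (τ : ℝ) :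
    Tendsto (fun l => nodeRatio r A l τ ^ (l + j)) atTop (𝓝 (exp (A - τ))) := by
  have h := (tendsto_nodeRatio_pow A hr0 hr1 τ).mul
    ((tendsto_nodeRatio A (by nlinarith) τ).pow j)
  simpa only [← pow_add, one_pow, mul_one] using h

lemma nodeRatio_le_exp (hr0 : 0 < r) (hr1 : r < 1) {l : ℕ} {τ : ℝ} (hτ : 0 ≤ τ) :
    nodeRatio r A l τ ≤ exp (A / (l + 4)) := by
  have hr : 0 < 1 - r ^ 2 := by nlinarith
  rcases lt_or_ge 1 (rampNode r A l τ ^ 2) with hnode | hnode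
  · rw [nodeRatio, sqrt_eq_zero_of_nonpos (by linarith), zero_div]
    positivity
  refine le_of_sq_le_sq ?_ (exp_pos _).le
  have hlin : 2 * r * rampScale r l / (1 - r ^ 2) = 2 / (l + 4) := by
    unfold rampScale
    field_simp
  calc nodeRatio r A l τ ^ 2
      = 1 + (A - τ) * (2 * r * rampScale r l / (1 - r ^ 2)) -
          ((τ - A) * rampScale r l) ^ 2 / (1 - r ^ 2) := by
        rw [nodeRatio_sq (by linarith) hnode]
        ring
    _ ≤ 1 + A * (2 / (l + 4)) - 0 := by
        rw [hlin]
        gcongr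
        · linarith
        · positivity
    _ = A * 2 / (l + 4) + 1 := by ring
    _ ≤ exp (A * 2 / (l + 4)) := add_one_le_exp _
    _ = exp (A / (l + 4)) ^ 2 := by
        rw [← exp_nat_mul]
        push_cast
        ring_nf

lemma nodeRatio_pow_add_le (hr0 : 0 < r) (hr1 : r < 1) (hA : 0 ≤ A) (l j : ℕ) {τ : ℝ}
    (hτ : 0 ≤ τ) : nodeRatio r A l τ ^ (l + j) ≤ exp (A * (1 + j)) := by
  calc nodeRatio r A l τ ^ (l + j) ≤ exp (A / (l + 4)) ^ (l + j) :=
        pow_le_pow_left₀ (nodeRatio_nonneg _ _ _ _) (nodeRatio_le_exp hr0 hr1 hτ) _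
    _ = exp (A * ((l + j) / (l + 4))) := by
        rw [← exp_nat_mul]
        push_cast
        ring_nf
    _ ≤ exp (A * (1 + j)) := by
        gcongr
        rw [div_le_iff₀ (by positivity)]
        nlinarith [(Nat.cast_nonneg l : (0 : ℝ) ≤ l), (Nat.cast_nonneg j : (0 : ℝ) ≤ j)]

lemma tendsto_integral_mul_nodeRatio_pow (hr0 : 0 < r) (hr1 : r < 1) (hA : 0 ≤ A) (hT : 0 ≤ T)
    (j : ℕ) {f : ℝ → ℝ} (hf : Continuous f) :
    Tendsto (fun l : ℕ => ∫ τ in (0 : ℝ)..T, f τ * nodeRatio r A l τ ^ (l + j)) atTop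
      (𝓝 (∫ τ in (0 : ℝ)..T, f τ * exp (A - τ))) := by
  refine intervalIntegral.tendsto_integral_filter_of_dominated_convergence
    (fun τ => |f τ| * exp (A * (1 + j))) (Eventually.of_forall fun l => ?_)
    (Eventually.of_forall fun l => Eventually.of_forall fun τ hτ => ?_)
    (Continuous.intervalIntegrable (by fun_prop) _ _)
    (Eventually.of_forall fun τ _ => (tendsto_nodeRatio_pow_add A hr0 hr1 j τ).const_mul _)
  · exact (hf.mul ((continuous_nodeRatio r A l).pow _)).aestronglyMeasurable
  · rw [Set.uIoc_of_le hT] at hτ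
    rw [norm_mul, norm_eq_abs, norm_of_nonneg (pow_nonneg (nodeRatio_nonneg _ _ _ _) _)]
    exact mul_le_mul_of_nonneg_left (nodeRatio_pow_add_le hr0 hr1 hA l j hτ.1.le) (abs_nonneg _)

end Ramp

section RampParameters
open Topology Nat

lemma tendsto_integral_pow_mul_exp_neg (k : ℕ) :
    Tendsto (fun T => ∫ τ in (0 : ℝ)..T, τ ^ k * exp (-τ)) atTop (𝓝 (k ! : ℝ)) := by
  have hint := GammaIntegral_convergent (by positivity : (0 : ℝ) < k + 1)
  have hgamma := Gamma_eq_integral (by positivity : (0 : ℝ) < k + 1)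
  simp only [add_sub_cancel_right, rpow_natCast, mul_comm (exp _)] at hint hgamma
  rw [Gamma_nat_eq_factorial] at hgamma
  rw [hgamma]
  exact intervalIntegral_tendsto_integral_Ioi 0 hint tendsto_id

lemma integral_mul_exp_sub (f : ℝ → ℝ) (A T : ℝ) :
    ∫ τ in (0 : ℝ)..T, f τ * exp (A - τ) = exp A * ∫ τ in (0 : ℝ)..T, f τ * exp (-τ) := by
  rw [← intervalIntegral.integral_const_mul]
  simp only [sub_eq_add_neg, exp_add]
  congr! 2
  ring

/-- As `T → ∞` the first two moments tend to `exp A` and `2 * exp A`, so that `A < 2` is what the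
second condition allows, and `2 * exp (-2)` is the infimum of the ratios in the third. -/
lemma exists_ramp_moments {κ : ℝ} (hκ : 2 / exp 1 ^ 2 < κ) : ∃ A T : ℝ, 0 < A ∧ A ≤ T ∧
    0 < ∫ τ in (0 : ℝ)..T, τ * exp (A - τ) ∧
    0 < ∫ τ in (0 : ℝ)..T, τ * (τ - A) * exp (A - τ) ∧
    ∫ τ in (0 : ℝ)..T, τ ^ 2 * exp (A - τ) < κ * (∫ τ in (0 : ℝ)..T, τ * exp (A - τ)) ^ 2 := by
  have hκ2 : 2 < κ * exp 2 := by
    rw [div_lt_iff₀ (by positivity), ← exp_nat_mul] at hκ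
    simpa using hκ
  have hcont : Tendsto (fun A => κ * exp A) (𝓝[<] 2) (𝓝 (κ * exp 2)) :=
    ((continuous_exp.const_mul κ).tendsto 2).mono_left nhdsWithin_le_nhds
  obtain ⟨A, hκA, hA0, hA2⟩ := ((hcont.eventually_const_lt hκ2).and
    (Ioo_mem_nhdsLT (zero_lt_two (α := ℝ)))).exists
  have h₁ : Tendsto (fun T => ∫ τ in (0 : ℝ)..T, τ * exp (-τ)) atTop (𝓝 1) := by
    simpa using tendsto_integral_pow_mul_exp_neg 1
  have h₂ : Tendsto (fun T => ∫ τ in (0 : ℝ)..T, τ ^ 2 * exp (-τ)) atTop (𝓝 2) := by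
    simpa using tendsto_integral_pow_mul_exp_neg 2
  have hratio := h₂.eventually_lt ((h₁.pow 2).const_mul (κ * exp A)) (by simpa using hκA)
  have hmoment := (h₁.const_mul A).eventually_lt h₂ (by simpa using hA2)
  obtain ⟨T, hAT, hpos, hmoment, hratio⟩ := ((eventually_ge_atTop A).and
    ((h₁.eventually_const_lt zero_lt_one).and (hmoment.and hratio))).exists
  have hexp := exp_pos A
  refine ⟨A, T, hA0, hAT, ?_, ?_, ?_⟩ <;> simp only [integral_mul_exp_sub]
  · positivity
  · have hsplit : ∫ τ in (0 : ℝ)..T, τ * (τ - A) * exp (-τ) =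
        (∫ τ in (0 : ℝ)..T, τ ^ 2 * exp (-τ)) - A * ∫ τ in (0 : ℝ)..T, τ * exp (-τ) := by
      rw [← intervalIntegral.integral_const_mul, ← intervalIntegral.integral_sub
        (Continuous.intervalIntegrable (by fun_prop) _ _)
        (Continuous.intervalIntegrable (by fun_prop) _ _)]
      congr! 2
      ring
    rw [hsplit]
    exact mul_pos hexp (sub_pos.2 hmoment)
  · calc _ < exp A * (κ * exp A * (∫ τ in (0 : ℝ)..T, τ * exp (-τ)) ^ 2) := by gcongr
      _ = _ := by ring

end RampParameters

section RampSign
open Topology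

variable {r A T : ℝ}

lemma exists_sqrt_pow_mul_eval_le {α : Type*} {S : Set α} {P : α → ℝ} {l : ℕ} (hl : l ≠ 0)
    {g : Polynomial ℝ} {s₀ ρ η b : ℝ} (hneg : ∀ s, -1 ≤ s → s ≤ s₀ → g.eval s ≤ 0)
    (hwindow : s₀ ≤ b → ∃ D > 0, ∀ s, |s - s₀| ≤ ρ → √(1 - s ^ 2) ^ l * g.eval s ≤
      D * (s - s₀ + η)) (hb : ∀ p ∈ S, P p ≤ b)
    (hρ : ∀ p ∈ S, ∀ q ∈ S, s₀ < P q → |P p - s₀| ≤ ρ) :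
    ∃ D ≥ 0, ∀ p ∈ S, √(1 - P p ^ 2) ^ l * g.eval (P p) ≤ D * (P p - s₀ + η) := by
  by_cases hS : ∀ p ∈ S, P p ≤ s₀
  · refine ⟨0, le_rfl, fun p hp => ?_⟩
    rw [zero_mul]
    rcases le_or_gt (-1) (P p) with hPp | hPp
    · exact mul_nonpos_of_nonneg_of_nonpos (by positivity) (hneg _ hPp (hS p hp))
    · rw [sqrt_eq_zero_of_nonpos (by nlinarith), zero_pow hl, zero_mul]
  · push Not at hS
    obtain ⟨q, hq, hs₀⟩ := hS
    obtain ⟨D, hD, hle⟩ := hwindow (hs₀.le.trans (hb q hq))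
    exact ⟨D, hD.le, fun p hp => hle _ (hρ p hp q hq hs₀)⟩

lemma exists_eventually_projectedInner_rampWeight {c' : ℝ} (hc' : c' < 1) (hr0 : 0 < r)
    (hr1 : r < 1) (hA : 0 ≤ A) (hAT : A ≤ T) : ∃ β > 0, ∃ C, ∃ K > 0, ∀ᶠ l : ℕ in atTop,
      ∀ t, -1 ≤ t → t ≤ c' + r ^ 2 * (1 - c') →
      ∀ u v, rampWeight r A T l u ≠ 0 → rampWeight r A T l v ≠ 0 →
        projectedInner t u v ≤
          c' - β * (u - r) - β * (v - r) + C * (T * rampScale r l) ^ 2 ∧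
        projectedInner t u v ≤ c' + K * (T * rampScale r l) ∧
        ∀ u₀ v₀, rampWeight r A T l u₀ ≠ 0 → rampWeight r A T l v₀ ≠ 0 →
          |projectedInner t u v - projectedInner t u₀ v₀| ≤ K * (T * rampScale r l) := by
  obtain ⟨β, hβ, C, hC, e₀, he₀, hupper⟩ := exists_projectedInner_le hc' hr0 hr1
  obtain ⟨Λ, hΛ, hlip⟩ := exists_abs_projectedInner_sub_le (q := (1 + r) / 2) (by linarith)
  have hlim : Tendsto (fun l => T * rampScale r l) atTop (𝓝 0) := by
    simpa using (tendsto_rampScale r).const_mul T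
  refine ⟨β, hβ, C, 2 * Λ + 2 * β + C, by positivity, ?_⟩
  filter_upwards [hlim.eventually_le_const he₀, hlim.eventually_le_const one_pos,
    hlim.eventually_le_const (by linarith : 0 < (1 - r) / 2),
    eventually_isCapWeight_rampWeight A T hr0 hr1] with l he₀ he1 her hF t ht htc u v hu hv
  have hnear : ∀ {u}, rampWeight r A T l u ≠ 0 → |u - r| ≤ T * rampScale r l :=
    abs_sub_le_of_rampWeight_ne_zero hr0 hr1 hA hAT
  have hmem : ∀ {u}, rampWeight r A T l u ≠ 0 → u ∈ Set.Icc 0 ((1 + r) / 2) := fun hu =>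
    ⟨(hF.mem_Ioo hu).1.le, by linarith [(abs_le.1 (hnear hu)).2]⟩
  have hdist : ∀ {x y}, rampWeight r A T l x ≠ 0 → rampWeight r A T l y ≠ 0 →
      |x - y| ≤ 2 * (T * rampScale r l) := fun {x y} hx hy => by
    linarith [abs_sub_le x r y, abs_sub_comm r y, hnear hx, hnear hy]
  have htop := hupper he₀ (hnear hu) (hnear hv) htc
  have hu' := neg_le_of_abs_le (hnear hu)
  have hv' := neg_le_of_abs_le (hnear hv)
  have ht1 : t ≤ 1 := by nlinarith [mul_pos (sub_pos.2 hc') (by nlinarith : 0 < 1 - r ^ 2)]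
  generalize T * rampScale r l = e at *
  have he : 0 ≤ e := (abs_nonneg _).trans (hnear hu)
  refine ⟨htop, ?_, fun u₀ v₀ hu₀ hv₀ => ?_⟩
  · nlinarith [mul_nonneg hΛ.le he, mul_nonneg hC.le he]
  · calc _ ≤ Λ * (2 * e) := hlip ⟨ht, ht1⟩ (hmem hu) (hmem hv) (hmem hu₀) (hmem hv₀)
          (hdist hu hu₀) (hdist hv hv₀)
      _ ≤ _ := by nlinarith [mul_nonneg hβ.le he, mul_nonneg hC.le he]

lemma eventually_moment_rampWeight_le (hr0 : 0 < r) (hr1 : r < 1) (hA : 0 ≤ A) (hAT : A ≤ T)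
    {β η : ℝ} (C : ℝ) (hη : η * (r / (1 - r ^ 2)) * ∫ τ in (0 : ℝ)..T, τ * exp (A - τ) <
      2 * β * ∫ τ in (0 : ℝ)..T, τ * (τ - A) * exp (A - τ)) :
    ∀ᶠ l : ℕ in atTop, (η / (l + 4) + C * (T * rampScale r l) ^ 2) *
        ∫ u, rampWeight r A T l u * √(1 - u ^ 2) ^ l ≤
      2 * ∫ u, rampWeight r A T l u * √(1 - u ^ 2) ^ l * (β * (u - r)) := by
  have hT : 0 ≤ T := hA.trans hAT
  have hr : 0 < 1 - r ^ 2 := by nlinarith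
  have hfactor : Tendsto (fun l => η * (r / (1 - r ^ 2)) + C * T ^ 2 * rampScale r l) atTop
      (𝓝 (η * (r / (1 - r ^ 2)))) := by
    simpa using ((tendsto_rampScale r).const_mul (C * T ^ 2)).const_add (η * (r / (1 - r ^ 2)))
  have hmass := tendsto_integral_mul_nodeRatio_pow hr0 hr1 hA hT 0 continuous_id
  have hmoment := tendsto_integral_mul_nodeRatio_pow hr0 hr1 hA hT 0
    (by fun_prop : Continuous fun τ : ℝ => τ * (τ - A))
  filter_upwards [(hfactor.mul hmass).eventually_lt (hmoment.const_mul (2 * β)) hη] with l hlt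
  have hs := rampScale_pos hr0 hr1 l
  have hpull : ∫ u, rampWeight r A T l u * √(1 - u ^ 2) ^ l * (β * (u - r)) =
      β * ∫ u, rampWeight r A T l u * √(1 - u ^ 2) ^ l * (u - r) := by
    rw [← integral_const_mul]
    congr! 2
    ring
  have hscale : η / (l + 4) = η * (r / (1 - r ^ 2)) * rampScale r l := by
    unfold rampScale
    field_simp
  rw [hpull, integral_rampWeight_mul_mul_sub hr0 hr1 hT, integral_rampWeight_mul hr0 hr1 hT, hscale]
  simp only [id_eq, add_zero] at hlt
  have hpos : 0 ≤ rampScale r l ^ 3 * √(1 - r ^ 2) ^ l := by positivity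
  linear_combination mul_le_mul_of_nonneg_left hlt.le hpos

lemma eventually_exists_levenshteinPoly_integral_nonpos {c' : ℝ} (hc0 : 0 ≤ c') (hc1 : c' < 1)
    (hr0 : 0 < r) (hr1 : r < 1) (hA : 0 < A) (hAT : A ≤ T)
    (hmoment : 0 < ∫ τ in (0 : ℝ)..T, τ * (τ - A) * exp (A - τ)) :
    ∀ᶠ l : ℕ in atTop, ∀ {μ : ℝ}, 2 * μ = l + 3 → ∀ {ε d}, 1 ≤ d →
      c' ≤ largestRoot (adjacent μ ε d) → ∃ w : ℕ → ℝ, (∀ i < d, 0 < w i) ∧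
        ∀ t, -1 < t → t ≤ c' + r ^ 2 * (1 - c') →
          ∫ p : ℝ × ℝ, √(1 - planeNormSq t p.1 p.2) ^ l *
            (rampWeight r A T l p.1 * rampWeight r A T l p.2 *
              (levenshteinPoly μ ε d w).eval (projectedInner t p.1 p.2)) ≤ 0 := by
  obtain ⟨β, hβ, C, K, hK, hgeom⟩ :=
    exists_eventually_projectedInner_rampWeight hc1 hr0 hr1 hA.le hAT
  have hr : 0 < 1 - r ^ 2 := by nlinarith
  obtain ⟨η, hη, hηlt⟩ := exists_pos_mul_lt (mul_pos (mul_pos two_pos hβ) hmoment)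
    (r / (1 - r ^ 2) * ∫ τ in (0 : ℝ)..T, τ * exp (A - τ))
  rw [mul_comm, ← mul_assoc] at hηlt
  have hlim : Tendsto (fun l => K * (T * rampScale r l)) atTop (𝓝 0) := by
    simpa using ((tendsto_rampScale r).const_mul T).const_mul K
  have hT : 0 < T := hA.trans_le hAT
  filter_upwards [eventually_exists_levenshteinPoly (by linarith : 0 < (1 - c') / 4) hη
      (by positivity : 0 < 2 * K * (T * ((1 - r ^ 2) / r))),
    eventually_isCapWeight_rampWeight A T hr0 hr1,
    eventually_moment_rampWeight_le hr0 hr1 hA.le hAT C hηlt, hgeom,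
    hlim.eventually_le_const (by linarith : 0 < (1 - c') / 4), eventually_ne_atTop 0]
    with l hpoly hF hmoment hgeom hKl hl μ hμ ε d hd hs₀
  obtain ⟨w, hw, hneg, hwindow⟩ := hpoly hμ hd rfl (hc0.trans hs₀)
  refine ⟨w, hw, fun t ht htc => ?_⟩
  have hwidth : 2 * K * (T * ((1 - r ^ 2) / r)) / (l + 4) = 2 * (K * (T * rampScale r l)) := by
    rw [rampScale, ← div_div]
    ring
  obtain ⟨D, hD, hle⟩ := exists_sqrt_pow_mul_eval_le hl (η := η / (l + 4))
    (S := {p : ℝ × ℝ | rampWeight r A T l p.1 ≠ 0 ∧ rampWeight r A T l p.2 ≠ 0})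
    (P := fun p => projectedInner t p.1 p.2) hneg
    (fun h => hwindow (add_le_of_le_sub_right h)) (b := 1 - 3 * ((1 - c') / 4))
    (fun p hp => by linarith [(hgeom t ht.le htc _ _ hp.1 hp.2).2.1])
    fun p hp q hq hlt => by
      have hdist := abs_le.1 ((hgeom t ht.le htc _ _ hp.1 hp.2).2.2 _ _ hq.1 hq.2)
      have hq := (hgeom t ht.le htc _ _ hq.1 hq.2).2.1
      rw [hwidth, abs_le]
      constructor <;> linarith
  have ht1 : t < 1 := by nlinarith [mul_pos (sub_pos.2 hc1) hr]
  refine integral_planeNormSq_mul_nonpos hF (ψ := fun u => β * (u - r)) (by fun_prop)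
    (by nlinarith) hD (fun u v hu hv => (hle (u, v) ⟨hu, hv⟩).trans ?_) hmoment
  exact mul_le_mul_of_nonneg_left (by linarith [(hgeom t ht.le htc u v hu hv).1]) hD

end RampSign

section Asymptotics
open Topology

/-- The height `√((cos θ - cos θ') / (1 - cos θ'))` of the spherical cap in `capMass`. -/
def capHeight (θ θ' : ℝ) : ℝ := √((cos θ - cos θ') / (1 - cos θ'))

variable {θ θ' r A T : ℝ}

lemma capHeight_le_one (θ θ' : ℝ) : capHeight θ θ' ≤ 1 :=
  sqrt_le_one.2 <| div_le_one_of_le₀ (by linarith [cos_le_one θ]) (by linarith [cos_le_one θ'])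

lemma capHeight_nonneg (θ θ' : ℝ) : 0 ≤ capHeight θ θ' := sqrt_nonneg _

lemma capHeight_pos (hθ : cos θ' < cos θ) : 0 < capHeight θ θ' :=
  sqrt_pos.2 <| div_pos (by linarith) (by linarith [cos_le_one θ])

lemma cos_eq_add_capHeight_sq_mul (hθ : cos θ' < cos θ) :
    cos θ = cos θ' + capHeight θ θ' ^ 2 * (1 - cos θ') := by
  have hθ' : 0 < 1 - cos θ' := by linarith [cos_le_one θ]
  rw [capHeight, sq_sqrt (div_nonneg (by linarith) hθ'.le), div_mul_cancel₀ _ hθ'.ne']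
  ring

lemma capHeight_lt_one (hθ : cos θ' < cos θ) (hθ1 : cos θ < 1) : capHeight θ θ' < 1 := by
  refine (capHeight_le_one θ θ').lt_of_ne fun h => ?_
  have := cos_eq_add_capHeight_sq_mul hθ
  rw [h] at this
  linarith

lemma capMass_nonneg (n : ℕ) (θ θ' : ℝ) : 0 ≤ capMass n θ θ' := by
  refine div_nonneg (intervalIntegral.integral_nonneg (capHeight_le_one θ θ') fun t ht => ?_)
    (intervalIntegral.integral_nonneg (by norm_num) fun t ht => ?_)
  · exact rpow_nonneg (by nlinarith [(sqrt_nonneg _).trans ht.1, ht.2]) _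
  · exact rpow_nonneg (by nlinarith [ht.1, ht.2]) _

lemma integral_one_sub_sq_rpow {a : ℝ} (ha : -1 ≤ a) (ha1 : a ≤ 1) (k : ℕ) :
    ∫ t in a..1, (1 - t ^ 2) ^ ((k : ℝ) / 2) = ∫ t in a..1, √(1 - t ^ 2) ^ k := by
  refine intervalIntegral.integral_congr fun t ht => ?_
  rw [Set.uIcc_of_le ha1] at ht
  rw [rpow_div_two_eq_sqrt _ (by nlinarith [ht.1, ht.2]), rpow_natCast]

lemma integral_sqrt_one_sub_sq_pow_eq {k : ℕ} (hk : k ≠ 0) :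
    ∫ t in (-1 : ℝ)..1, √(1 - t ^ 2) ^ k = ∫ t, √(1 - t ^ 2) ^ k := by
  rw [intervalIntegral.integral_of_le (by norm_num)]
  refine setIntegral_eq_integral_of_forall_compl_eq_zero fun t ht => ?_
  have : 1 - t ^ 2 ≤ 0 := by
    by_contra! h
    exact ht ⟨by nlinarith, by nlinarith⟩
  rw [sqrt_eq_zero_of_nonpos this, zero_pow hk]

lemma capMass_add_four (l : ℕ) (θ θ' : ℝ) : capMass (l + 4) θ θ' =
    (∫ t in capHeight θ θ'..1, √(1 - t ^ 2) ^ (l + 1)) / ∫ t, √(1 - t ^ 2) ^ (l + 1) := by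
  have hexp : (((l + 4 : ℕ) : ℝ) - 3) / 2 = ((l + 1 : ℕ) : ℝ) / 2 := by
    push_cast
    ring
  rw [capMass, ← capHeight, hexp, integral_one_sub_sq_rpow le_rfl (by norm_num),
    integral_sqrt_one_sub_sq_pow_eq l.succ_ne_zero,
    integral_one_sub_sq_rpow (by linarith [capHeight_nonneg θ θ']) (capHeight_le_one θ θ')]

lemma integral_mul_sqrt_one_sub_sq_pow (hr0 : 0 < r) (hr1 : r ≤ 1) (k : ℕ) :
    ∫ t in r..1, t * √(1 - t ^ 2) ^ k = √(1 - r ^ 2) ^ (k + 2) / (k + 2) := by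
  have hderiv : ∀ t ∈ Set.Ioo r 1, HasDerivAt (fun t => -√(1 - t ^ 2) ^ (k + 2) / ((k : ℝ) + 2))
      (t * √(1 - t ^ 2) ^ k) t := fun t ht => by
    have ht' : 0 < 1 - t ^ 2 := by nlinarith [ht.1, ht.2]
    have := sqrt_pos.2 ht'
    refine (((((hasDerivAt_pow 2 t).const_sub 1).sqrt ht'.ne').pow (k + 2)).neg.div_const
      ((k : ℝ) + 2)).congr_deriv ?_
    push_cast
    field_simp
    ring
  rw [intervalIntegral.integral_eq_sub_of_hasDerivAt_of_le hr1
    (Continuous.continuousOn (by fun_prop)) hderiv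
    (Continuous.intervalIntegrable (by fun_prop) _ _)]
  simp [neg_div]

lemma integral_sqrt_one_sub_sq_pow_le (hr0 : 0 < r) (hr1 : r ≤ 1) (l : ℕ) :
    ∫ t in r..1, √(1 - t ^ 2) ^ (l + 1) ≤
      rampScale r l * √(1 - r ^ 2) ^ (l + 1) * ((l + 4) / (l + 3)) := by
  calc ∫ t in r..1, √(1 - t ^ 2) ^ (l + 1)
      ≤ ∫ t in r..1, 1 / r * (t * √(1 - t ^ 2) ^ (l + 1)) := by
        refine intervalIntegral.integral_mono_on hr1
          (Continuous.intervalIntegrable (by fun_prop) _ _)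
          (Continuous.intervalIntegrable (by fun_prop) _ _) fun t ht => ?_
        rw [← mul_assoc, one_div_mul_eq_div]
        exact le_mul_of_one_le_left (by positivity) ((one_le_div hr0).2 ht.1)
    _ = _ := by
        rw [intervalIntegral.integral_const_mul, integral_mul_sqrt_one_sub_sq_pow hr0 hr1,
          pow_add, sq_sqrt (by nlinarith), rampScale]
        push_cast
        field_simp
        ring

lemma capMass_add_four_le (hθ : cos θ' < cos θ) (l : ℕ) : capMass (l + 4) θ θ' ≤
    rampScale (capHeight θ θ') l * √(1 - capHeight θ θ' ^ 2) ^ (l + 1) * ((l + 4) / (l + 3)) /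
      ∫ t, √(1 - t ^ 2) ^ (l + 1) := by
  rw [capMass_add_four]
  exact div_le_div_of_nonneg_right
    (integral_sqrt_one_sub_sq_pow_le (capHeight_pos hθ) (capHeight_le_one θ θ') l)
    (integral_sqrt_one_sub_sq_pow_pos l.succ_ne_zero).le

lemma Mcode_le {n : ℕ} {R : ℝ} (hR : 0 ≤ R)
    (h : ∀ A : Finset (EuclideanSpace ℝ (Fin n)), A.Nonempty → (∀ x ∈ A, ‖x‖ = 1) →
      (∀ x ∈ A, ∀ y ∈ A, x ≠ y → ⟪x, y⟫ ≤ cos θ) → (A.card : ℝ) ≤ R) : (Mcode n θ : ℝ) ≤ R := by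
  refine (Nat.cast_le.2 (csSup_le' ?_)).trans (Nat.floor_le hR)
  rintro _ ⟨A, rfl, hunit, hsep⟩
  rcases A.eq_empty_or_nonempty with rfl | hA
  · exact Nat.zero_le _
  · exact Nat.le_floor (h A hA hunit hsep)

lemma eval_one_levenshteinFactor_pos {μ : ℝ} (hμ : 1 / 2 < μ) (ε : Parity) (d : ℕ) :
    0 < (levenshteinFactor μ ε d).eval 1 := by
  have h := eval_one_adjacent_pos hμ ε d
  cases ε
  · exact h
  · rw [levenshteinFactor, Polynomial.eval_mul]
    exact mul_pos (by norm_num) h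

lemma eval_one_sum_adjacent_pos {μ : ℝ} (hμ : 1 / 2 < μ) (ε : Parity) {d : ℕ} (hd : 1 ≤ d)
    {w : ℕ → ℝ} (hw : ∀ i < d, 0 < w i) :
    0 < (∑ i ∈ Finset.range d, Polynomial.C (w i) * adjacent μ ε i).eval 1 := by
  rw [Polynomial.eval_finsetSum]
  refine Finset.sum_pos (fun i hi => ?_) ⟨0, Finset.mem_range.2 hd⟩
  rw [Polynomial.eval_mul, Polynomial.eval_C]
  exact mul_pos (hw i (Finset.mem_range.1 hi)) (eval_one_adjacent_pos hμ ε i)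

lemma Mcode_le_of_integral_nonpos {l : ℕ} (hl : l ≠ 0) (hθ : cos θ < 1) {F : ℝ → ℝ}
    (hF : IsCapWeight F) (hpos : 0 < ∫ u, √(1 - u ^ 2) ^ (l + 1) * F u) {ε : Parity} {d : ℕ}
    (hd : 1 ≤ d) {w : ℕ → ℝ} (hw : ∀ i < d, 0 < w i)
    (hJ : ∀ t, -1 < t → t ≤ cos θ → ∫ p : ℝ × ℝ, √(1 - planeNormSq t p.1 p.2) ^ l *
      (F p.1 * F p.2 * (levenshteinPoly (((l + 3 : ℕ) : ℝ) / 2) ε d w).eval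
        (projectedInner t p.1 p.2)) ≤ 0) :
    (Mcode (l + 4) θ : ℝ) ≤ (levenshteinFactor (((l + 3 : ℕ) : ℝ) / 2) ε d).eval 1 *
      (∫ u, √(1 - u ^ 2) ^ (l + 1) * F u ^ 2) * (∫ u, √(1 - u ^ 2) ^ (l + 1)) /
        (∫ u, √(1 - u ^ 2) ^ (l + 1) * F u) ^ 2 := by
  have hμ : 1 / 2 < ((l + 3 : ℕ) : ℝ) / 2 := by
    push_cast
    linarith [(Nat.cast_nonneg l : (0 : ℝ) ≤ l)]
  have hB := eval_one_sum_adjacent_pos hμ ε hd hw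
  have hfactor := (eval_one_levenshteinFactor_pos hμ ε d).le
  refine Mcode_le (div_nonneg (mul_nonneg (mul_nonneg hfactor (integral_nonneg fun u => ?_))
    (integral_nonneg fun u => ?_)) (sq_nonneg _)) fun A hA hunit hsep => ?_
  · positivity
  · positivity
  have : Nonempty A := hA.coe_sort
  have hcode := mul_card_mul_sq_integral_le hl (E := EuclideanSpace ℝ (Fin (l + 4))) (by simp) hF
    hB.le hθ hJ (x := fun x : A => (x : EuclideanSpace ℝ (Fin (l + 4)))) (fun x => hunit x x.2)
    (fun x y hxy => hsep x x.2 y y.2 (Subtype.coe_injective.ne hxy))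
    (fun z f v hz hvz hv => eval_one_mul_sq_sum_le_sum_of_inner_eq_zero (m := l + 3) (by simp) hz
      hvz hv ε fun i hi => (hw i hi).le)
  rw [levenshteinPoly, Polynomial.eval_mul, Fintype.card_coe] at hcode
  rw [le_div_iff₀ (by positivity)]
  refine le_of_mul_le_mul_left ?_ hB
  linarith

lemma eventually_moment_ratio_le {κ : ℝ} (hr0 : 0 < r) (hr1 : r < 1) (hA : 0 ≤ A) (hT : 0 ≤ T)
    (hmass : 0 < ∫ τ in (0 : ℝ)..T, τ * exp (A - τ))
    (hratio : ∫ τ in (0 : ℝ)..T, τ ^ 2 * exp (A - τ) <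
      κ * (∫ τ in (0 : ℝ)..T, τ * exp (A - τ)) ^ 2) :
    ∀ᶠ l : ℕ in atTop, 0 < ∫ τ in (0 : ℝ)..T, τ * nodeRatio r A l τ ^ (l + 1) ∧
      (∫ τ in (0 : ℝ)..T, τ ^ 2 * nodeRatio r A l τ ^ (l + 1)) * ((l + 4) / (l + 3)) ≤
        κ * (∫ τ in (0 : ℝ)..T, τ * nodeRatio r A l τ ^ (l + 1)) ^ 2 := by
  have hfirst := tendsto_integral_mul_nodeRatio_pow hr0 hr1 hA hT 1 continuous_id
  have hsecond := tendsto_integral_mul_nodeRatio_pow hr0 hr1 hA hT 1 (continuous_pow 2)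
  have hfraction : Tendsto (fun l : ℕ => ((l : ℝ) + 4) / (l + 3)) atTop (𝓝 1) := by
    have h := (tendsto_const_nhds (x := (1 : ℝ))).add (tendsto_const_nhds.div_atTop
      (tendsto_natCast_atTop_atTop.atTop_add tendsto_const_nhds) :
        Tendsto (fun l : ℕ => (1 : ℝ) / (l + 3)) atTop (𝓝 0))
    rw [add_zero] at h
    refine h.congr fun l => ?_
    field_simp
    ring
  have hlt := (hsecond.mul hfraction).eventually_lt ((hfirst.pow 2).const_mul κ)
    (by simpa only [mul_one, id_eq] using hratio)
  filter_upwards [hfirst.eventually_const_lt hmass, hlt] with l hl hlt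
  exact ⟨hl, hlt.le⟩

lemma eventually_Mcode_mul_capMass_le (hθ' : 0 ≤ cos θ') (hθ : cos θ' < cos θ) (hθ1 : cos θ < 1)
    {κ : ℝ} (hκ : 2 / exp 1 ^ 2 < κ) : ∀ᶠ l : ℕ in atTop,
      (Mcode (l + 4) θ : ℝ) * capMass (l + 4) θ θ' ≤ κ * MLev (l + 3) θ' := by
  have hr0 := capHeight_pos hθ
  have hr1 := capHeight_lt_one hθ hθ1
  have hcos := cos_eq_add_capHeight_sq_mul hθ
  have hcap := capMass_add_four_le hθ
  generalize capHeight θ θ' = r at *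
  obtain ⟨A, T, hA, hAT, hmass, hmoment, hratio⟩ := exists_ramp_moments hκ
  have hT := hA.le.trans hAT
  filter_upwards [eventually_exists_levenshteinPoly_integral_nonpos hθ' (hθ.trans hθ1) hr0 hr1 hA
      hAT hmoment, eventually_isCapWeight_rampWeight A T hr0 hr1,
    eventually_moment_ratio_le hr0 hr1 hA.le hT hmass hratio, eventually_ge_atTop 2]
    with l hsign hF ⟨hmass, hratio⟩ hl
  obtain ⟨ε, d, hd, hs, hM⟩ := exists_MLev_eq (m := l + 3) (by omega) hθ' (hθ.trans hθ1)
  obtain ⟨w, hw, hJ⟩ := hsign (by push_cast; ring) hd hs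
  rw [← hcos] at hJ
  have hs := rampScale_pos hr0 hr1 l
  have hω : 0 < √(1 - r ^ 2) ^ (l + 1) := pow_pos (sqrt_pos.2 (by nlinarith)) _
  have hJ₀ := integral_sqrt_one_sub_sq_pow_pos l.succ_ne_zero
  have hweight := integral_rampWeight_mul (A := A) hr0 hr1 hT l (l + 1)
  simp only [mul_comm (rampWeight _ _ _ _ _)] at hweight
  have hcode := Mcode_le_of_integral_nonpos (by omega) hθ1 hF (hweight ▸ by positivity) hd hw hJ
  rw [hweight, integral_mul_rampWeight_sq hr0 hr1 hT, ← hM] at hcode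
  have hMLev : 0 ≤ MLev (l + 3) θ' := by
    rw [hM]
    refine (eval_one_levenshteinFactor_pos ?_ ε d).le
    push_cast
    linarith [(Nat.cast_nonneg l : (0 : ℝ) ≤ l)]
  set a := ∫ τ in (0 : ℝ)..T, τ * nodeRatio r A l τ ^ (l + 1)
  set b := ∫ τ in (0 : ℝ)..T, τ ^ 2 * nodeRatio r A l τ ^ (l + 1)
  calc (Mcode (l + 4) θ : ℝ) * capMass (l + 4) θ θ' ≤ _ :=
        mul_le_mul hcode (hcap l) (capMass_nonneg _ _ _) ((Nat.cast_nonneg _).trans hcode)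
    _ = b * ((l + 4) / (l + 3)) / a ^ 2 * MLev (l + 3) θ' := by field_simp
    _ ≤ κ * MLev (l + 3) θ' :=
        mul_le_mul_of_nonneg_right ((div_le_iff₀ (by positivity)).2 hratio) hMLev

end Asymptotics

end SphericalCode

theorem spherical_code_bound_improvement_general
    (θ θ' : ℝ) (hθ0 : 0 < θ) (hθθ' : θ < θ') (hθ' : θ' ≤ π / 2) :
    limsup (fun n : ℕ => (Mcode n θ : ℝ) * capMass n θ θ' / MLev (n - 1) θ') atTop ≤
      2 / Real.exp 1 ^ 2 := by
  have hMLev (n : ℕ) : 0 ≤ MLev n θ' := by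
    unfold MLev
    split_ifs <;> positivity
  have hcos' : 0 ≤ cos θ' := cos_nonneg_of_mem_Icc ⟨by linarith [pi_pos], hθ'⟩
  have hcos : cos θ' < cos θ :=
    cos_lt_cos_of_nonneg_of_le_pi hθ0.le (by linarith [pi_pos]) hθθ'
  have hcos1 : cos θ < 1 := by
    simpa only [cos_zero] using
      cos_lt_cos_of_nonneg_of_le_pi le_rfl (by linarith [pi_pos]) hθ0
  refine le_of_forall_gt_imp_ge_of_dense fun κ hκ => ?_
  have hbound := SphericalCode.eventually_Mcode_mul_capMass_le hcos' hcos hcos1 hκ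
  refine limsup_le_of_le (IsCoboundedUnder.of_frequently_ge (a := 0) (.of_forall fun n =>
    div_nonneg (mul_nonneg (Nat.cast_nonneg _) (SphericalCode.capMass_nonneg n θ θ'))
      (hMLev _))) ?_
  rw [← map_add_atTop_eq_nat 4, eventually_map]
  filter_upwards [hbound] with l hl
  exact div_le_of_le_mul₀ (hMLev _) ((div_nonneg zero_le_two (sq_nonneg _)).trans hκ.le) hl

/-- For fixed `0 < θ < θ' ≤ π/2`,
`M(n,θ) ≤ (1+o(1))·e⁻¹·M_Lev(n-1,θ')/μ_n(θ,θ')`; equivalently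
`limsup_{n→∞} M(n,θ)·μ_n(θ,θ')/M_Lev(n-1,θ') ≤ 1/e`. -/
theorem spherical_code_bound_improvement
    (θ θ' : ℝ) (hθ0 : 0 < θ) (hθθ' : θ < θ') (hθ' : θ' ≤ π / 2) :
    limsup (fun n : ℕ => (Mcode n θ : ℝ) * capMass n θ θ' / MLev (n - 1) θ') atTop ≤
      1 / Real.exp 1 := by
  refine (spherical_code_bound_improvement_general θ θ' hθ0 hθθ' hθ').trans ?_
  rw [div_le_div_iff₀ (by positivity) (by positivity)]
  nlinarith [add_one_le_exp (1 : ℝ), exp_pos 1]
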